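/- Let 0 < θ_1 < π and let f : ℝ → ℝ be the even, 2π-periodic function equal to +1 on [0, θ_1) and −1 on (θ_1, π], with Fourier coefficients f_n = (1/2π)∫_0^{2π} f(θ)e^{−inθ}dθ. Then as N → ∞, det (f_{j−k})_{j,k=0}^{N−1} = (−1)^N · N^{−1/2} · 2^{1/6} e^{6ζ′(−1)} · (2 sin θ_1)^{−1/2} · 2cos(N θ_1) + o(N^{−1/2}). (This is the σ^z-string expectation of the XX model with Fermi momentum θ_1.) -/

import Mathlib

noncomputable section

/-- The `n`-th Fourier coefficient `f_n = (1/2π) ∫_0^{2π} f(θ) e^{−inθ} dθ`. -/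
def fourierCoef (f : ℝ → ℝ) (n : ℤ) : ℂ :=
  (1 / (2 * Real.pi) : ℂ) *
    ∫ t in (0 : ℝ)..(2 * Real.pi), (f t : ℂ) * Complex.exp (-Complex.I * (n : ℂ) * (t : ℂ))


namespace XXString
open Matrix Complex ComplexConjugate

noncomputable section

/-- Explicit Fourier coefficients of the symbol. -/
def cf (θ : ℝ) (m : ℤ) : ℝ :=
  if m = 0 then 2 * θ / Real.pi - 1 else 2 / (Real.pi * m) * Real.sin (m * θ)

/-- Shifted Toeplitz matrix. -/
def S (θ : ℝ) (N : ℕ) : Matrix (Fin N) (Fin N) ℝ :=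
  Matrix.of fun j k => cf θ ((j : ℤ) - (k : ℤ) - 1)

def E (θ : ℝ) (N : ℕ) : ℝ := (S θ N).det

def B (θ : ℝ) (N : ℕ) : Matrix (Fin N) (Fin N) ℝ := (S θ N)⁻¹

def z (θ : ℝ) : ℂ := Complex.exp (θ * I)

lemma z_re (θ : ℝ) : (z θ).re = Real.cos θ := by simp [z, Complex.exp_ofReal_mul_I_re]
lemma z_im (θ : ℝ) : (z θ).im = Real.sin θ := by simp [z, Complex.exp_ofReal_mul_I_im]

lemma z_mul_conj (θ : ℝ) : z θ * conj (z θ) = 1 := by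
  rw [Complex.mul_conj, Complex.normSq_apply, z_re, z_im]
  norm_cast
  have := Real.sin_sq_add_cos_sq θ
  nlinarith

lemma z_ne (θ : ℝ) : z θ ≠ 0 := Complex.exp_ne_zero _

lemma norm_z (θ : ℝ) : ‖z θ‖ = 1 := by simp [z, Complex.norm_exp_ofReal_mul_I]

lemma conj_z (θ : ℝ) : conj (z θ) = (z θ)⁻¹ := by
  exact eq_inv_of_mul_eq_one_right (z_mul_conj θ)

lemma z_zpow (θ : ℝ) (m : ℤ) : (z θ) ^ m = Complex.exp (((m * θ : ℝ) : ℂ) * I) := by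
  rw [z, ← Complex.exp_int_mul]; congr 1; push_cast; ring

lemma z_zpow_re (θ : ℝ) (m : ℤ) : ((z θ) ^ m).re = Real.cos (m * θ) := by
  rw [z_zpow, Complex.exp_ofReal_mul_I_re]
lemma z_zpow_im (θ : ℝ) (m : ℤ) : ((z θ) ^ m).im = Real.sin (m * θ) := by
  rw [z_zpow, Complex.exp_ofReal_mul_I_im]

lemma z_split (θ : ℝ) (a b : ℕ) :
    conj (z θ) * (z θ) ^ a * conj ((z θ) ^ b) = (z θ) ^ ((a : ℤ) - b - 1) := by
  rw [map_pow, conj_z, zpow_sub₀ (z_ne θ), zpow_sub₀ (z_ne θ)]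
  simp only [zpow_natCast, zpow_one, inv_pow]
  field_simp

lemma hasDerivAt_z (θ : ℝ) : HasDerivAt z (I * z θ) θ := by
  have h := ((Complex.ofRealCLM.hasDerivAt (x := θ)).mul_const I).cexp
  have e : z = fun x : ℝ => Complex.exp (Complex.ofRealCLM x * I) := by
    funext x; simp [z]
  rw [e]
  convert h using 1
  simp; ring

lemma mul_cf (θ : ℝ) (m : ℤ) : (m : ℝ) * cf θ m = 2 / Real.pi * Real.sin (m * θ) := by
  unfold cf
  split_ifs with h
  · simp [h]
  · have : (m : ℝ) ≠ 0 := by exact_mod_cast h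
    have := Real.pi_ne_zero
    field_simp

lemma hasDerivAt_cf (m : ℤ) (θ : ℝ) :
    HasDerivAt (fun t => cf t m) (2 / Real.pi * Real.cos (m * θ)) θ := by
  unfold cf
  split_ifs with h
  · simp only [h, Int.cast_zero, zero_mul, Real.cos_zero, mul_one]
    have := (((hasDerivAt_id θ).const_mul 2).div_const Real.pi).sub_const 1
    simpa using this
  · have hm : (m : ℝ) ≠ 0 := by exact_mod_cast h
    have := (((hasDerivAt_id θ).const_mul (m : ℝ)).sin).const_mul (2 / (Real.pi * m))
    refine this.congr_deriv ?_
    have := Real.pi_ne_zero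
    simp only [id, mul_one]
    field_simp

lemma S_mul_B {θ : ℝ} {N : ℕ} (h : E θ N ≠ 0) : S θ N * B θ N = 1 :=
  Matrix.mul_nonsing_inv _ (isUnit_iff_ne_zero.mpr h)

lemma B_mul_S {θ : ℝ} {N : ℕ} (h : E θ N ≠ 0) : B θ N * S θ N = 1 :=
  Matrix.nonsing_inv_mul _ (isUnit_iff_ne_zero.mpr h)

def X (θ : ℝ) (N : ℕ) (j : Fin N) : ℂ := ∑ k : Fin N, (B θ N j k : ℂ) * (z θ) ^ (k : ℕ)
def Y (θ : ℝ) (N : ℕ) (k : Fin N) : ℂ := ∑ j : Fin N, (z θ) ^ (j : ℕ) * (B θ N j k : ℂ)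

lemma sandwich (θ : ℝ) (N : ℕ) (j k : Fin N) :
    conj (z θ) * X θ N j * conj (Y θ N k) =
      ∑ a : Fin N, ∑ b : Fin N, (B θ N j a : ℂ) * (z θ) ^ ((a : ℤ) - (b : ℤ) - 1) * (B θ N b k : ℂ) := by
  simp only [X, Y, map_sum, map_mul, Complex.conj_ofReal]
  rw [mul_assoc, Finset.sum_mul_sum, Finset.mul_sum]
  refine Finset.sum_congr rfl fun a _ => ?_
  rw [Finset.mul_sum]
  refine Finset.sum_congr rfl fun b _ => ?_
  rw [← z_split]; ring

lemma sandwich_re (θ : ℝ) (N : ℕ) (j k : Fin N) :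
    (conj (z θ) * X θ N j * conj (Y θ N k)).re =
      ∑ a : Fin N, ∑ b : Fin N, (B θ N j a) * Real.cos (((a : ℤ) - (b : ℤ) - 1 : ℤ) * θ) * (B θ N b k) := by
  rw [sandwich, Complex.re_sum]
  refine Finset.sum_congr rfl fun a _ => ?_
  rw [Complex.re_sum]
  refine Finset.sum_congr rfl fun b _ => ?_
  rw [Complex.re_mul_ofReal, Complex.re_ofReal_mul, z_zpow_re]

lemma sandwich_im (θ : ℝ) (N : ℕ) (j k : Fin N) :
    (conj (z θ) * X θ N j * conj (Y θ N k)).im =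
      ∑ a : Fin N, ∑ b : Fin N, (B θ N j a) * Real.sin (((a : ℤ) - (b : ℤ) - 1 : ℤ) * θ) * (B θ N b k) := by
  rw [sandwich, Complex.im_sum]
  refine Finset.sum_congr rfl fun a _ => ?_
  rw [Complex.im_sum]
  refine Finset.sum_congr rfl fun b _ => ?_
  rw [Complex.im_mul_ofReal, Complex.im_ofReal_mul, z_zpow_im]

lemma G1 {θ : ℝ} {N : ℕ} (h : E θ N ≠ 0) (j k : Fin N) :
    ((j : ℝ) - (k : ℝ) + 1) * B θ N j k = -(2 / Real.pi) * (conj (z θ) * X θ N j * conj (Y θ N k)).im := by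
  rw [sandwich_im]
  have key : Matrix.diagonal (fun i : Fin N => (i : ℝ)) * B θ N - B θ N * Matrix.diagonal (fun i : Fin N => (i : ℝ))
      = B θ N * (S θ N * Matrix.diagonal (fun i : Fin N => (i : ℝ)) - Matrix.diagonal (fun i : Fin N => (i : ℝ)) * S θ N) * B θ N := by
    rw [Matrix.mul_sub, Matrix.sub_mul, ← Matrix.mul_assoc, B_mul_S h, Matrix.one_mul, Matrix.mul_assoc,
      Matrix.mul_assoc (Matrix.diagonal _) (S θ N), S_mul_B h, Matrix.mul_one]
  have key2 : (S θ N * Matrix.diagonal (fun i : Fin N => (i : ℝ)) - Matrix.diagonal (fun i : Fin N => (i : ℝ)) * S θ N)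
      = - S θ N - (2 / Real.pi) • Matrix.of (fun a b : Fin N => Real.sin (((a : ℤ) - (b : ℤ) - 1 : ℤ) * θ)) := by
    ext a b
    have h1 := mul_cf θ ((a : ℤ) - (b : ℤ) - 1)
    simp only [Matrix.sub_apply, Matrix.mul_diagonal, Matrix.diagonal_mul, Matrix.neg_apply, Matrix.smul_apply,
      Matrix.of_apply, smul_eq_mul, S]
    rw [← h1]; push_cast; ring
  rw [key2, Matrix.mul_sub, Matrix.sub_mul, Matrix.mul_neg, B_mul_S h] at key
  have := congrFun (congrFun key j) k
  simp only [Matrix.sub_apply, Matrix.mul_diagonal, Matrix.diagonal_mul, Matrix.neg_mul, Matrix.one_mul,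
    Matrix.neg_apply, Matrix.mul_smul, Matrix.smul_mul, Matrix.smul_apply, smul_eq_mul] at this
  have h3 : (B θ N * Matrix.of (fun a b : Fin N => Real.sin (((a : ℤ) - (b : ℤ) - 1 : ℤ) * θ)) * B θ N) j k
      = ∑ a : Fin N, ∑ b : Fin N, (B θ N j a) * Real.sin (((a : ℤ) - (b : ℤ) - 1 : ℤ) * θ) * (B θ N b k) := by
    simp only [Matrix.mul_apply, Matrix.of_apply, Finset.sum_mul]
    rw [Finset.sum_comm]
  rw [h3] at this
  linarith

section deriv
attribute [local instance] Matrix.linftyOpNormedRing Matrix.linftyOpNormedAlgebra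

lemma hasDerivAt_inv {N : ℕ} (M : ℝ → Matrix (Fin N) (Fin N) ℝ) (M' : Matrix (Fin N) (Fin N) ℝ) (θ : ℝ)
    (hM : ∀ j k, HasDerivAt (fun t => M t j k) (M' j k) θ) (h : (M θ).det ≠ 0) (j k : Fin N) :
    HasDerivAt (fun t => (M t)⁻¹ j k) (-((M θ)⁻¹ * M' * (M θ)⁻¹) j k) θ := by
  have hM1 : HasDerivAt M M' θ := by
    exact (hasDerivAt_pi (E' := fun _ : Fin N => Fin N → ℝ)).mpr fun a => hasDerivAt_pi.mpr fun b => hM a b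
  obtain ⟨u, hu⟩ := (Matrix.isUnit_iff_isUnit_det (M θ)).mpr (isUnit_iff_ne_zero.mpr h)
  have h1 := hasFDerivAt_ringInverse (𝕜 := ℝ) u
  rw [hu] at h1
  have h2 := h1.comp_hasDerivAt θ hM1
  have h3 : HasDerivAt (fun t => (M t)⁻¹) (-((M θ)⁻¹ * M' * (M θ)⁻¹)) θ := by
    have e : (fun t => (M t)⁻¹) = (Ring.inverse ∘ M) := by
      funext t; simp [Matrix.nonsing_inv_eq_ringInverse]
    rw [e]
    refine h2.congr_deriv ?_
    have : ((u⁻¹ : (Matrix (Fin N) (Fin N) ℝ)ˣ) : Matrix (Fin N) (Fin N) ℝ) = (M θ)⁻¹ := by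
      rw [← hu, Matrix.coe_units_inv]
    simp [this]
  have h4 := (hasDerivAt_pi.mp ((hasDerivAt_pi.mp h3) j)) k
  exact h4
end deriv

lemma hasDerivAt_det {N : ℕ} (M : ℝ → Matrix (Fin N) (Fin N) ℝ) (M' : Matrix (Fin N) (Fin N) ℝ) (θ : ℝ)
    (hM : ∀ j k, HasDerivAt (fun t => M t j k) (M' j k) θ) :
    HasDerivAt (fun t => (M t).det) ((Matrix.adjugate (M θ) * M').trace) θ := by
  have h1 : HasDerivAt (fun t => (M t).det) (∑ σ : Equiv.Perm (Fin N), ((Equiv.Perm.sign σ : ℤ) : ℝ) *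
      ∑ i, (∏ l ∈ Finset.univ.erase i, M θ (σ l) l) * M' (σ i) i) θ := by
    simp only [Matrix.det_apply']
    refine HasDerivAt.fun_sum fun σ _ => ?_
    refine HasDerivAt.const_mul _ ?_
    have := HasDerivAt.fun_finsetProd (u := (Finset.univ : Finset (Fin N))) (f := fun i t => M t (σ i) i)
      (f' := fun i => M' (σ i) i) (x := θ) (fun i _ => hM (σ i) i)
    simpa [smul_eq_mul] using this
  refine h1.congr_deriv ?_
  have h2 : ∀ i, (Matrix.adjugate (M θ) * M') i i = ∑ σ : Equiv.Perm (Fin N), ((Equiv.Perm.sign σ : ℤ) : ℝ) *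
      ((∏ l ∈ Finset.univ.erase i, M θ (σ l) l) * M' (σ i) i) := by
    intro i
    have : (Matrix.adjugate (M θ) * M') i i = (Matrix.adjugate (M θ) *ᵥ (fun a => M' a i)) i := by
      simp [Matrix.mul_apply, Matrix.mulVec, dotProduct]
    rw [this, ← Matrix.cramer_eq_adjugate_mulVec, Matrix.cramer_apply, Matrix.det_apply']
    refine Finset.sum_congr rfl fun σ _ => ?_
    congr 1
    rw [← Finset.prod_erase_mul _ _ (Finset.mem_univ i)]
    congr 1
    · refine Finset.prod_congr rfl fun l hl => ?_
      rw [Matrix.updateCol_ne (Finset.ne_of_mem_erase hl)]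
    · simp
  simp only [Matrix.trace, Matrix.diag, h2, Finset.mul_sum]
  rw [Finset.sum_comm]

lemma G2 {θ : ℝ} {N : ℕ} (h : E θ N ≠ 0) (j k : Fin N) :
    HasDerivAt (fun t => B t N j k) (-(2 / Real.pi) * (conj (z θ) * X θ N j * conj (Y θ N k)).re) θ := by
  rw [sandwich_re]
  have := hasDerivAt_inv (fun t => S t N)
    (Matrix.of fun a b : Fin N => 2 / Real.pi * Real.cos (((a : ℤ) - (b : ℤ) - 1 : ℤ) * θ)) θ
    (fun a b => by simpa [S] using hasDerivAt_cf ((a : ℤ) - (b : ℤ) - 1) θ) h j k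
  refine this.congr_deriv ?_
  change -((B θ N * (Matrix.of fun a b : Fin N => 2 / Real.pi * Real.cos (((a : ℤ) - (b : ℤ) - 1 : ℤ) * θ)) * B θ N) j k) = _
  simp only [Matrix.mul_apply, Matrix.of_apply, Finset.sum_mul]
  rw [Finset.sum_comm, neg_mul, Finset.mul_sum]
  congr 1
  refine Finset.sum_congr rfl fun a _ => ?_
  rw [Finset.mul_sum]
  refine Finset.sum_congr rfl fun b _ => ?_
  ring

def al (θ : ℝ) (N : ℕ) : ℂ := ∑ j : Fin N, (z θ) ^ (j : ℕ) * conj (X θ N j)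
def gam (θ : ℝ) (N : ℕ) : ℂ := ∑ j : Fin N, (z θ) ^ (j : ℕ) * X θ N j

/-- `A`, the logarithmic derivative of `E` up to `2/π`. -/
def A (θ : ℝ) (N : ℕ) : ℝ := (z θ * al θ N).re

lemma continuous_E (N : ℕ) : Continuous (fun t => E t N) := by
  have : ∀ θ, ContinuousAt (fun t => E t N) θ := fun θ =>
    (hasDerivAt_det (fun t => S t N)
    (Matrix.of fun a b : Fin N => 2 / Real.pi * Real.cos (((a : ℤ) - (b : ℤ) - 1 : ℤ) * θ)) θ
    (fun a b => by simpa [S] using hasDerivAt_cf ((a : ℤ) - (b : ℤ) - 1) θ)).continuousAt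
  exact continuous_iff_continuousAt.mpr this

lemma hasDerivAt_E {θ : ℝ} {N : ℕ} (h : E θ N ≠ 0) :
    HasDerivAt (fun t => E t N) (2 / Real.pi * A θ N * E θ N) θ := by
  have := hasDerivAt_det (fun t => S t N)
    (Matrix.of fun a b : Fin N => 2 / Real.pi * Real.cos (((a : ℤ) - (b : ℤ) - 1 : ℤ) * θ)) θ
    (fun a b => by simpa [S] using hasDerivAt_cf ((a : ℤ) - (b : ℤ) - 1) θ)
  refine this.congr_deriv ?_
  have hadj : (S θ N).adjugate = (E θ N) • B θ N := by
    rw [B, Matrix.inv_def, smul_smul, Ring.inverse_eq_inv', E, mul_inv_cancel₀ (show (S θ N).det ≠ 0 from h), one_smul]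
  rw [hadj, Matrix.smul_mul, Matrix.trace_smul, smul_eq_mul, mul_comm]
  congr 1
  have h5 : (z θ * al θ N) = ∑ i : Fin N, ∑ k : Fin N, (B θ N i k : ℂ) * conj ((z θ) ^ ((k : ℤ) - i - 1)) := by
    simp only [al, X, map_sum, Finset.mul_sum, map_mul, Complex.conj_ofReal]
    refine Finset.sum_congr rfl fun i _ => Finset.sum_congr rfl fun k _ => ?_
    rw [← z_split]; simp; ring
  rw [A, h5]
  simp only [Matrix.trace, Matrix.diag, Matrix.mul_apply, Complex.re_sum, Finset.mul_sum]
  refine Finset.sum_congr rfl fun i _ => Finset.sum_congr rfl fun k _ => ?_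
  rw [Complex.re_ofReal_mul, Complex.conj_re, z_zpow_re, Matrix.of_apply]
  ring

end
end XXString

namespace XXString
open Matrix Complex ComplexConjugate

noncomputable section

def p (θ : ℝ) (n : ℕ) : ℂ := Y θ (n + 1) 0
def q (θ : ℝ) (n : ℕ) : ℂ := X θ (n + 1) 0
def x0 (θ : ℝ) (n : ℕ) : ℝ := B θ (n + 1) 0 0
def yy (θ : ℝ) (n : ℕ) : ℝ := B θ (n + 1) (Fin.last n) 0
def yt (θ : ℝ) (n : ℕ) : ℝ := B θ (n + 1) 0 (Fin.last n)

lemma B_rev (θ : ℝ) (N : ℕ) (j k : Fin N) : B θ N j.rev k.rev = B θ N k j := by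
  have h1 : (S θ N).submatrix Fin.revPerm Fin.revPerm = (S θ N)ᵀ := by
    ext a b
    simp only [Matrix.submatrix_apply, Matrix.transpose_apply, S, Matrix.of_apply, Fin.revPerm_apply]
    congr 1
    have ha := a.isLt
    have hb := b.isLt
    rw [Fin.val_rev, Fin.val_rev]
    omega
  have h2 := Matrix.inv_submatrix_equiv (S θ N) Fin.revPerm Fin.revPerm
  rw [h1, ← Matrix.transpose_nonsing_inv] at h2
  have := congrFun (congrFun h2 j) k
  simpa [B] using this.symm

lemma B_last (θ : ℝ) (n : ℕ) (k : Fin (n + 1)) : B θ (n + 1) (Fin.last n) k = B θ (n + 1) k.rev 0 := by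
  have := B_rev θ (n + 1) 0 k.rev
  rw [← this]; simp

lemma B_last' (θ : ℝ) (n : ℕ) (k : Fin (n + 1)) : B θ (n + 1) k (Fin.last n) = B θ (n + 1) 0 k.rev := by
  have := B_rev θ (n + 1) k.rev 0
  rw [← this]; simp

lemma B_last_last (θ : ℝ) (n : ℕ) : B θ (n + 1) (Fin.last n) (Fin.last n) = x0 θ n := by
  rw [B_last]; simp [x0]

lemma z_rev (θ : ℝ) (n : ℕ) (k : Fin (n + 1)) :
    (z θ) ^ (k.rev : ℕ) = (z θ) ^ n * conj ((z θ) ^ (k : ℕ)) := by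
  have hk := k.isLt
  have h1 : (z θ) ^ n = (z θ) ^ (k.rev : ℕ) * (z θ) ^ (k : ℕ) := by
    rw [← pow_add]; congr 1; rw [Fin.val_rev]; omega
  rw [h1, mul_assoc, map_pow, ← mul_pow, z_mul_conj, one_pow, mul_one]

lemma X_last (θ : ℝ) (n : ℕ) : X θ (n + 1) (Fin.last n) = (z θ) ^ n * conj (p θ n) := by
  simp only [X, p, Y, map_sum, map_mul, Complex.conj_ofReal, Finset.mul_sum]
  rw [← Equiv.sum_comp Fin.revPerm]
  refine Finset.sum_congr rfl fun k _ => ?_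
  rw [Fin.revPerm_apply, z_rev, B_last, Fin.rev_rev]; ring

lemma Y_last (θ : ℝ) (n : ℕ) : Y θ (n + 1) (Fin.last n) = (z θ) ^ n * conj (q θ n) := by
  simp only [X, q, Y, map_sum, map_mul, Complex.conj_ofReal, Finset.mul_sum]
  rw [← Equiv.sum_comp Fin.revPerm]
  refine Finset.sum_congr rfl fun k _ => ?_
  rw [Fin.revPerm_apply, z_rev, B_last', Fin.rev_rev]; ring

lemma gam_eq (θ : ℝ) (N : ℕ) : gam θ N = ∑ k : Fin N, (z θ) ^ (k : ℕ) * Y θ N k := by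
  simp only [gam, X, Y, Finset.mul_sum]
  rw [Finset.sum_comm]
  refine Finset.sum_congr rfl fun k _ => Finset.sum_congr rfl fun j _ => ?_
  ring

lemma gam_conj (θ : ℝ) (n : ℕ) : gam θ (n + 1) = (z θ) ^ (2 * n) * conj (gam θ (n + 1)) := by
  have h : gam θ (n + 1) = ∑ j : Fin (n + 1), ∑ k : Fin (n + 1),
      (z θ) ^ (j.rev : ℕ) * ((B θ (n + 1) j.rev k.rev : ℂ) * (z θ) ^ (k.rev : ℕ)) := by
    simp only [gam, X, Finset.mul_sum]
    rw [← Equiv.sum_comp Fin.revPerm]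
    refine Finset.sum_congr rfl fun j _ => ?_
    rw [← Equiv.sum_comp Fin.revPerm]
    rfl
  conv_lhs => rw [h]
  conv_rhs => rw [gam_eq]
  simp only [Y, map_sum, map_mul, Complex.conj_ofReal, Finset.mul_sum]
  refine Finset.sum_congr rfl fun k _ => Finset.sum_congr rfl fun j _ => ?_
  rw [z_rev, z_rev, B_rev]
  ring

def g (θ : ℝ) (n : ℕ) : ℝ := (conj (z θ) ^ n * gam θ (n + 1)).re

lemma zzpow (θ : ℝ) (n : ℕ) : (z θ) ^ n * conj (z θ) ^ n = 1 := by
  rw [← mul_pow, z_mul_conj, one_pow]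

lemma gam_g (θ : ℝ) (n : ℕ) : gam θ (n + 1) = (z θ) ^ n * (g θ n : ℂ) := by
  have h1 : conj (conj (z θ) ^ n * gam θ (n + 1)) = conj (z θ) ^ n * gam θ (n + 1) := by
    conv_rhs => rw [gam_conj]
    rw [map_mul, map_pow, Complex.conj_conj]
    linear_combination (-(z θ) ^ n * conj (gam θ (n + 1))) * zzpow θ n
  have h2 := Complex.conj_eq_iff_re.mp h1
  rw [g, h2]
  linear_combination -gam θ (n + 1) * zzpow θ n

lemma schur_last {θ : ℝ} {n : ℕ} (h : E θ (n + 1) ≠ 0) (hx : x0 θ n ≠ 0) (j k : Fin n) :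
    B θ n j k = B θ (n + 1) j.castSucc k.castSucc -
      B θ (n + 1) j.castSucc (Fin.last n) * B θ (n + 1) (Fin.last n) k.castSucc / x0 θ n := by
  have key : B θ n = Matrix.of fun j k : Fin n => B θ (n + 1) j.castSucc k.castSucc -
      B θ (n + 1) j.castSucc (Fin.last n) * B θ (n + 1) (Fin.last n) k.castSucc / x0 θ n := by
    refine Matrix.inv_eq_right_inv ?_
    ext i l
    have hS : ∀ k : Fin n, S θ n i k = S θ (n + 1) i.castSucc k.castSucc := fun k => by simp [S]
    have e1 := congrFun (congrFun (S_mul_B h) i.castSucc) l.castSucc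
    have e2 := congrFun (congrFun (S_mul_B h) i.castSucc) (Fin.last n)
    rw [Matrix.mul_apply, Fin.sum_univ_castSucc] at e1 e2
    rw [B_last_last] at e2
    have hne : i.castSucc ≠ Fin.last n := (Fin.castSucc_lt_last i).ne
    rw [Matrix.one_apply_ne hne] at e2
    have e3 : (1 : Matrix (Fin (n + 1)) (Fin (n + 1)) ℝ) i.castSucc l.castSucc = (1 : Matrix (Fin n) (Fin n) ℝ) i l := by
      simp [Matrix.one_apply]
    rw [e3] at e1
    rw [Matrix.mul_apply, ← e1]
    simp only [Matrix.of_apply, hS, mul_sub, Finset.sum_sub_distrib]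
    have e4 : ∑ k : Fin n, S θ (n + 1) i.castSucc k.castSucc *
        (B θ (n + 1) k.castSucc (Fin.last n) * B θ (n + 1) (Fin.last n) l.castSucc / x0 θ n)
        = (∑ k : Fin n, S θ (n + 1) i.castSucc k.castSucc * B θ (n + 1) k.castSucc (Fin.last n)) *
          (B θ (n + 1) (Fin.last n) l.castSucc / x0 θ n) := by
      rw [Finset.sum_mul]; refine Finset.sum_congr rfl fun k _ => ?_; ring
    rw [e4, eq_neg_of_add_eq_zero_left e2]
    field_simp
    ring
  rw [key]; rfl

lemma schur_zero {θ : ℝ} {n : ℕ} (h : E θ (n + 1) ≠ 0) (hx : x0 θ n ≠ 0) (j k : Fin n) :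
    B θ n j k = B θ (n + 1) j.succ k.succ -
      B θ (n + 1) j.succ 0 * B θ (n + 1) 0 k.succ / x0 θ n := by
  have key : B θ n = Matrix.of fun j k : Fin n => B θ (n + 1) j.succ k.succ -
      B θ (n + 1) j.succ 0 * B θ (n + 1) 0 k.succ / x0 θ n := by
    refine Matrix.inv_eq_right_inv ?_
    ext i l
    have hS : ∀ k : Fin n, S θ n i k = S θ (n + 1) i.succ k.succ := fun k => by
      simp only [S, Matrix.of_apply, Fin.val_succ]; congr 1; push_cast; ring
    have e1 := congrFun (congrFun (S_mul_B h) i.succ) l.succ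
    have e2 := congrFun (congrFun (S_mul_B h) i.succ) 0
    rw [Matrix.mul_apply, Fin.sum_univ_succ] at e1 e2
    have hne : i.succ ≠ 0 := Fin.succ_ne_zero i
    rw [Matrix.one_apply_ne hne] at e2
    have e3 : (1 : Matrix (Fin (n + 1)) (Fin (n + 1)) ℝ) i.succ l.succ = (1 : Matrix (Fin n) (Fin n) ℝ) i l := by
      simp [Matrix.one_apply]
    rw [e3] at e1
    rw [Matrix.mul_apply, ← e1]
    simp only [Matrix.of_apply, hS, mul_sub, Finset.sum_sub_distrib]
    have e4 : ∑ k : Fin n, S θ (n + 1) i.succ k.succ *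
        (B θ (n + 1) k.succ 0 * B θ (n + 1) 0 l.succ / x0 θ n)
        = (∑ k : Fin n, S θ (n + 1) i.succ k.succ * B θ (n + 1) k.succ 0) *
          (B θ (n + 1) 0 l.succ / x0 θ n) := by
      rw [Finset.sum_mul]; refine Finset.sum_congr rfl fun k _ => ?_; ring
    rw [e4, eq_neg_of_add_eq_zero_right e2]
    change _ - -(_ * x0 θ n) * _ = _
    field_simp
    ring
  rw [key]; rfl

lemma sum_last {θ : ℝ} {n : ℕ} (h : E θ (n + 1) ≠ 0) (hx : x0 θ n ≠ 0) (F : ℕ → ℕ → ℂ) :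
    ∑ j : Fin n, ∑ k : Fin n, F j k * (B θ n j k : ℂ) = ∑ j : Fin (n + 1), ∑ k : Fin (n + 1),
      F j k * ((B θ (n + 1) j k : ℂ) - (B θ (n + 1) j (Fin.last n) : ℂ) * (B θ (n + 1) (Fin.last n) k : ℂ) / (x0 θ n : ℂ)) := by
  have hx' : (x0 θ n : ℂ) ≠ 0 := by exact_mod_cast hx
  rw [Fin.sum_univ_castSucc (n := n)]
  have hz : ∑ k : Fin (n + 1), F (Fin.last n) k * ((B θ (n + 1) (Fin.last n) k : ℂ) - (B θ (n + 1) (Fin.last n) (Fin.last n) : ℂ) * (B θ (n + 1) (Fin.last n) k : ℂ) / (x0 θ n : ℂ)) = 0 := by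
    refine Finset.sum_eq_zero fun k _ => ?_
    rw [B_last_last]; field_simp; ring
  rw [hz, add_zero]
  refine Finset.sum_congr rfl fun j _ => ?_
  rw [Fin.sum_univ_castSucc (n := n)]
  rw [B_last_last]
  have hz2 : (B θ (n + 1) j.castSucc (Fin.last n) : ℂ) - (B θ (n + 1) j.castSucc (Fin.last n) : ℂ) * (x0 θ n : ℂ) / (x0 θ n : ℂ) = 0 := by
    field_simp; ring
  rw [hz2, mul_zero, add_zero]
  refine Finset.sum_congr rfl fun k _ => ?_
  rw [schur_last h hx]; push_cast; simp

lemma sum_zero {θ : ℝ} {n : ℕ} (h : E θ (n + 1) ≠ 0) (hx : x0 θ n ≠ 0) (F : ℕ → ℕ → ℂ) :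
    ∑ j : Fin n, ∑ k : Fin n, F (j + 1) (k + 1) * (B θ n j k : ℂ) = ∑ j : Fin (n + 1), ∑ k : Fin (n + 1),
      F j k * ((B θ (n + 1) j k : ℂ) - (B θ (n + 1) j 0 : ℂ) * (B θ (n + 1) 0 k : ℂ) / (x0 θ n : ℂ)) := by
  have hx' : (x0 θ n : ℂ) ≠ 0 := by exact_mod_cast hx
  rw [Fin.sum_univ_succ (n := n)]
  have hz : ∑ k : Fin (n + 1), F (0 : Fin (n + 1)) k * ((B θ (n + 1) 0 k : ℂ) - (B θ (n + 1) 0 0 : ℂ) * (B θ (n + 1) 0 k : ℂ) / (x0 θ n : ℂ)) = 0 := by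
    refine Finset.sum_eq_zero fun k _ => ?_
    change _ * (_ - (x0 θ n : ℂ) * _ / _) = 0
    field_simp; ring
  rw [hz, zero_add]
  refine Finset.sum_congr rfl fun j _ => ?_
  rw [Fin.sum_univ_succ (n := n)]
  have hz2 : (B θ (n + 1) j.succ 0 : ℂ) - (B θ (n + 1) j.succ 0 : ℂ) * (B θ (n + 1) 0 0 : ℂ) / (x0 θ n : ℂ) = 0 := by
    change _ - _ * (x0 θ n : ℂ) / _ = 0
    field_simp; ring
  rw [hz2, mul_zero, zero_add]
  refine Finset.sum_congr rfl fun k _ => ?_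
  rw [schur_zero h hx]; push_cast; simp

/-- expansion of a product-weight double sum -/
lemma sum_prod {n : ℕ} (a b : ℕ → ℂ) (M : Matrix (Fin n) (Fin n) ℝ) (u w : Fin n → ℝ) (x : ℂ) :
    ∑ j : Fin n, ∑ k : Fin n, (a j * b k) * ((M j k : ℂ) - (u j : ℂ) * (w k : ℂ) / x)
      = (∑ j : Fin n, a j * ∑ k : Fin n, (M j k : ℂ) * b k)
        - (∑ j : Fin n, a j * (u j : ℂ)) * (∑ k : Fin n, (w k : ℂ) * b k) / x := by
  rw [Finset.sum_mul_sum, Finset.sum_div, ← Finset.sum_sub_distrib]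
  refine Finset.sum_congr rfl fun j _ => ?_
  rw [Finset.mul_sum, Finset.sum_div, ← Finset.sum_sub_distrib]
  refine Finset.sum_congr rfl fun k _ => ?_
  ring

lemma conj_X (θ : ℝ) (N : ℕ) (j : Fin N) : ∑ k : Fin N, (B θ N j k : ℂ) * conj (z θ) ^ (k : ℕ) = conj (X θ N j) := by
  simp [X, map_sum]

/-- Christoffel-Darboux at `(z,z)`. -/
lemma CD1 {θ : ℝ} {n : ℕ} (h : E θ (n + 1) ≠ 0) (hx : x0 θ n ≠ 0) :
    gam θ (n + 1) * (1 - (z θ) ^ 2) * (x0 θ n : ℂ) =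
      p θ n * q θ n - (z θ) ^ 2 * (z θ) ^ (2 * n) * conj (p θ n * q θ n) := by
  have hx' : (x0 θ n : ℂ) ≠ 0 := by exact_mod_cast hx
  have e1 := sum_last h hx (fun j k => (z θ) ^ j * (z θ) ^ k)
  have e2 := sum_zero h hx (fun j k => (z θ) ^ j * (z θ) ^ k)
  rw [sum_prod (fun j => (z θ) ^ j) (fun j => (z θ) ^ j) (B θ (n + 1))] at e1 e2
  have e3 : ∑ j : Fin n, ∑ k : Fin n, ((z θ) ^ ((j : ℕ) + 1) * (z θ) ^ ((k : ℕ) + 1)) * (B θ n j k : ℂ)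
      = (z θ) ^ 2 * ∑ j : Fin n, ∑ k : Fin n, ((z θ) ^ (j : ℕ) * (z θ) ^ (k : ℕ)) * (B θ n j k : ℂ) := by
    simp only [Finset.mul_sum]
    refine Finset.sum_congr rfl fun j _ => Finset.sum_congr rfl fun k _ => ?_
    ring
  rw [e3, e1] at e2
  change (z θ) ^ 2 * (gam θ (n + 1) - Y θ (n + 1) (Fin.last n) * X θ (n + 1) (Fin.last n) / _) =
    gam θ (n + 1) - p θ n * q θ n / _ at e2
  rw [X_last, Y_last] at e2
  field_simp at e2
  rw [map_mul]
  linear_combination -e2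

def Y1 (θ : ℝ) (N : ℕ) (k : Fin N) : ℂ := ∑ j : Fin N, (((j : ℕ) : ℂ) + 1) * (z θ) ^ (j : ℕ) * (B θ N j k : ℂ)

lemma im_eq' (u : ℂ) : -(2 / (Real.pi : ℂ)) * (u.im : ℂ) = I / Real.pi * (u - conj u) := by
  rw [Complex.sub_conj]
  have : (Real.pi : ℂ) ≠ 0 := by exact_mod_cast Real.pi_ne_zero
  field_simp
  push_cast
  linear_combination -(2 * (u.im : ℂ)) * Complex.I_sq

lemma Y1_eq {θ : ℝ} {N : ℕ} (h : E θ N ≠ 0) (k : Fin N) :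
    Y1 θ N k = ((k : ℕ) : ℂ) * Y θ N k + I / Real.pi *
      (conj (z θ) * gam θ N * conj (Y θ N k) - z θ * al θ N * Y θ N k) := by
  have key : ∀ j : Fin N, (((j : ℕ) : ℂ) + 1) * (z θ) ^ (j : ℕ) * (B θ N j k : ℂ)
      = ((k : ℕ) : ℂ) * ((z θ) ^ (j : ℕ) * (B θ N j k : ℂ)) + I / Real.pi *
        (conj (z θ) * ((z θ) ^ (j : ℕ) * X θ N j) * conj (Y θ N k) - z θ * ((z θ) ^ (j : ℕ) * conj (X θ N j)) * Y θ N k) := by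
    intro j
    have h1 : ((((j : ℝ) - (k : ℝ) + 1) * B θ N j k : ℝ) : ℂ) = ((-(2 / Real.pi) * (conj (z θ) * X θ N j * conj (Y θ N k)).im : ℝ) : ℂ) := by
      rw [G1 h j k]
    push_cast at h1
    rw [im_eq'] at h1
    simp only [map_mul, Complex.conj_conj] at h1
    linear_combination (z θ) ^ (j : ℕ) * h1
  rw [Y1, Finset.sum_congr rfl fun j _ => key j]
  simp only [Finset.sum_add_distrib, ← Finset.mul_sum, Finset.sum_sub_distrib, ← Finset.sum_mul]
  rfl

lemma CD2 {θ : ℝ} {n : ℕ} (h : E θ (n + 1) ≠ 0) (hx : x0 θ n ≠ 0) :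
    (x0 θ n : ℂ) * al θ (n + 1) = ((n : ℂ) + 1) * (p θ n * conj (q θ n)) - I / Real.pi *
      (conj (z θ) * (gam θ (n + 1) * conj (p θ n) * conj (q θ n) - conj (gam θ (n + 1)) * p θ n * q θ n)) := by
  have hx' : (x0 θ n : ℂ) ≠ 0 := by exact_mod_cast hx
  have e1 := sum_last h hx (fun j k => (((j : ℕ) : ℂ) + 1) * (z θ) ^ j * conj (z θ) ^ k)
  have e2 := sum_zero h hx (fun j k => (((j : ℕ) : ℂ) + 1) * (z θ) ^ j * conj (z θ) ^ k)
  have e0 := sum_last h hx (fun j k => (z θ) ^ j * conj (z θ) ^ k)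
  rw [sum_prod (fun j => (((j : ℕ) : ℂ) + 1) * (z θ) ^ j) (fun j => conj (z θ) ^ j) (B θ (n + 1))] at e1 e2
  rw [sum_prod (fun j => (z θ) ^ j) (fun j => conj (z θ) ^ j) (B θ (n + 1))] at e0
  have e3 : ∑ j : Fin n, ∑ k : Fin n, (((((j : ℕ) + 1 : ℕ) : ℂ) + 1) * (z θ) ^ ((j : ℕ) + 1) * conj (z θ) ^ ((k : ℕ) + 1)) * (B θ n j k : ℂ)
      = (∑ j : Fin n, ∑ k : Fin n, ((((j : ℕ) : ℂ) + 1) * (z θ) ^ (j : ℕ) * conj (z θ) ^ (k : ℕ)) * (B θ n j k : ℂ))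
       + ∑ j : Fin n, ∑ k : Fin n, ((z θ) ^ (j : ℕ) * conj (z θ) ^ (k : ℕ)) * (B θ n j k : ℂ) := by
    rw [← Finset.sum_add_distrib]
    refine Finset.sum_congr rfl fun j _ => ?_
    rw [← Finset.sum_add_distrib]
    refine Finset.sum_congr rfl fun k _ => ?_
    push_cast
    linear_combination (((j : ℂ) + 2) * (z θ) ^ (j : ℕ) * conj (z θ) ^ (k : ℕ) * (B θ n j k : ℂ)) * z_mul_conj θ
  rw [e3, e1, e0] at e2
  simp only [conj_X] at e2
  change (_ - Y1 θ (n + 1) (Fin.last n) * _ / _) + (al θ (n + 1) - Y θ (n + 1) (Fin.last n) * _ / _) =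
    (_ - Y1 θ (n + 1) 0 * conj (q θ n) / _) at e2
  rw [Y1_eq h, Y1_eq h, X_last, Y_last] at e2
  change (_ - _ / _) + (_ - _ / _) = (_ - (_ * p θ n + I / Real.pi * (_ * conj (p θ n) - _ * p θ n)) * conj (q θ n) / _) at e2
  have hg := gam_conj θ n
  have hz := zzpow θ n
  simp only [map_mul, map_pow, Complex.conj_conj, Fin.val_last, Fin.val_zero, Nat.cast_zero, zero_mul, zero_add] at e2
  have hpi : (Real.pi : ℂ) ≠ 0 := by exact_mod_cast Real.pi_ne_zero
  have hg2 : conj (z θ) ^ n * conj (z θ) ^ n * gam θ (n + 1) = conj (gam θ (n + 1)) := by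
    linear_combination (conj (z θ) ^ n * conj (z θ) ^ n) * hg + conj (gam θ (n + 1)) * (1 + z θ ^ n * conj (z θ) ^ n) * hz
  generalize al θ (n + 1) = a at *
  generalize gam θ (n + 1) = γ at *
  generalize conj γ = γb at *
  generalize p θ n = P at *
  generalize conj P = Pb at *
  generalize q θ n = Q at *
  generalize conj Q = Qb at *
  generalize (x0 θ n : ℂ) = x at *
  generalize I / (Real.pi : ℂ) = ip at *
  generalize conj (z θ) = zb at *
  generalize z θ = w at *
  have e4 : a * x - w ^ n * Qb * (zb ^ n * P) - ((n : ℂ) * (w ^ n * Qb) + ip * (zb * γ * (zb ^ n * Q) - w * a * (w ^ n * Qb))) * (zb ^ n * P)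
     + ip * (zb * γ * Pb - w * a * P) * Qb = 0 := by
    field_simp at e2
    linear_combination e2
  linear_combination e4 + (P * Qb * (1 + n) - ip * w * a * Qb * P) * hz + ip * zb * P * Q * hg2

end
end XXString

namespace XXString
open Matrix Complex ComplexConjugate

noncomputable section

def ze (θ : ℝ) (n : ℕ) : ℂ := conj (z θ) ^ n * (p θ n * q θ n) / (x0 θ n : ℂ)
def rh (θ : ℝ) (n : ℕ) : ℂ := z θ * (p θ n * conj (q θ n)) / (x0 θ n : ℂ)
def r (θ : ℝ) (n : ℕ) : ℝ := (rh θ n).re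
def W (θ : ℝ) (n : ℕ) : ℂ := conj (z θ) ^ n * z θ * (p θ n) ^ 2
def V (θ : ℝ) (n : ℕ) : ℂ := conj (z θ) ^ (n + 1) * (q θ n) ^ 2

lemma rh_im {θ : ℝ} {n : ℕ} (h : E θ (n + 1) ≠ 0) (hx : x0 θ n ≠ 0) : (rh θ n).im = Real.pi / 2 := by
  have h1 := G1 h 0 0
  simp only [Fin.val_zero, Nat.cast_zero, sub_zero, zero_add, one_mul] at h1
  change x0 θ n = _ * (conj (z θ) * q θ n * conj (p θ n)).im at h1
  have h2 : conj (z θ) * q θ n * conj (p θ n) = conj (z θ * (p θ n * conj (q θ n))) := by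
    simp; ring
  rw [h2, Complex.conj_im] at h1
  rw [rh, Complex.div_ofReal_im]
  have := Real.pi_ne_zero
  field_simp at h1 ⊢
  linarith

lemma rh_eq {θ : ℝ} {n : ℕ} (h : E θ (n + 1) ≠ 0) (hx : x0 θ n ≠ 0) :
    rh θ n = (r θ n : ℂ) + (Real.pi / 2 : ℝ) * I := by
  rw [← rh_im h hx, r, Complex.re_add_im]

lemma g_sin {θ : ℝ} {n : ℕ} (h : E θ (n + 1) ≠ 0) (hx : x0 θ n ≠ 0) :
    g θ n * Real.sin θ = -(conj (z θ) * ze θ n).im := by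
  have hx' : (x0 θ n : ℂ) ≠ 0 := by exact_mod_cast hx
  have h1 := CD1 h hx
  rw [gam_g] at h1
  have h2 : (g θ n : ℂ) * (conj (z θ) - z θ) = conj (z θ) * ze θ n - conj (conj (z θ) * ze θ n) := by
    have e1 := zzpow θ n
    have e2 := z_mul_conj θ
    simp only [ze, map_mul, map_div₀, map_pow, Complex.conj_conj, Complex.conj_ofReal] at h1 ⊢
    field_simp
    have e3 : z θ ^ (2 * n) = z θ ^ n * z θ ^ n := by ring
    rw [e3] at h1
    linear_combination (conj (z θ) ^ n * conj (z θ)) * h1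
      - ((g θ n : ℂ) * x0 θ n * (conj (z θ) - z θ)) * e1
      + (g θ n : ℂ) * x0 θ n * z θ * z θ ^ n * conj (z θ) ^ n * e2
      - (z θ * conj (z θ) * z θ * z θ ^ n * conj (p θ n) * conj (q θ n)) * e1
      - (z θ * z θ ^ n * conj (p θ n) * conj (q θ n)) * e2
  have h3 := congrArg Complex.im h2
  rw [Complex.im_ofReal_mul, Complex.sub_im, Complex.sub_im, Complex.conj_im, Complex.conj_im, z_im] at h3
  linarith

lemma zal {θ : ℝ} {n : ℕ} (h : E θ (n + 1) ≠ 0) (hx : x0 θ n ≠ 0) :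
    z θ * al θ (n + 1) = ((n : ℂ) + 1) * rh θ n - ((2 / Real.pi * g θ n * (ze θ n).im : ℝ) : ℂ) := by
  have hx' : (x0 θ n : ℂ) ≠ 0 := by exact_mod_cast hx
  have h1 := CD2 h hx
  rw [gam_g] at h1
  have e0 := im_eq' (ze θ n)
  have e1 := zzpow θ n
  have e2 := z_mul_conj θ
  push_cast
  have h2 : z θ * al θ (n + 1) = ((n : ℂ) + 1) * rh θ n + g θ n * (I / Real.pi * (ze θ n - conj (ze θ n))) := by
    simp only [ze, rh, map_mul, map_div₀, map_pow, Complex.conj_conj, Complex.conj_ofReal] at h1 ⊢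
    have hpi : (Real.pi : ℂ) ≠ 0 := by exact_mod_cast Real.pi_ne_zero
    field_simp
    field_simp at h1
    linear_combination z θ * h1 + I * g θ n * (conj (z θ) ^ n * p θ n * q θ n - z θ ^ n * conj (p θ n) * conj (q θ n)) * e2
  rw [h2]
  linear_combination -(g θ n : ℂ) * e0

lemma A_eq {θ : ℝ} {n : ℕ} (h : E θ (n + 1) ≠ 0) (hx : x0 θ n ≠ 0) :
    A θ (n + 1) = ((n : ℝ) + 1) * r θ n - 2 / Real.pi * g θ n * (ze θ n).im := by
  rw [A, zal h hx, Complex.sub_re, Complex.ofReal_re, r]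
  congr 1
  have : ((n : ℂ) + 1) = (((n : ℝ) + 1 : ℝ) : ℂ) := by push_cast; ring
  rw [this, Complex.re_ofReal_mul]

lemma hasDerivAt_zpow (m : ℤ) (θ : ℝ) : HasDerivAt (fun t => z t ^ m) (I * m * z θ ^ m) θ := by
  have := (_root_.hasDerivAt_zpow m (z θ) (Or.inl (z_ne θ))).comp θ (hasDerivAt_z θ)
  refine this.congr_deriv ?_
  rw [zpow_sub₀ (z_ne θ)]
  have := z_ne θ
  field_simp

lemma sandwich_sum {θ : ℝ} {N : ℕ} (h : E θ N ≠ 0) (j k : Fin N) (s : ℤ) (hs : s = (j : ℤ) - k + 1) :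
    HasDerivAt (fun t => z t ^ s * (B t N j k : ℂ))
      (-(2 / Real.pi) * (z θ ^ s * (conj (z θ) * X θ N j * conj (Y θ N k)))) θ := by
  have h1 := (hasDerivAt_zpow s θ).mul (G2 h j k).ofReal_comp
  refine h1.congr_deriv ?_
  have h2 := G1 h j k
  have h3 : ((((j : ℝ) - (k : ℝ) + 1) * B θ N j k : ℝ) : ℂ) = ((-(2 / Real.pi) * (conj (z θ) * X θ N j * conj (Y θ N k)).im : ℝ) : ℂ) := by
    rw [h2]
  have h4 := Complex.re_add_im (conj (z θ) * X θ N j * conj (Y θ N k))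
  subst hs
  push_cast at h3 ⊢
  linear_combination I * z θ ^ ((j : ℤ) - k + 1) * h3 - (2 / (Real.pi : ℂ)) * z θ ^ ((j : ℤ) - k + 1) * h4

lemma hasDerivAt_zp {θ : ℝ} {n : ℕ} (h : E θ (n + 1) ≠ 0) :
    HasDerivAt (fun t => z t * p t n) (-(2 / Real.pi) * (gam θ (n + 1) * conj (p θ n))) θ := by
  have e : (fun t => z t * p t n) = fun t => ∑ j : Fin (n + 1), z t ^ ((j : ℤ) - ((0 : Fin (n + 1)) : ℕ) + 1) * (B t (n + 1) j 0 : ℂ) := by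
    funext t
    rw [p, Y, Finset.mul_sum]
    refine Finset.sum_congr rfl fun j _ => ?_
    have : z t ^ ((j : ℤ) - ((0 : Fin (n + 1)) : ℕ) + 1) = z t ^ (j : ℕ) * z t := by
      simp only [Fin.val_zero, Nat.cast_zero, sub_zero]
      rw [zpow_add₀ (z_ne t)]; simp
    rw [this]; ring
  rw [e]
  have := HasDerivAt.fun_sum (u := (Finset.univ : Finset (Fin (n + 1)))) fun j _ => sandwich_sum h j 0 _ rfl
  refine this.congr_deriv ?_
  rw [gam, Finset.sum_mul, Finset.mul_sum]
  refine Finset.sum_congr rfl fun j _ => ?_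
  have : z θ ^ ((j : ℤ) - ((0 : Fin (n + 1)) : ℕ) + 1) = z θ ^ (j : ℕ) * z θ := by
    simp only [Fin.val_zero, Nat.cast_zero, sub_zero]
    rw [zpow_add₀ (z_ne θ)]; simp
  rw [this]
  change _ * (_ * (_ * _ * conj (p θ n))) = _
  linear_combination (-(2 / (Real.pi : ℂ)) * z θ ^ (j : ℕ) * X θ (n + 1) j * conj (p θ n)) * z_mul_conj θ

lemma hasDerivAt_zq {θ : ℝ} {n : ℕ} (h : E θ (n + 1) ≠ 0) :
    HasDerivAt (fun t => conj (z t) * q t n) (-(2 / Real.pi) * (gam θ (n + 1) * conj (q θ n))) θ := by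
  have e : (fun t => conj (z t) * q t n) = fun t => ∑ k : Fin (n + 1),
      conj (z t ^ ((((0 : Fin (n + 1)) : ℕ) : ℤ) - k + 1) * (B t (n + 1) 0 k : ℂ)) := by
    funext t
    rw [q, X, Finset.mul_sum]
    refine Finset.sum_congr rfl fun j _ => ?_
    rw [map_mul, map_zpow₀, conj_z, Complex.conj_ofReal]
    have : (z t)⁻¹ ^ ((((0 : Fin (n + 1)) : ℕ) : ℤ) - (j : ℕ) + 1) = z t ^ (j : ℕ) * (z t)⁻¹ := by
      simp only [Fin.val_zero, Nat.cast_zero]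
      rw [zpow_add₀ (inv_ne_zero (z_ne t))]; simp
    rw [this]; ring
  rw [e]
  have := HasDerivAt.fun_sum (u := (Finset.univ : Finset (Fin (n + 1)))) fun k _ =>
    (Complex.conjCLE.toContinuousLinearMap.hasFDerivAt.comp_hasDerivAt θ (sandwich_sum h 0 k _ rfl))
  refine this.congr_deriv ?_
  rw [gam_eq, Finset.sum_mul, Finset.mul_sum]
  refine Finset.sum_congr rfl fun j _ => ?_
  have : (z θ)⁻¹ ^ ((((0 : Fin (n + 1)) : ℕ) : ℤ) - (j : ℕ) + 1) = z θ ^ (j : ℕ) * (z θ)⁻¹ := by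
    simp only [Fin.val_zero, Nat.cast_zero]
    rw [zpow_add₀ (inv_ne_zero (z_ne θ))]; simp
  change conj (_ * (_ * (_ * q θ n * _))) = _
  simp only [map_mul, map_neg, map_div₀, Complex.conj_conj, Complex.conj_ofReal, map_zpow₀]
  rw [conj_z, this, map_ofNat]
  have := z_ne θ
  field_simp

lemma hasDerivAt_zal {θ : ℝ} {N : ℕ} (h : E θ N ≠ 0) :
    HasDerivAt (fun t => z t * al t N) (-(2 / Real.pi) * (gam θ N * conj (gam θ N))) θ := by
  have e : (fun t => z t * al t N) = fun t => ∑ j : Fin N, ∑ k : Fin N,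
      z t ^ ((j : ℤ) - k + 1) * (B t N j k : ℂ) := by
    funext t
    rw [al, Finset.mul_sum]
    refine Finset.sum_congr rfl fun j _ => ?_
    rw [← conj_X, Finset.mul_sum, Finset.mul_sum]
    refine Finset.sum_congr rfl fun k _ => ?_
    rw [conj_z, zpow_add₀ (z_ne t), zpow_sub₀ (z_ne t)]
    simp only [zpow_natCast, zpow_one, inv_pow]
    have := z_ne t
    field_simp
  rw [e]
  have := HasDerivAt.fun_sum (u := (Finset.univ : Finset (Fin N))) fun j _ =>
    HasDerivAt.fun_sum (u := (Finset.univ : Finset (Fin N))) fun k _ => sandwich_sum h j k _ rfl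
  refine this.congr_deriv ?_
  have e2 : conj (gam θ N) = ∑ k : Fin N, conj (z θ) ^ (k : ℕ) * conj (Y θ N k) := by
    rw [gam_eq]; simp
  rw [e2, gam, Finset.sum_mul_sum, Finset.mul_sum]
  refine Finset.sum_congr rfl fun j _ => ?_
  rw [Finset.mul_sum]
  refine Finset.sum_congr rfl fun k _ => ?_
  rw [conj_z, zpow_add₀ (z_ne θ), zpow_sub₀ (z_ne θ)]
  simp only [zpow_natCast, zpow_one, inv_pow]
  have := z_ne θ
  field_simp

lemma gam_norm (θ : ℝ) (n : ℕ) : gam θ (n + 1) * conj (gam θ (n + 1)) = ((g θ n) ^ 2 : ℝ) := by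
  rw [gam_g, map_mul, map_pow, Complex.conj_ofReal]
  push_cast
  linear_combination (g θ n : ℂ) ^ 2 * zzpow θ n

lemma hasDerivAt_A {θ : ℝ} {n : ℕ} (h : E θ (n + 1) ≠ 0) :
    HasDerivAt (fun t => A t (n + 1)) (-(2 / Real.pi) * (g θ n) ^ 2) θ := by
  have h1 := Complex.reCLM.hasFDerivAt.comp_hasDerivAt θ (hasDerivAt_zal h)
  rw [gam_norm] at h1
  refine h1.congr_deriv ?_
  have : (-(2 / (Real.pi : ℂ)) * ((g θ n ^ 2 : ℝ) : ℂ)) = ((-(2 / Real.pi) * (g θ n) ^ 2 : ℝ) : ℂ) := by push_cast; ring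
  rw [this, Complex.reCLM_apply, Complex.ofReal_re]

lemma hasDerivAt_x0 {θ : ℝ} {n : ℕ} (h : E θ (n + 1) ≠ 0) (hx : x0 θ n ≠ 0) :
    HasDerivAt (fun t => x0 t n) (-(2 / Real.pi) * r θ n * x0 θ n) θ := by
  refine (G2 h 0 0).congr_deriv ?_
  change _ * (conj (z θ) * q θ n * conj (p θ n)).re = _
  have h2 : conj (z θ) * q θ n * conj (p θ n) = conj (z θ * (p θ n * conj (q θ n))) := by
    simp; ring
  rw [h2, Complex.conj_re, r, rh, Complex.div_ofReal_re]
  field_simp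

lemma conj_zpow' (t : ℝ) (m : ℕ) : conj (z t) ^ m = z t ^ (-(m : ℤ)) := by
  rw [conj_z, _root_.zpow_neg, zpow_natCast, inv_pow]

lemma ze_eq (t : ℝ) (n : ℕ) : ze t n = z t ^ (-(n : ℤ)) * ((z t * p t n) * (conj (z t) * q t n)) / (x0 t n : ℂ) := by
  rw [ze, conj_zpow']
  congr 1
  linear_combination (-z t ^ (-(n : ℤ)) * p t n * q t n) * z_mul_conj t

lemma W_eq (t : ℝ) (n : ℕ) : W t n = z t ^ (-((n + 1 : ℕ) : ℤ)) * (z t * p t n) ^ 2 := by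
  rw [W, ← conj_zpow']
  linear_combination -(conj (z t) ^ n * z t * p t n ^ 2) * z_mul_conj t

lemma two_re (u : ℂ) : u + conj u = ((2 * u.re : ℝ) : ℂ) := by
  rw [Complex.add_conj]

lemma hasDerivAt_ze {θ : ℝ} {n : ℕ} (h : E θ (n + 1) ≠ 0) (hx : x0 θ n ≠ 0) :
    HasDerivAt (fun t => ze t n) (-(I * n * ze θ n) - ((4 / Real.pi * g θ n * r θ n : ℝ) : ℂ) +
      ((2 / Real.pi * r θ n : ℝ) : ℂ) * ze θ n) θ := by
  have hx' : (x0 θ n : ℂ) ≠ 0 := by exact_mod_cast hx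
  have h1 := ((hasDerivAt_zpow (-(n : ℤ)) θ).mul ((hasDerivAt_zp h).mul (hasDerivAt_zq h))).div
    (hasDerivAt_x0 h hx).ofReal_comp hx'
  have e : (fun t => ze t n) = fun t => z t ^ (-(n : ℤ)) * ((z t * p t n) * (conj (z t) * q t n)) / (x0 t n : ℂ) := by
    funext t; exact ze_eq t n
  rw [e]
  refine h1.congr_deriv ?_
  have e2 := two_re (rh θ n)
  rw [ze_eq, gam_g]
  simp only [Pi.mul_apply, ← conj_zpow']
  rw [show (rh θ n).re = r θ n from rfl] at e2
  simp only [rh, map_mul, map_div₀, Complex.conj_conj, Complex.conj_ofReal] at e2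
  have e1 := zzpow θ n
  push_cast at e2 ⊢
  generalize (r θ n : ℂ) = R at *
  have hpi : (Real.pi : ℂ) ≠ 0 := by exact_mod_cast Real.pi_ne_zero
  field_simp at e2 ⊢
  linear_combination (-(2 * (g θ n : ℂ)) * (z θ ^ n * conj (z θ) ^ n)) * e2 - 4 * g θ n * x0 θ n * R * e1

lemma hasDerivAt_W {θ : ℝ} {n : ℕ} (h : E θ (n + 1) ≠ 0) :
    HasDerivAt (fun t => W t n) (-(I * (n + 1) * W θ n) - ((4 / Real.pi * g θ n * ‖W θ n‖ : ℝ) : ℂ)) θ := by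
  have h1 := ((hasDerivAt_zpow (-((n + 1 : ℕ) : ℤ)) θ).mul ((hasDerivAt_zp h).pow 2))
  have e : (fun t => W t n) = fun t => z t ^ (-((n + 1 : ℕ) : ℤ)) * (z t * p t n) ^ 2 := by
    funext t; exact W_eq t n
  have e2 : ((‖W θ n‖ : ℝ) : ℂ) = p θ n * conj (p θ n) := by
    rw [Complex.mul_conj, Complex.normSq_eq_norm_sq, W]
    simp [norm_z]
  push_cast
  rw [e2, e]
  refine h1.congr_deriv ?_
  rw [W_eq, gam_g]
  simp only [Pi.pow_apply, ← conj_zpow']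
  have e1 := zzpow θ n
  have e3 := z_mul_conj θ
  push_cast
  rw [pow_succ]
  linear_combination (-(4 / (Real.pi : ℂ)) * g θ n * p θ n * conj (p θ n)) * (z θ * conj (z θ) * e1 + e3)

lemma norm_W (θ : ℝ) (n : ℕ) : ‖W θ n‖ = ‖p θ n‖ ^ 2 := by
  rw [W]; simp [norm_z]
lemma norm_V (θ : ℝ) (n : ℕ) : ‖V θ n‖ = ‖q θ n‖ ^ 2 := by
  rw [V]; simp [norm_z]

lemma norm_ze (θ : ℝ) (n : ℕ) : ‖ze θ n‖ = ‖rh θ n‖ := by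
  rw [ze, rh]; simp [norm_z]

lemma norm_ze_sq {θ : ℝ} {n : ℕ} (h : E θ (n + 1) ≠ 0) (hx : x0 θ n ≠ 0) :
    ‖ze θ n‖ ^ 2 = (r θ n) ^ 2 + (Real.pi / 2) ^ 2 := by
  rw [norm_ze, ← Complex.normSq_eq_norm_sq, Complex.normSq_apply, rh_im h hx, ← r]
  ring

lemma norm_WV {θ : ℝ} {n : ℕ} (hx : x0 θ n ≠ 0) : ‖W θ n‖ * ‖V θ n‖ = (x0 θ n) ^ 2 * ‖ze θ n‖ ^ 2 := by
  rw [norm_W, norm_V, ze]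
  simp only [norm_div, norm_mul, norm_pow, RCLike.norm_conj, norm_z, Complex.norm_real, one_pow, one_mul, Real.norm_eq_abs]
  rw [div_pow, sq_abs]
  field_simp

lemma W_V {θ : ℝ} {n : ℕ} (hx : x0 θ n ≠ 0) : W θ n * (‖V θ n‖ : ℂ) = (x0 θ n : ℂ) ^ 2 * (ze θ n * rh θ n) := by
  have hx' : (x0 θ n : ℂ) ≠ 0 := by exact_mod_cast hx
  have e2 : ((‖V θ n‖ : ℝ) : ℂ) = q θ n * conj (q θ n) := by
    rw [Complex.mul_conj, Complex.normSq_eq_norm_sq, norm_V]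
  rw [e2, W, ze, rh]
  field_simp

lemma yy_eq {θ : ℝ} {n : ℕ} (h : E θ (n + 1) ≠ 0) : ((n : ℝ) + 1) * yy θ n = 2 / Real.pi * (W θ n).im := by
  have h1 := G1 h (Fin.last n) 0
  simp only [Fin.val_zero, Nat.cast_zero, sub_zero, Fin.val_last] at h1
  rw [X_last] at h1
  change _ * yy θ n = _ * (_ * _ * conj (p θ n)).im at h1
  have e : conj (z θ) * (z θ ^ n * conj (p θ n)) * conj (p θ n) = conj (W θ n) := by
    rw [W]; simp; ring
  rw [h1, e, Complex.conj_im]; ring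

lemma yt_eq {θ : ℝ} {n : ℕ} (h : E θ (n + 1) ≠ 0) : ((n : ℝ) - 1) * yt θ n = 2 / Real.pi * (V θ n).im := by
  have h1 := G1 h 0 (Fin.last n)
  simp only [Fin.val_zero, Nat.cast_zero, zero_sub, Fin.val_last] at h1
  rw [Y_last] at h1
  change _ * yt θ n = _ * (_ * q θ n * _).im at h1
  have e : conj (z θ) * q θ n * conj (z θ ^ n * conj (q θ n)) = V θ n := by
    rw [V]; simp; ring
  rw [e] at h1
  linarith

lemma p_rec {θ : ℝ} {n : ℕ} (h : E θ (n + 2) ≠ 0) (hx : x0 θ (n + 1) ≠ 0) :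
    p θ n = p θ (n + 1) - (yy θ (n + 1) / x0 θ (n + 1) : ℝ) * (z θ ^ (n + 1) * conj (q θ (n + 1))) := by
  have hx' : (x0 θ (n + 1) : ℂ) ≠ 0 := by exact_mod_cast hx
  have e : p θ n = ∑ j : Fin (n + 2), z θ ^ (j : ℕ) * ((B θ (n + 2) j 0 : ℂ) -
      (B θ (n + 2) j (Fin.last (n + 1)) : ℂ) * (yy θ (n + 1) : ℂ) / (x0 θ (n + 1) : ℂ)) := by
    rw [Fin.sum_univ_castSucc, B_last_last, p, Y]
    have : ((B θ (n + 2) (Fin.last (n + 1)) 0 : ℂ) -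
      (x0 θ (n + 1) : ℂ) * (yy θ (n + 1) : ℂ) / (x0 θ (n + 1) : ℂ)) = 0 := by
      rw [yy]; field_simp; ring
    rw [this, mul_zero, add_zero]
    refine Finset.sum_congr rfl fun j _ => ?_
    rw [schur_last h hx]; push_cast; simp [yy]
  rw [e, ← Y_last]
  simp only [p, Y, mul_sub, Finset.sum_sub_distrib]
  congr 1
  rw [Finset.mul_sum]
  refine Finset.sum_congr rfl fun j _ => ?_
  push_cast; ring

lemma q_rec {θ : ℝ} {n : ℕ} (h : E θ (n + 2) ≠ 0) (hx : x0 θ (n + 1) ≠ 0) :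
    q θ n = q θ (n + 1) - (yt θ (n + 1) / x0 θ (n + 1) : ℝ) * (z θ ^ (n + 1) * conj (p θ (n + 1))) := by
  have hx' : (x0 θ (n + 1) : ℂ) ≠ 0 := by exact_mod_cast hx
  have e : q θ n = ∑ j : Fin (n + 2), z θ ^ (j : ℕ) * ((B θ (n + 2) 0 j : ℂ) -
      (B θ (n + 2) (Fin.last (n + 1)) j : ℂ) * (yt θ (n + 1) : ℂ) / (x0 θ (n + 1) : ℂ)) := by
    rw [Fin.sum_univ_castSucc, B_last_last, q, X]
    have : ((B θ (n + 2) 0 (Fin.last (n + 1)) : ℂ) -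
      (x0 θ (n + 1) : ℂ) * (yt θ (n + 1) : ℂ) / (x0 θ (n + 1) : ℂ)) = 0 := by
      rw [yt]; field_simp; ring
    rw [this, mul_zero, add_zero]
    refine Finset.sum_congr rfl fun j _ => ?_
    rw [schur_last h hx]; push_cast; simp [yt]; ring
  rw [e, ← X_last]
  simp only [q, X, mul_sub, Finset.sum_sub_distrib]
  congr 1
  · refine Finset.sum_congr rfl fun j _ => ?_
    ring
  rw [Finset.mul_sum]
  refine Finset.sum_congr rfl fun j _ => ?_
  push_cast; ring

lemma x0_rec {θ : ℝ} {n : ℕ} (h : E θ (n + 2) ≠ 0) (hx : x0 θ (n + 1) ≠ 0) :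
    x0 θ n = x0 θ (n + 1) - yy θ (n + 1) * yt θ (n + 1) / x0 θ (n + 1) := by
  rw [x0, schur_last h hx]
  simp [yy, yt, x0]; ring

lemma W_rec {θ : ℝ} {n : ℕ} (h : E θ (n + 2) ≠ 0) (hx : x0 θ (n + 1) ≠ 0) :
    W θ n = z θ * (W θ (n + 1) - 2 * (yy θ (n + 1) : ℂ) * rh θ (n + 1) +
      ((yy θ (n + 1) / x0 θ (n + 1) : ℝ) : ℂ) ^ 2 * conj (V θ (n + 1))) := by
  have hx' : (x0 θ (n + 1) : ℂ) ≠ 0 := by exact_mod_cast hx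
  rw [W, p_rec h hx, W, rh, V]
  have e1 := zzpow θ n
  have e3 := z_mul_conj θ
  simp only [map_mul, map_pow, Complex.conj_conj]
  push_cast
  field_simp
  linear_combination (-(conj (z θ) ^ n * z θ * (p θ (n + 1) * x0 θ (n + 1)) ^ 2)) * e3 +
    (-2 * (p θ (n + 1) * x0 θ (n + 1)) * yy θ (n + 1) * conj (q θ (n + 1)) * z θ ^ 2
      + (yy θ (n + 1) : ℂ) ^ 2 * conj (q θ (n + 1)) ^ 2 * z θ ^ (n + 3)) * e1

lemma E_rec {θ : ℝ} {n : ℕ} (h : E θ (n + 1) ≠ 0) : E θ n = x0 θ n * E θ (n + 1) := by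
  rw [x0, B, Matrix.inv_def, Matrix.smul_apply, Matrix.adjugate_fin_succ_eq_det_submatrix, Ring.inverse_eq_inv']
  simp only [Fin.val_zero, add_zero, pow_zero, one_mul, smul_eq_mul]
  have : (S θ (n + 1)).submatrix (Fin.succAbove 0) (Fin.succAbove 0) = S θ n := by
    ext j k
    simp only [Matrix.submatrix_apply, S, Matrix.of_apply, Fin.succAbove_zero, Fin.val_succ]
    congr 1; push_cast; ring
  rw [this]
  change E θ n = (E θ (n + 1))⁻¹ * E θ n * E θ (n + 1)
  field_simp

def D (θ : ℝ) (N : ℕ) : ℝ := (Matrix.of fun j k : Fin N => cf θ ((j : ℤ) - (k : ℤ))).det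

lemma D_eq {θ : ℝ} {n : ℕ} (h : E θ (n + 1) ≠ 0) : D θ n = (-1) ^ n * (yy θ n * E θ (n + 1)) := by
  rw [yy, B, Matrix.inv_def, Matrix.smul_apply, Matrix.adjugate_fin_succ_eq_det_submatrix, Ring.inverse_eq_inv']
  simp only [Fin.val_zero, Fin.val_last, zero_add, smul_eq_mul]
  have : (S θ (n + 1)).submatrix (Fin.succAbove 0) (Fin.succAbove (Fin.last n)) = Matrix.of fun j k : Fin n => cf θ ((j : ℤ) - (k : ℤ)) := by
    ext j k
    simp only [Matrix.submatrix_apply, S, Matrix.of_apply, Fin.succAbove_zero, Fin.val_succ, Fin.succAbove_last, Fin.val_castSucc]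
    congr 1; push_cast; ring
  rw [this]
  change D θ n = (-1) ^ n * ((E θ (n + 1))⁻¹ * ((-1) ^ n * D θ n) * E θ (n + 1))
  have h2 : ((-1 : ℝ) ^ n) * (-1) ^ n = 1 := by rw [← mul_pow]; norm_num
  field_simp
  linear_combination -D θ n * h2

end
end XXString

namespace XXString
open Matrix Complex ComplexConjugate

noncomputable section

lemma mvt {F : Type*} [NormedAddCommGroup F] [NormedSpace ℝ F] (f f' : ℝ → F) {a c C : ℝ}
    (hd : ∀ t ∈ Set.Icc a c, HasDerivAt f (f' t) t) (hb : ∀ t ∈ Set.Icc a c, ‖f' t‖ ≤ C)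
    {t : ℝ} (ht : t ∈ Set.Icc a c) : ‖f t - f a‖ ≤ C * (t - a) := by
  have := (convex_Icc a c).norm_image_sub_le_of_norm_hasDerivWithin_le
    (fun x hx => (hd x hx).hasDerivWithinAt) hb (Set.left_mem_Icc.mpr (ht.1.trans ht.2)) ht
  rwa [Real.norm_of_nonneg (by linarith [ht.1])] at this

lemma nonvan (f u : ℝ → ℝ) {a c Λ : ℝ} (hac : a < c)
    (hd : ∀ t ∈ Set.Ico a c, HasDerivAt f (u t * f t) t) (h0 : ∀ t ∈ Set.Ico a c, f t ≠ 0)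
    (hu : ∀ t ∈ Set.Ico a c, |u t| ≤ Λ) (hc : ContinuousAt f c) : f c ≠ 0 := by
  have hΛ : 0 ≤ Λ := (abs_nonneg _).trans (hu a ⟨le_rfl, hac⟩)
  have hlow : ∀ t ∈ Set.Ico a c, |f a| * Real.exp (-(Λ * (c - a))) ≤ |f t| := by
    intro t ht
    have := mvt (fun s => Real.log (f s)) u (a := a) (c := t) (C := Λ)
      (fun s hs => by
        have hs' : s ∈ Set.Ico a c := ⟨hs.1, hs.2.trans_lt ht.2⟩
        refine ((hd s hs').log (h0 s hs')).congr_deriv ?_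
        rw [mul_div_assoc, div_self (h0 s hs'), mul_one])
      (fun s hs => hu s ⟨hs.1, hs.2.trans_lt ht.2⟩) (t := t) ⟨ht.1, le_rfl⟩
    rw [Real.norm_eq_abs, abs_le] at this
    have h1 : Real.log (f a) - Λ * (c - a) ≤ Real.log (f t) := by
      have : Λ * (t - a) ≤ Λ * (c - a) := by gcongr; exact ht.2.le
      linarith
    have h2 := Real.exp_le_exp.mpr h1
    rw [Real.exp_sub, Real.exp_log_eq_abs (h0 a ⟨le_rfl, hac⟩), Real.exp_log_eq_abs (h0 t ht)] at h2
    rwa [Real.exp_neg, ← div_eq_mul_inv]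
  have hlim : |f a| * Real.exp (-(Λ * (c - a))) ≤ |f c| := by
    have h1 : Filter.Tendsto (fun t => |f t|) (nhdsWithin c (Set.Iio c)) (nhds |f c|) :=
      (hc.abs.tendsto).mono_left nhdsWithin_le_nhds
    refine ge_of_tendsto h1 ?_
    filter_upwards [Ico_mem_nhdsLT hac] with t ht using hlow t ht
  have hp : 0 < |f a| * Real.exp (-(Λ * (c - a))) :=
    mul_pos (abs_pos.mpr (h0 a ⟨le_rfl, hac⟩)) (Real.exp_pos _)
  exact abs_pos.mp (hp.trans_le hlim)

/-- nondegeneracy at `t` -/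
def Good (t : ℝ) (n : ℕ) : Prop := E t (n + 1) ≠ 0 ∧ x0 t n ≠ 0

lemma good_iff (t : ℝ) (n : ℕ) : Good t n ↔ E t (n + 1) ≠ 0 ∧ E t n ≠ 0 := by
  constructor
  · rintro ⟨h1, h2⟩
    exact ⟨h1, by rw [E_rec h1]; exact mul_ne_zero h2 h1⟩
  · rintro ⟨h1, h2⟩
    refine ⟨h1, fun h => h2 ?_⟩
    rw [E_rec h1, h, zero_mul]

lemma norm_ze_lt {t : ℝ} {n : ℕ} (h : Good t n) (hr : |r t n| ≤ 1) : ‖ze t n‖ ≤ 2 := by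
  have h1 := norm_ze_sq h.1 h.2
  have h2 : r t n ^ 2 ≤ 1 := by rw [← sq_abs]; nlinarith [abs_nonneg (r t n)]
  have := Real.pi_lt_d2
  have := Real.pi_pos
  nlinarith [norm_nonneg (ze t n)]

lemma g_bound {t σ : ℝ} {n : ℕ} (hσ : 0 < σ) (hs : σ ≤ Real.sin t) (h : Good t n) (hr : |r t n| ≤ 1) :
    |g t n| ≤ 2 / σ := by
  have h1 := g_sin h.1 h.2
  have h2 : |g t n| * Real.sin t ≤ 2 := by
    rw [← abs_of_pos (hσ.trans_le hs), ← abs_mul, h1, abs_neg]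
    refine (Complex.abs_im_le_norm _).trans ?_
    rw [norm_mul, RCLike.norm_conj, norm_z, one_mul]
    exact norm_ze_lt h hr
  rw [le_div_iff₀ hσ]
  nlinarith [abs_nonneg (g t n)]

lemma r_bound {a c σ : ℝ} {n : ℕ} (hσ : 0 < σ) (hσ1 : σ ≤ 1) (hs : ∀ t ∈ Set.Icc a c, σ ≤ Real.sin t) (hac : a ≤ c)
    (hlen : c - a ≤ Real.pi / 2) (hG : ∀ t ∈ Set.Icc a c, Good t n) (hr : ∀ t ∈ Set.Icc a c, |r t n| ≤ 1)
    (hA : A a (n + 1) = 0) : |A c (n + 1)| ≤ 4 / σ ^ 2 ∧ |r c n| ≤ 7 / (σ ^ 2 * (n + 1)) := by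
  have hpi := Real.pi_pos
  have hpi3 := Real.pi_gt_three
  have hcm : c ∈ Set.Icc a c := ⟨hac, le_rfl⟩
  have h1 := mvt (fun t => A t (n + 1)) (fun t => -(2 / Real.pi) * (g t n) ^ 2) (a := a) (c := c)
    (C := 2 / Real.pi * (4 / σ ^ 2)) (fun t ht => hasDerivAt_A (hG t ht).1)
    (fun t ht => by
      have := g_bound hσ (hs t ht) (hG t ht) (hr t ht)
      have h2 : g t n ^ 2 ≤ 4 / σ ^ 2 := by
        rw [← sq_abs]
        calc |g t n| ^ 2 ≤ (2 / σ) ^ 2 := by gcongr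
          _ = 4 / σ ^ 2 := by ring
      rw [Real.norm_eq_abs, neg_mul, abs_neg, abs_of_nonneg (by positivity)]
      gcongr) hcm
  simp only [hA, sub_zero, Real.norm_eq_abs] at h1
  have h2 : |A c (n + 1)| ≤ 4 / σ ^ 2 := by
    refine h1.trans ?_
    calc 2 / Real.pi * (4 / σ ^ 2) * (c - a) ≤ 2 / Real.pi * (4 / σ ^ 2) * (Real.pi / 2) := by gcongr
      _ = 4 / σ ^ 2 := by field_simp
  refine ⟨h2, ?_⟩
  have h3 := A_eq (hG c hcm).1 (hG c hcm).2
  have h4 : |2 / Real.pi * g c n * (ze c n).im| ≤ 3 / σ ^ 2 := by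
    rw [abs_mul, abs_mul, abs_of_pos (by positivity : 0 < 2 / Real.pi)]
    have h5 : |(ze c n).im| ≤ 2 := (Complex.abs_im_le_norm _).trans (norm_ze_lt (hG c hcm) (hr c hcm))
    have h6 := g_bound hσ (hs c hcm) (hG c hcm) (hr c hcm)
    calc 2 / Real.pi * |g c n| * |(ze c n).im| ≤ 2 / 3 * (2 / σ) * 2 := by gcongr
      _ ≤ 3 / σ := by
        rw [le_div_iff₀ hσ]; field_simp; norm_num
      _ ≤ 3 / σ ^ 2 := by
        apply div_le_div_of_nonneg_left (by norm_num) (by positivity)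
        nlinarith
  have hN : (0 : ℝ) < (n : ℝ) + 1 := by positivity
  have h7 : ((n : ℝ) + 1) * |r c n| ≤ 7 / σ ^ 2 := by
    rw [← abs_of_pos hN, ← abs_mul]
    have : ((n : ℝ) + 1) * r c n = A c (n + 1) + 2 / Real.pi * g c n * (ze c n).im := by rw [h3]; ring
    rw [this]
    refine (abs_add_le _ _).trans ?_
    calc _ ≤ 4 / σ ^ 2 + 3 / σ ^ 2 := by gcongr
      _ = 7 / σ ^ 2 := by ring
  rw [le_div_iff₀ (by positivity)]
  rw [le_div_iff₀ (by positivity)] at h7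
  linarith

lemma continuousAt_p {t : ℝ} {n : ℕ} (h : E t (n + 1) ≠ 0) : ContinuousAt (fun s => p s n) t := by
  simp only [p, Y]
  refine tendsto_finsetSum _ fun j _ => ?_
  exact ((hasDerivAt_z t).continuousAt.pow _).mul (Complex.continuous_ofReal.continuousAt.comp (G2 h j 0).continuousAt)

lemma continuousAt_q {t : ℝ} {n : ℕ} (h : E t (n + 1) ≠ 0) : ContinuousAt (fun s => q s n) t := by
  simp only [q, X]
  refine tendsto_finsetSum _ fun j _ => ?_
  exact (Complex.continuous_ofReal.continuousAt.comp (G2 h 0 j).continuousAt).mul ((hasDerivAt_z t).continuousAt.pow _)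

lemma continuousAt_r {t : ℝ} {n : ℕ} (h : Good t n) : ContinuousAt (fun s => r s n) t := by
  have hx' : (x0 t n : ℂ) ≠ 0 := by exact_mod_cast h.2
  have h1 : ContinuousAt (fun s => rh s n) t := by
    refine ContinuousAt.div₀ ((hasDerivAt_z t).continuousAt.mul ((continuousAt_p h.1).mul
      (Complex.continuous_conj.continuousAt.comp (continuousAt_q h.1)))) ?_ hx'
    exact Complex.continuous_ofReal.continuousAt.comp (G2 h.1 0 0).continuousAt
  exact Complex.continuous_re.continuousAt.comp h1

lemma step {a c σ : ℝ} {n : ℕ} (hσ : 0 < σ) (hσ1 : σ ≤ 1) (hs : ∀ t ∈ Set.Icc a c, σ ≤ Real.sin t) (hac : a < c)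
    (hlen : c - a ≤ Real.pi / 2) (hG : ∀ t ∈ Set.Ico a c, Good t n) (hr : ∀ t ∈ Set.Ico a c, |r t n| ≤ 1)
    (hA : A a (n + 1) = 0) : Good c n ∧ |r c n| ≤ 7 / (σ ^ 2 * (n + 1)) := by
  have hpi := Real.pi_pos
  have hpi3 := Real.pi_gt_three
  have hb : ∀ t ∈ Set.Ico a c, |A t (n + 1)| ≤ 4 / σ ^ 2 ∧ |r t n| ≤ 7 / (σ ^ 2 * (n + 1)) := fun t ht =>
    r_bound hσ hσ1 (fun s hs' => hs s ⟨hs'.1, hs'.2.trans ht.2.le⟩) ht.1 (by linarith [ht.2])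
      (fun s hs' => hG s ⟨hs'.1, hs'.2.trans_lt ht.2⟩) (fun s hs' => hr s ⟨hs'.1, hs'.2.trans_lt ht.2⟩) hA
  have hE1 : E c (n + 1) ≠ 0 := by
    refine nonvan (fun t => E t (n + 1)) (fun t => 2 / Real.pi * A t (n + 1)) (Λ := 2 / Real.pi * (4 / σ ^ 2)) hac
      (fun t ht => hasDerivAt_E (hG t ht).1) (fun t ht => (hG t ht).1) (fun t ht => ?_) (continuous_E _).continuousAt
    rw [abs_mul, abs_of_pos (by positivity : 0 < 2 / Real.pi)]
    gcongr
    exact (hb t ht).1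
  have hE2 : E c n ≠ 0 := by
    refine nonvan (fun t => E t n) (fun t => 2 / Real.pi * (A t (n + 1) - r t n)) (Λ := 2 / Real.pi * (4 / σ ^ 2 + 1)) hac
      (fun t ht => ?_) (fun t ht => ((good_iff t n).mp (hG t ht)).2) (fun t ht => ?_) (continuous_E _).continuousAt
    · have h1 := (hasDerivAt_x0 (hG t ht).1 (hG t ht).2).mul (hasDerivAt_E (hG t ht).1)
      have h2 : (fun s => E s n) =ᶠ[nhds t] ((fun s => x0 s n) * fun s => E s (n + 1)) := by
        filter_upwards [(continuous_E (n + 1)).continuousAt.eventually_ne (hG t ht).1] with s hs'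
        simp [E_rec hs']
      refine (h1.congr_of_eventuallyEq h2).congr_deriv ?_
      rw [E_rec (hG t ht).1]; ring
    · rw [abs_mul, abs_of_pos (by positivity : 0 < 2 / Real.pi)]
      gcongr
      exact (abs_sub _ _).trans (add_le_add (hb t ht).1 (hr t ht))
  have hg : Good c n := (good_iff c n).mpr ⟨hE1, hE2⟩
  refine ⟨hg, ?_⟩
  have h1 : Filter.Tendsto (fun t => |r t n|) (nhdsWithin c (Set.Iio c)) (nhds |r c n|) :=
      ((continuousAt_r hg).abs.tendsto).mono_left nhdsWithin_le_nhds
  refine le_of_tendsto h1 ?_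
  filter_upwards [Ico_mem_nhdsLT hac] with t ht using (hb t ht).2

lemma isOpen_G (n : ℕ) : IsOpen {t | Good t n ∧ |r t n| < 1} := by
  rw [isOpen_iff_mem_nhds]
  rintro t ⟨ht, hr⟩
  have ht' := (good_iff t n).mp ht
  filter_upwards [(continuous_E (n + 1)).continuousAt.eventually_ne ht'.1,
    (continuous_E n).continuousAt.eventually_ne ht'.2,
    (continuousAt_r ht).abs.eventually_lt_const hr] with s h1 h2 h3
  exact ⟨(good_iff s n).mpr ⟨h1, h2⟩, h3⟩

lemma bootstrap {a b σ : ℝ} {n : ℕ} (hσ : 0 < σ) (hσ1 : σ ≤ 1) (hs : ∀ t ∈ Set.Icc a b, σ ≤ Real.sin t)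
    (hlen : b - a ≤ Real.pi / 2) (hn : 7 / (σ ^ 2 * (n + 1)) < 1)
    (hG : Good a n) (hr : r a n = 0)
    (hA : A a (n + 1) = 0) : ∀ t ∈ Set.Icc a b, Good t n ∧ |r t n| ≤ 7 / (σ ^ 2 * (n + 1)) := by
  have hall : ∀ t ∈ Set.Icc a b, Good t n ∧ |r t n| < 1 := by
    by_contra hcon
    push Not at hcon
    obtain ⟨t, ht, htn⟩ := hcon
    set K : Set ℝ := Set.Icc a b ∩ {t | Good t n ∧ |r t n| < 1}ᶜ with hK
    have hKc : IsCompact K := isCompact_Icc.inter_right (isOpen_G n).isClosed_compl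
    have hKn : K.Nonempty := ⟨t, ht, fun h => absurd (htn h.1) (not_le.mpr h.2)⟩
    obtain ⟨c, hc⟩ := hKc.exists_isLeast hKn
    have hca : a < c := by
      rcases hc.1.1.1.lt_or_eq with h | h
      · exact h
      · exfalso; apply hc.1.2; rw [← h]; exact ⟨hG, by rw [hr]; simp⟩
    have hlt : ∀ s ∈ Set.Ico a c, Good s n ∧ |r s n| < 1 := by
      intro s hs'
      by_contra hne
      have : s ∈ K := ⟨⟨hs'.1, hs'.2.le.trans hc.1.1.2⟩, hne⟩
      exact absurd (hc.2 this) (not_le.mpr hs'.2)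
    have := step hσ hσ1 (fun s hs' => hs s ⟨hs'.1, hs'.2.trans hc.1.1.2⟩) hca (by linarith [hc.1.1.2])
      (fun s hs' => (hlt s hs').1) (fun s hs' => (hlt s hs').2.le) hA
    exact hc.1.2 ⟨this.1, this.2.trans_lt hn⟩
  intro t ht
  refine ⟨(hall t ht).1, ?_⟩
  exact (r_bound hσ hσ1 (fun s hs' => hs s ⟨hs'.1, hs'.2.trans ht.2⟩) ht.1 (by linarith [ht.2])
    (fun s hs' => (hall s ⟨hs'.1, hs'.2.trans ht.2⟩).1) (fun s hs' => (hall s ⟨hs'.1, hs'.2.trans ht.2⟩).2.le) hA).2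

/-- Oscillatory integration by parts. -/
lemma osc {n : ℕ} (hn : 1 ≤ n) (ζ e h h' : ℝ → ℂ) (F Fd : ℝ → ℝ) {a b C M : ℝ} (hab : a ≤ b) (hlen : b - a ≤ 2)
    (hC : 0 ≤ C) (hM : 0 ≤ M)
    (hζ : ∀ t ∈ Set.Icc a b, HasDerivAt ζ (-(I * n * ζ t) + e t) t)
    (hζ2 : ∀ t ∈ Set.Icc a b, ‖ζ t‖ ≤ 2) (he : ∀ t ∈ Set.Icc a b, ‖e t‖ ≤ C / n)
    (hh : ∀ t ∈ Set.Icc a b, HasDerivAt h (h' t) t) (hhM : ∀ t ∈ Set.Icc a b, ‖h t‖ ≤ M)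
    (hhM' : ∀ t ∈ Set.Icc a b, ‖h' t‖ ≤ M)
    (hF : ∀ t ∈ Set.Icc a b, HasDerivAt F (Fd t) t)
    (hFd : ∀ t ∈ Set.Icc a b, |Fd t - (h t * ζ t ^ 2).re| ≤ C / n) :
    ∀ t ∈ Set.Icc a b, |F t - F a| ≤ (2 * C + 8 * M + 4 * M * C) / n := by
  have hn0 : (0 : ℝ) < n := by exact_mod_cast hn
  have hn1 : (1 : ℝ) ≤ n := by exact_mod_cast hn
  have hnc : (n : ℂ) ≠ 0 := by exact_mod_cast hn0.ne'
  set Q : ℝ → ℂ := fun t => (I / (2 * n)) * (h t * ζ t ^ 2) with hQ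
  have hQd : ∀ t ∈ Set.Icc a b, HasDerivAt Q (h t * ζ t ^ 2 + (I / (2 * n)) * (h' t * ζ t ^ 2 + 2 * h t * ζ t * e t)) t := by
    intro t ht
    refine (((hh t ht).mul ((hζ t ht).pow 2)).const_mul (I / (2 * (n : ℂ)))).congr_deriv ?_
    simp only [Pi.pow_apply]
    field_simp
    push_cast
    linear_combination (-2 * n * h t * ζ t ^ 2) * Complex.I_sq
  have hQr : ∀ t ∈ Set.Icc a b, HasDerivAt (fun s => (Q s).re)
      (h t * ζ t ^ 2 + (I / (2 * n)) * (h' t * ζ t ^ 2 + 2 * h t * ζ t * e t)).re t := fun t ht =>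
    Complex.reCLM.hasFDerivAt.comp_hasDerivAt t (hQd t ht)
  have hI : ‖(I / (2 * n) : ℂ)‖ = 1 / (2 * n) := by
    rw [norm_div, Complex.norm_I, norm_mul]; simp
  have hQb : ∀ t ∈ Set.Icc a b, ‖Q t‖ ≤ 2 * M / n := by
    intro t ht
    rw [hQ]; dsimp only
    rw [norm_mul, hI, norm_mul, norm_pow]
    calc 1 / (2 * (n : ℝ)) * (‖h t‖ * ‖ζ t‖ ^ 2) ≤ 1 / (2 * (n : ℝ)) * (M * 2 ^ 2) := by
          gcongr
          · exact hhM t ht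
          · exact hζ2 t ht
      _ = 2 * M / n := by field_simp; try norm_num
  have key : ∀ t ∈ Set.Icc a b, |(F t - (Q t).re) - (F a - (Q a).re)| ≤ (C + 2 * M + 2 * M * C) / n * (t - a) := by
    intro t ht
    have := mvt (fun t => F t - (Q t).re) (fun t => Fd t - (h t * ζ t ^ 2 + (I / (2 * n)) * (h' t * ζ t ^ 2 + 2 * h t * ζ t * e t)).re)
      (a := a) (c := b) (C := (C + 2 * M + 2 * M * C) / n)
      (fun t ht => (hF t ht).sub (hQr t ht))
      (fun t ht => by
        rw [Complex.add_re, ← sub_sub, Real.norm_eq_abs]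
        refine (abs_sub _ _).trans ?_
        have h2 : |(I / (2 * n) * (h' t * ζ t ^ 2 + 2 * h t * ζ t * e t)).re| ≤ (2 * M + 2 * M * C) / n := by
          refine (Complex.abs_re_le_norm _).trans ?_
          rw [norm_mul, hI]
          have h3 : ‖h' t * ζ t ^ 2 + 2 * h t * ζ t * e t‖ ≤ M * 2 ^ 2 + 2 * M * 2 * C := by
            refine (norm_add_le _ _).trans ?_
            rw [norm_mul, norm_pow, norm_mul, norm_mul, norm_mul, Complex.norm_ofNat]
            have h4 : ‖e t‖ ≤ C := (he t ht).trans (div_le_self hC hn1)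
            have := hζ2 t ht
            have := hhM t ht
            have := hhM' t ht
            gcongr
          calc 1 / (2 * (n : ℝ)) * _ ≤ 1 / (2 * (n : ℝ)) * (M * 2 ^ 2 + 2 * M * 2 * C) := by gcongr
            _ = (2 * M + 2 * M * C) / n := by field_simp; try ring
        calc _ ≤ C / n + (2 * M + 2 * M * C) / n := add_le_add (hFd t ht) h2
          _ = _ := by ring) ht
    exact this
  intro t ht
  have ha : a ∈ Set.Icc a b := ⟨le_rfl, hab⟩
  have h1 := key t ht
  have h2 := (Complex.abs_re_le_norm _).trans (hQb t ht)
  have h3 := (Complex.abs_re_le_norm _).trans (hQb a ha)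
  have h4 : (C + 2 * M + 2 * M * C) / n * (t - a) ≤ (C + 2 * M + 2 * M * C) / n * 2 := by
    gcongr; linarith [ht.2]
  have h5 : F t - F a = ((F t - (Q t).re) - (F a - (Q a).re)) + (Q t).re - (Q a).re := by ring
  rw [h5]
  calc _ ≤ |(F t - (Q t).re) - (F a - (Q a).re)| + |(Q t).re| + |(Q a).re| :=
        (abs_sub _ _).trans (add_le_add (abs_add_le _ _) le_rfl)
    _ ≤ (C + 2 * M + 2 * M * C) / n * 2 + 2 * M / n + 2 * M / n := by
        gcongr
        exact h1.trans h4
    _ = _ := by ring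

end
end XXString

namespace XXString
open Matrix Complex ComplexConjugate

noncomputable section

lemma contDiff_zbar : ContDiff ℝ 1 (fun t : ℝ => conj (z t)) := by
  have h : ContDiff ℝ 1 z := by
    have : ContDiff ℝ 1 (fun t : ℝ => (Complex.ofRealCLM t) * I) := Complex.ofRealCLM.contDiff.mul contDiff_const
    exact this.cexp
  exact Complex.conjCLE.toContinuousLinearMap.contDiff.comp h

lemma c1_bound (h : ℝ → ℂ) {a b : ℝ} (hc : ∀ t ∈ Set.Icc a b, ContDiffAt ℝ 1 h t) :
    ∃ M : ℝ, 0 ≤ M ∧ ∀ t ∈ Set.Icc a b, HasDerivAt h (deriv h t) t ∧ ‖h t‖ ≤ M ∧ ‖deriv h t‖ ≤ M := by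
  have h1 : ContinuousOn h (Set.Icc a b) := fun t ht => (hc t ht).continuousAt.continuousWithinAt
  have h2 : ContinuousOn (deriv h) (Set.Icc a b) := fun t ht => by
    have := (hc t ht).continuousAt_fderiv (by norm_num)
    have h3 : ContinuousAt (fun s => fderiv ℝ h s 1) t := this.clm_apply continuousAt_const
    simpa using h3.continuousWithinAt
  obtain ⟨M1, hM1⟩ := isCompact_Icc.exists_bound_of_continuousOn h1
  obtain ⟨M2, hM2⟩ := isCompact_Icc.exists_bound_of_continuousOn h2
  refine ⟨|M1| + |M2|, by positivity, fun t ht => ⟨((hc t ht).differentiableAt (by norm_num)).hasDerivAt, ?_, ?_⟩⟩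
  · exact (hM1 t ht).trans (by linarith [le_abs_self M1, abs_nonneg M2])
  · exact (hM2 t ht).trans (by linarith [le_abs_self M2, abs_nonneg M1])

def Base (n : ℕ) : Prop := Good (Real.pi / 2) n ∧ r (Real.pi / 2) n = 0 ∧ A (Real.pi / 2) (n + 1) = 0 ∧
  ze (Real.pi / 2) n * z (Real.pi / 2) ^ n = ((Real.pi / 2 : ℝ) : ℂ) ∧ 0 < E (Real.pi / 2) (n + 1)

lemma g_sq {t : ℝ} {n : ℕ} (h : Good t n) (hs : Real.sin t ≠ 0) :
    (g t n) ^ 2 = ‖ze t n‖ ^ 2 / (2 * Real.sin t ^ 2) - (conj (z t) ^ 2 * ze t n ^ 2).re / (2 * Real.sin t ^ 2) := by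
  have h1 := g_sin h.1 h.2
  have h2 : g t n = -(conj (z t) * ze t n).im / Real.sin t := by field_simp; linarith
  have h3 : ‖ze t n‖ ^ 2 = (conj (z t) * ze t n).re ^ 2 + (conj (z t) * ze t n).im ^ 2 := by
    have : ‖ze t n‖ = ‖conj (z t) * ze t n‖ := by rw [norm_mul, RCLike.norm_conj, norm_z, one_mul]
    rw [this, ← Complex.normSq_eq_norm_sq, Complex.normSq_apply]; ring
  have h4 : (conj (z t) ^ 2 * ze t n ^ 2).re = (conj (z t) * ze t n).re ^ 2 - (conj (z t) * ze t n).im ^ 2 := by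
    rw [← mul_pow, sq, Complex.mul_re]; ring
  rw [h2, h3, h4]
  field_simp; ring

lemma g_im {t : ℝ} {n : ℕ} (h : Good t n) (hs : Real.sin t ≠ 0) :
    g t n * (ze t n).im = -(‖ze t n‖ ^ 2 * Real.cos t) / (2 * Real.sin t) + (conj (z t) * ze t n ^ 2).re / (2 * Real.sin t) := by
  have h1 := g_sin h.1 h.2
  have h2 : g t n = -(conj (z t) * ze t n).im / Real.sin t := by field_simp; linarith
  have h3 : ‖ze t n‖ ^ 2 = (ze t n).re ^ 2 + (ze t n).im ^ 2 := by
    rw [← Complex.normSq_eq_norm_sq, Complex.normSq_apply]; ring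
  rw [h2, h3]
  simp only [Complex.mul_re, Complex.mul_im, Complex.conj_re, Complex.conj_im, z_re, z_im, sq]
  field_simp; ring

lemma ze_lower {t : ℝ} {n : ℕ} (h : Good t n) : Real.pi ^ 2 / 4 ≤ ‖ze t n‖ ^ 2 := by
  rw [norm_ze_sq h.1 h.2]; nlinarith [sq_nonneg (r t n)]

lemma W_ne {t : ℝ} {n : ℕ} (h : Good t n) : 0 < ‖W t n‖ ∧ 0 < ‖V t n‖ := by
  have h1 := norm_WV h.2
  have h2 : 0 < (x0 t n) ^ 2 * ‖ze t n‖ ^ 2 :=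
    mul_pos (by have := h.2; positivity) (lt_of_lt_of_le (by have := Real.pi_pos; positivity) (ze_lower h))
  rw [← h1] at h2
  constructor
  · exact pos_of_mul_pos_left h2 (norm_nonneg _)
  · exact pos_of_mul_pos_right h2 (norm_nonneg _)

lemma W_dir {t : ℝ} {n : ℕ} (h : Good t n) : W t n * (‖ze t n‖ ^ 2 : ℝ) = (‖W t n‖ : ℂ) * (ze t n * rh t n) := by
  have h1 := norm_WV h.2
  have h2 := W_V (n := n) (θ := t) h.2
  have hV : (‖V t n‖ : ℂ) ≠ 0 := by exact_mod_cast (W_ne h).2.ne'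
  have hx : (x0 t n : ℂ) ≠ 0 := by exact_mod_cast h.2
  have h3 : (‖W t n‖ : ℂ) * ‖V t n‖ = (x0 t n : ℂ) ^ 2 * (‖ze t n‖ : ℂ) ^ 2 := by exact_mod_cast h1
  push_cast
  apply mul_right_cancel₀ (mul_ne_zero hV (pow_ne_zero 2 hx))
  linear_combination (x0 t n : ℂ) ^ 2 * ‖ze t n‖ ^ 2 * h2 - (x0 t n : ℂ) ^ 2 * ze t n * rh t n * h3

lemma hasDerivAt_logW {t : ℝ} {n : ℕ} (h : Good t n) :
    HasDerivAt (fun s => Real.log ‖W s n‖)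
      (-(4 / Real.pi) * g t n * (r t n * (ze t n).re - Real.pi / 2 * (ze t n).im) / ‖ze t n‖ ^ 2) t := by
  have h1 := hasDerivAt_W h.1
  have hre : HasDerivAt (fun s => (W s n).re) _ t := Complex.reCLM.hasFDerivAt.comp_hasDerivAt t h1
  have him : HasDerivAt (fun s => (W s n).im) _ t := Complex.imCLM.hasFDerivAt.comp_hasDerivAt t h1
  have hW := (W_ne h).1
  have hne : (W t n).re ^ 2 + (W t n).im ^ 2 = ‖W t n‖ ^ 2 := by
    rw [← Complex.normSq_eq_norm_sq, Complex.normSq_apply]; ring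
  have h2 := (((hre.pow 2).add (him.pow 2)).log (by
    simp only [Pi.add_apply, Pi.pow_apply]; rw [hne]; positivity)).const_mul (1 / 2)
  have e : (fun s => Real.log ‖W s n‖) = fun s => 1 / 2 * Real.log ((W s n).re ^ 2 + (W s n).im ^ 2) := by
    funext s
    have : (W s n).re ^ 2 + (W s n).im ^ 2 = ‖W s n‖ ^ 2 := by
      rw [← Complex.normSq_eq_norm_sq, Complex.normSq_apply]; ring
    rw [this, Real.log_pow]; push_cast; ring
  rw [e]
  refine h2.congr_deriv ?_
  simp only [Pi.add_apply, Pi.pow_apply]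
  rw [hne]
  have h3 := congrArg Complex.re (W_dir h)
  rw [Complex.re_mul_ofReal, Complex.re_ofReal_mul, rh_eq h.1 h.2] at h3
  have h4 : (ze t n * ((r t n : ℂ) + (Real.pi / 2 : ℝ) * I)).re = r t n * (ze t n).re - Real.pi / 2 * (ze t n).im := by
    simp [Complex.mul_re]; ring
  rw [h4] at h3
  have hz : 0 < ‖ze t n‖ ^ 2 := lt_of_lt_of_le (by have := Real.pi_pos; positivity) (ze_lower h)
  have hW0 := hW.ne'
  have hz0 : ‖ze t n‖ ≠ 0 := fun h0 => by rw [h0] at hz; norm_num at hz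
  have h5 : (r t n * (ze t n).re - Real.pi / 2 * (ze t n).im) / ‖ze t n‖ ^ 2 = (W t n).re / ‖W t n‖ := by
    rw [div_eq_div_iff hz.ne' hW0]; linarith
  rw [mul_div_assoc, h5]
  have h6 : ((n : ℂ) + 1) = (((n : ℝ) + 1 : ℝ) : ℂ) := by push_cast; ring
  rw [h6]
  simp only [Complex.reCLM_apply, Complex.imCLM_apply, Complex.sub_re, Complex.sub_im, Complex.neg_re, Complex.neg_im,
    Complex.ofReal_re, Complex.ofReal_im, Complex.mul_re, Complex.mul_im, Complex.I_re, Complex.I_im]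
  have := Real.pi_ne_zero
  field_simp
  push_cast
  ring

lemma sin_ge {b t : ℝ} (hb : b < Real.pi) (ht : t ∈ Set.Icc (Real.pi / 2) b) : Real.sin b ≤ Real.sin t := by
  rw [← Real.sin_pi_sub b, ← Real.sin_pi_sub t]
  apply Real.sin_le_sin_of_le_of_le_pi_div_two <;> linarith [ht.1, ht.2, Real.pi_pos]

set_option maxHeartbeats 2000000 in
theorem asym (b : ℝ) (hb0 : Real.pi / 2 ≤ b) (hb : b < Real.pi) : ∃ C : ℝ, ∃ n0 : ℕ, 1 ≤ n0 ∧ ∀ n ≥ n0, Base n →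
    Good b n ∧ |r b n| ≤ C / n ∧ ‖ze b n * z b ^ n - ((Real.pi / 2 : ℝ) : ℂ)‖ ≤ C / n ∧
    |Real.log (E b (n + 1)) - Real.log (E (Real.pi / 2) (n + 1)) - 1 / 2 * Real.log (Real.sin b)| ≤ C / n ∧
    |Real.log ‖W b n‖ - Real.log ‖W (Real.pi / 2) n‖ + Real.log (Real.sin b)| ≤ C / n ∧ 0 < E b (n + 1) := by
  have hpi := Real.pi_pos
  have hpi3 := Real.pi_gt_three
  set a := Real.pi / 2 with ha
  set σ := Real.sin b with hσd
  have hσ : 0 < σ := Real.sin_pos_of_pos_of_lt_pi (by linarith) hb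
  have hσ1 : σ ≤ 1 := Real.sin_le_one b
  have hlen : b - a ≤ Real.pi / 2 := by rw [ha]; linarith
  have hlen2 : b - a ≤ 2 := by have := Real.pi_lt_d2; linarith
  have hs : ∀ t ∈ Set.Icc a b, σ ≤ Real.sin t := fun t ht => sin_ge hb ht
  have hs0 : ∀ t ∈ Set.Icc a b, Real.sin t ≠ 0 := fun t ht => (hσ.trans_le (hs t ht)).ne'
  have hcs : ∀ t ∈ Set.Icc a b, ContDiffAt ℝ 1 (fun t : ℝ => (1 / (Real.pi * Real.sin t ^ 2) : ℝ)) t := fun t ht =>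
    contDiffAt_const.div (contDiffAt_const.mul (Real.contDiff_sin.contDiffAt.pow 2))
      (mul_ne_zero hpi.ne' (pow_ne_zero 2 (hs0 t ht)))
  have hcs2 : ∀ t ∈ Set.Icc a b, ContDiffAt ℝ 1 (fun t : ℝ => (4 / (Real.pi ^ 2 * Real.sin t) : ℝ)) t := fun t ht =>
    contDiffAt_const.div (contDiffAt_const.mul (Real.contDiff_sin.contDiffAt))
      (mul_ne_zero (by positivity) (hs0 t ht))
  obtain ⟨M1, hM1, hb1⟩ := c1_bound (fun t => conj (z t) ^ 2 * ((1 / (Real.pi * Real.sin t ^ 2) : ℝ) : ℂ)) (a := a) (b := b)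
    (fun t ht => (contDiff_zbar.contDiffAt.pow 2).mul (Complex.ofRealCLM.contDiff.contDiffAt.comp t (hcs t ht)))
  obtain ⟨M2, hM2, hb2⟩ := c1_bound (fun t => conj (z t) * ((4 / (Real.pi ^ 2 * Real.sin t) : ℝ) : ℂ)) (a := a) (b := b)
    (fun t ht => (contDiff_zbar.contDiffAt).mul (Complex.ofRealCLM.contDiff.contDiffAt.comp t (hcs2 t ht)))
  set K := 7 / σ ^ 2 with hK
  have hK0 : 0 < K := by positivity
  set C1 := (8 / (3 * σ) + 4 / 3) * K with hC1
  have hC10 : 0 < C1 := by positivity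
  set C2 := C1 + K / σ ^ 2 with hC2
  have hC20 : 0 < C2 := by positivity
  set CA := 2 * C2 + 8 * M1 + 4 * M1 * C2 with hCA
  have hCA0 : 0 < CA := by positivity
  set C3 := C1 + (16 / (3 * σ) + 1 / σ) * K with hC3
  have hC30 : 0 < C3 := by positivity
  set CW := 2 * C3 + 8 * M2 + 4 * M2 * C3 with hCW
  have hCW0 : 0 < CW := by positivity
  refine ⟨K + 2 * C1 + 2 * CA + CW, ⌈K⌉₊ + 1, by omega, fun n hn hB => ?_⟩
  obtain ⟨hG0, hr0, hA0, hz0, hE0⟩ := hB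
  have hn1 : 1 ≤ n := by omega
  have hnp : (0 : ℝ) < n := by exact_mod_cast hn1
  have hKn : K < n := by
    have h1 := Nat.le_ceil K
    have h2 : ((⌈K⌉₊ + 1 : ℕ) : ℝ) ≤ n := by exact_mod_cast hn
    push_cast at h2
    linarith
  have hKn' : 7 / (σ ^ 2 * ((n : ℝ) + 1)) ≤ K / n := by
    rw [← div_div, ← hK]
    gcongr
    linarith
  have hKlt : K / n < 1 := by rw [div_lt_one hnp]; exact hKn
  have hboot := bootstrap hσ hσ1 hs hlen (hKn'.trans_lt hKlt) hG0 hr0 hA0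
  have hG : ∀ t ∈ Set.Icc a b, Good t n := fun t ht => (hboot t ht).1
  have hrK : ∀ t ∈ Set.Icc a b, |r t n| ≤ K / n := fun t ht => (hboot t ht).2.trans hKn'
  have hr1 : ∀ t ∈ Set.Icc a b, |r t n| ≤ 1 := fun t ht => (hrK t ht).trans hKlt.le
  have hrsq : ∀ t ∈ Set.Icc a b, r t n ^ 2 ≤ K / n := fun t ht => by
    rw [← sq_abs]; nlinarith [hrK t ht, hr1 t ht, abs_nonneg (r t n)]
  have hz2 : ∀ t ∈ Set.Icc a b, ‖ze t n‖ ≤ 2 := fun t ht => norm_ze_lt (hG t ht) (hr1 t ht)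
  have hgb : ∀ t ∈ Set.Icc a b, |g t n| ≤ 2 / σ := fun t ht => g_bound hσ (hs t ht) (hG t ht) (hr1 t ht)
  have hbm : b ∈ Set.Icc a b := ⟨hb0, le_rfl⟩
  have ham : a ∈ Set.Icc a b := ⟨le_rfl, hb0⟩
  set e : ℝ → ℂ := fun t => - ((4 / Real.pi * g t n * r t n : ℝ) : ℂ) + ((2 / Real.pi * r t n : ℝ) : ℂ) * ze t n with he
  have heb : ∀ t ∈ Set.Icc a b, ‖e t‖ ≤ C1 / n := by
    intro t ht
    refine (norm_add_le _ _).trans ?_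
    rw [norm_neg, norm_mul, Complex.norm_real, Complex.norm_real, Real.norm_eq_abs, Real.norm_eq_abs, abs_mul, abs_mul, abs_mul,
      abs_of_pos (by positivity : 0 < 4 / Real.pi), abs_of_pos (by positivity : 0 < 2 / Real.pi)]
    have h1 := hgb t ht
    have h2 := hrK t ht
    have h3 := hz2 t ht
    calc 4 / Real.pi * |g t n| * |r t n| + 2 / Real.pi * |r t n| * ‖ze t n‖
        ≤ 4 / 3 * (2 / σ) * (K / n) + 2 / 3 * (K / n) * 2 := by gcongr
      _ = C1 / n := by rw [hC1]; field_simp; ring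
  have hzd : ∀ t ∈ Set.Icc a b, HasDerivAt (fun t => ze t n) (-(I * n * ze t n) + e t) t := by
    intro t ht
    refine (hasDerivAt_ze (hG t ht).1 (hG t ht).2).congr_deriv ?_
    rw [he]; ring
  -- A
  have hAb : ∀ t ∈ Set.Icc a b, |(A t (n + 1) - Real.pi / 4 * (Real.cos t / Real.sin t)) - (A a (n + 1) - Real.pi / 4 * (Real.cos a / Real.sin a))| ≤ CA / n := by
    refine osc hn1 (fun t => ze t n) e _ _ (fun t => A t (n + 1) - Real.pi / 4 * (Real.cos t / Real.sin t))
      (fun t => -(2 / Real.pi) * (g t n) ^ 2 + Real.pi / 4 * (1 / Real.sin t ^ 2)) hb0 hlen2 hC20.le hM1 hzd hz2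
      (fun t ht => (heb t ht).trans ?_) (fun t ht => (hb1 t ht).1) (fun t ht => (hb1 t ht).2.1) (fun t ht => (hb1 t ht).2.2)
      (fun t ht => ?_) (fun t ht => ?_)
    · gcongr
      rw [hC2]; linarith [show 0 < K / σ ^ 2 by positivity]
    · refine ((hasDerivAt_A (hG t ht).1).sub (((Real.hasDerivAt_cos t).div (Real.hasDerivAt_sin t) (hs0 t ht)).const_mul (Real.pi / 4))).congr_deriv ?_
      have := Real.sin_sq_add_cos_sq t
      have h2 : -Real.sin t * Real.sin t - Real.cos t * Real.cos t = -1 := by linarith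
      rw [h2]; ring
    · have e1 : -(2 / Real.pi) * (g t n) ^ 2 + Real.pi / 4 * (1 / Real.sin t ^ 2) -
          (conj (z t) ^ 2 * ((1 / (Real.pi * Real.sin t ^ 2) : ℝ) : ℂ) * ze t n ^ 2).re = - (r t n ^ 2 * (1 / (Real.pi * Real.sin t ^ 2))) := by
        have : conj (z t) ^ 2 * ((1 / (Real.pi * Real.sin t ^ 2) : ℝ) : ℂ) * ze t n ^ 2 = ((1 / (Real.pi * Real.sin t ^ 2) : ℝ) : ℂ) * (conj (z t) ^ 2 * ze t n ^ 2) := by ring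
        rw [this, Complex.re_ofReal_mul, g_sq (hG t ht) (hs0 t ht), norm_ze_sq (hG t ht).1 (hG t ht).2]
        have := hs0 t ht
        field_simp
        ring
      rw [e1, abs_neg, abs_of_nonneg (by positivity)]
      calc r t n ^ 2 * (1 / (Real.pi * Real.sin t ^ 2)) ≤ (K / n) * (1 / (1 * σ ^ 2)) := by
            gcongr
            · exact hrsq t ht
            · linarith
            · exact hs t ht
        _ = K / σ ^ 2 / n := by field_simp
        _ ≤ C2 / n := by gcongr; rw [hC2]; linarith
  have hAb' : ∀ t ∈ Set.Icc a b, |A t (n + 1) - Real.pi / 4 * (Real.cos t / Real.sin t)| ≤ CA / n := by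
    intro t ht
    have := hAb t ht
    rw [hA0, ha, Real.cos_pi_div_two] at this
    simpa using this
  have hEd : |(Real.log (E b (n + 1)) - 1 / 2 * Real.log (Real.sin b)) - (Real.log (E a (n + 1)) - 1 / 2 * Real.log (Real.sin a))| ≤ CA / n * (b - a) := by
    refine mvt (fun t => Real.log (E t (n + 1)) - 1 / 2 * Real.log (Real.sin t))
      (fun t => 2 / Real.pi * (A t (n + 1) - Real.pi / 4 * (Real.cos t / Real.sin t))) (fun t ht => ?_) (fun t ht => ?_) hbm
    · refine (((hasDerivAt_E (hG t ht).1).log (hG t ht).1).sub (((Real.hasDerivAt_sin t).log (hs0 t ht)).const_mul (1 / 2))).congr_deriv ?_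
      have := (hG t ht).1
      have := hs0 t ht
      field_simp
      ring
    · rw [Real.norm_eq_abs, abs_mul, abs_of_pos (by positivity : 0 < 2 / Real.pi)]
      have h1 : 2 / Real.pi ≤ 1 := by rw [div_le_one hpi]; linarith
      calc _ ≤ 1 * (CA / n) := by
            gcongr
            exact hAb' t ht
        _ = _ := one_mul _
  have hWd : |(Real.log ‖W b n‖ + Real.log (Real.sin b)) - (Real.log ‖W a n‖ + Real.log (Real.sin a))| ≤ CW / n := by
    refine osc hn1 (fun t => ze t n) e _ _ (fun t => Real.log ‖W t n‖ + Real.log (Real.sin t))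
      (fun t => -(4 / Real.pi) * g t n * (r t n * (ze t n).re - Real.pi / 2 * (ze t n).im) / ‖ze t n‖ ^ 2 + Real.cos t / Real.sin t)
      hb0 hlen2 hC30.le hM2 hzd hz2
      (fun t ht => (heb t ht).trans ?_) (fun t ht => (hb2 t ht).1) (fun t ht => (hb2 t ht).2.1) (fun t ht => (hb2 t ht).2.2)
      (fun t ht => ?_) (fun t ht => ?_) b hbm
    · gcongr
      rw [hC3]; linarith [show 0 < (16 / (3 * σ) + 1 / σ) * K by positivity]
    · exact (hasDerivAt_logW (hG t ht)).add ((Real.hasDerivAt_sin t).log (hs0 t ht))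
    · have hz := ze_lower (hG t ht)
      have hzp : 0 < ‖ze t n‖ ^ 2 := lt_of_lt_of_le (by positivity) hz
      have hzne : ‖ze t n‖ ≠ 0 := fun h0 => by rw [h0] at hzp; norm_num at hzp
      have e1 : -(4 / Real.pi) * g t n * (r t n * (ze t n).re - Real.pi / 2 * (ze t n).im) / ‖ze t n‖ ^ 2 + Real.cos t / Real.sin t -
          (conj (z t) * ((4 / (Real.pi ^ 2 * Real.sin t) : ℝ) : ℂ) * ze t n ^ 2).re =
          - (4 / Real.pi * g t n * r t n * (ze t n).re / ‖ze t n‖ ^ 2)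
            - (conj (z t) * ze t n ^ 2).re / Real.sin t * (r t n ^ 2 * 4 / (‖ze t n‖ ^ 2 * Real.pi ^ 2)) := by
        have : conj (z t) * ((4 / (Real.pi ^ 2 * Real.sin t) : ℝ) : ℂ) * ze t n ^ 2 = ((4 / (Real.pi ^ 2 * Real.sin t) : ℝ) : ℂ) * (conj (z t) * ze t n ^ 2) := by ring
        rw [this, Complex.re_ofReal_mul]
        have h1 := g_im (hG t ht) (hs0 t ht)
        have h2 := norm_ze_sq (hG t ht).1 (hG t ht).2
        have h3 : r t n ^ 2 = ‖ze t n‖ ^ 2 - (Real.pi / 2) ^ 2 := by linarith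
        have h4 : -(4 / Real.pi) * g t n * (r t n * (ze t n).re - Real.pi / 2 * (ze t n).im) =
           -(4 / Real.pi) * g t n * r t n * (ze t n).re + 2 * (g t n * (ze t n).im) := by field_simp; ring
        rw [h4, h1, h3]
        have := hs0 t ht
        field_simp
        ring
      rw [e1]
      refine (abs_sub _ _).trans ?_
      rw [abs_neg, abs_mul (_ / _), abs_of_nonneg (by positivity : 0 ≤ r t n ^ 2 * 4 / (‖ze t n‖ ^ 2 * Real.pi ^ 2)), abs_div, abs_div,
        abs_of_pos hzp, abs_of_pos (hσ.trans_le (hs t ht)), abs_mul, abs_mul, abs_mul, abs_of_pos (by positivity : 0 < 4 / Real.pi)]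
      have t1 : 4 / Real.pi * |g t n| * |r t n| * |(ze t n).re| / ‖ze t n‖ ^ 2 ≤ 16 / (3 * σ) * K / n := by
        have h1 := hgb t ht
        have h2 := hrK t ht
        have h3 := (Complex.abs_re_le_norm _).trans (hz2 t ht)
        have h4 : 1 ≤ ‖ze t n‖ ^ 2 := by nlinarith
        calc _ ≤ 4 / 3 * (2 / σ) * (K / n) * 2 / 1 := by gcongr
          _ = _ := by field_simp; norm_num
      have t2 : |(conj (z t) * ze t n ^ 2).re| / Real.sin t * (r t n ^ 2 * 4 / (‖ze t n‖ ^ 2 * Real.pi ^ 2)) ≤ 1 / σ * K / n := by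
        have h1 : |(conj (z t) * ze t n ^ 2).re| ≤ ‖ze t n‖ ^ 2 := by
          refine (Complex.abs_re_le_norm _).trans ?_
          rw [norm_mul, RCLike.norm_conj, norm_z, one_mul, norm_pow]
        have h2 : r t n ^ 2 * 4 / (‖ze t n‖ ^ 2 * Real.pi ^ 2) ≤ (K / n) / ‖ze t n‖ ^ 2 := by
          rw [div_le_div_iff₀ (by positivity) hzp]
          have h5 := hrsq t ht
          have h6 : 4 ≤ Real.pi ^ 2 := by nlinarith
          have h7 : r t n ^ 2 * 4 ≤ (K / n) * Real.pi ^ 2 := by gcongr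
          calc _ ≤ (K / n) * Real.pi ^ 2 * ‖ze t n‖ ^ 2 := by gcongr
            _ = _ := by ring
        calc _ ≤ ‖ze t n‖ ^ 2 / σ * ((K / n) / ‖ze t n‖ ^ 2) := by
              have := hs t ht
              gcongr
          _ = _ := by field_simp
      calc _ ≤ 16 / (3 * σ) * K / n + 1 / σ * K / n := add_le_add t1 t2
        _ = (16 / (3 * σ) + 1 / σ) * K / n := by ring
        _ ≤ C3 / n := by gcongr; rw [hC3]; linarith
  have hzb : ‖ze b n * z b ^ n - ze a n * z a ^ n‖ ≤ C1 / n * (b - a) := by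
    refine mvt (fun t => ze t n * z t ^ n) (fun t => e t * z t ^ n) (fun t ht => ?_) (fun t ht => ?_) hbm
    · refine ((hzd t ht).mul ((hasDerivAt_z t).pow n)).congr_deriv ?_
      simp only [Pi.pow_apply]
      obtain ⟨m, rfl⟩ : ∃ m, n = m + 1 := ⟨n - 1, by omega⟩
      simp only [Nat.add_sub_cancel]
      ring
    · rw [norm_mul, norm_pow, norm_z, one_pow, mul_one]
      exact heb t ht
  have hba : 0 ≤ b - a := by linarith
  have hsa : Real.log (Real.sin a) = 0 := by rw [ha, Real.sin_pi_div_two, Real.log_one]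
  rw [hsa] at hEd hWd
  refine ⟨hG b hbm, (hrK b hbm).trans ?_, ?_, ?_, ?_, ?_⟩
  · gcongr; linarith
  · rw [hz0] at hzb
    refine hzb.trans ?_
    calc C1 / n * (b - a) ≤ C1 / n * 2 := by gcongr
      _ = 2 * C1 / n := by ring
      _ ≤ _ := by gcongr; linarith
  · have h1 : Real.log (E b (n + 1)) - Real.log (E a (n + 1)) - 1 / 2 * Real.log (Real.sin b) = (Real.log (E b (n + 1)) - 1 / 2 * Real.log (Real.sin b)) - (Real.log (E a (n + 1)) - 1 / 2 * 0) := by ring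
    rw [h1]
    refine hEd.trans ?_
    calc CA / n * (b - a) ≤ CA / n * 2 := by gcongr
      _ = 2 * CA / n := by ring
      _ ≤ _ := by gcongr; linarith
  · have h1 : Real.log ‖W b n‖ - Real.log ‖W a n‖ + Real.log (Real.sin b) = (Real.log ‖W b n‖ + Real.log (Real.sin b)) - (Real.log ‖W a n‖ + 0) := by ring
    rw [h1]
    refine hWd.trans ?_
    gcongr; linarith
  · by_contra hneg
    have hivt := intermediate_value_Icc' hb0 (continuous_E (n + 1)).continuousOn
    obtain ⟨t, ht, hte⟩ := hivt ⟨not_lt.mp hneg, hE0.le⟩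
    exact (hG t ht).1 hte

end
end XXString

namespace XXString
open Matrix Complex ComplexConjugate

noncomputable section

lemma cauchy_inj {ι : Type*} [DecidableEq ι] (s : Finset ι) (x y w : ι → ℝ) (hx : Set.InjOn x s) (hy : Set.InjOn y s)
    (hxy : ∀ i ∈ s, ∀ j ∈ s, y j - x i ≠ 0) (h : ∀ i ∈ s, ∑ j ∈ s, w j / (y j - x i) = 0) :
    ∀ j ∈ s, w j = 0 := by
  classical
  intro k hk
  set P : Polynomial ℝ := ∑ k ∈ s, Polynomial.C (w k) * ∏ l ∈ s.erase k, (Polynomial.C (y l) - Polynomial.X) with hP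
  have hev : ∀ t : ℝ, P.eval t = ∑ k ∈ s, w k * ∏ l ∈ s.erase k, (y l - t) := by
    intro t
    simp [hP, Polynomial.eval_finsetSum, Polynomial.eval_prod]
  have hdeg : P.natDegree ≤ s.card - 1 := by
    refine Polynomial.natDegree_sum_le_of_forall_le s _ fun j hj => ?_
    refine (Polynomial.natDegree_C_mul_le _ _).trans ?_
    refine (Polynomial.natDegree_prod_le _ _).trans ?_
    rw [← Finset.card_erase_of_mem hj]
    refine (Finset.sum_le_card_nsmul _ _ 1 fun l _ => ?_).trans (by simp)
    refine (Polynomial.natDegree_sub_le _ _).trans ?_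
    simp
  have hc : 0 < s.card := Finset.card_pos.mpr ⟨k, hk⟩
  have hdeg2 : P.degree < s.card := by
    refine lt_of_le_of_lt Polynomial.degree_le_natDegree ?_
    exact_mod_cast (by omega : P.natDegree < s.card)
  have hP0 : P = 0 := by
    refine Polynomial.eq_zero_of_degree_lt_of_eval_index_eq_zero s hx hdeg2 fun i hi => ?_
    rw [hev]
    have h1 : ∑ j ∈ s, w j * ∏ l ∈ s.erase j, (y l - x i) = (∏ l ∈ s, (y l - x i)) * ∑ j ∈ s, w j / (y j - x i) := by
      rw [Finset.mul_sum]
      refine Finset.sum_congr rfl fun j hj => ?_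
      rw [← Finset.mul_prod_erase s _ hj]
      have := hxy i hi j hj
      field_simp
    rw [h1, h i hi, mul_zero]
  have h2 := hev (y k)
  rw [hP0, Polynomial.eval_zero, Finset.sum_eq_single k] at h2
  · have h3 : ∏ l ∈ s.erase k, (y l - y k) ≠ 0 := by
      rw [Finset.prod_ne_zero_iff]
      intro l hl
      rw [Finset.mem_erase] at hl
      rw [sub_ne_zero]
      intro h4
      exact hl.1 (hy hl.2 hk h4)
    rcases mul_eq_zero.mp h2.symm with h | h
    · exact h
    · exact absurd h h3
  · intro j hj hjk
    rw [Finset.prod_eq_zero (i := k) (Finset.mem_erase.mpr ⟨hjk.symm, hk⟩) (by simp), mul_zero]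
  · intro h; exact absurd hk h

lemma cf_half_odd {m : ℤ} (h : m ≠ 0) (he : Even m) : cf (Real.pi / 2) m = 0 := by
  obtain ⟨d, rfl⟩ := he
  rw [cf, if_neg h]
  have : (((d + d : ℤ) : ℝ)) * (Real.pi / 2) = d * Real.pi := by push_cast; ring
  rw [this, Real.sin_int_mul_pi, mul_zero]

lemma cf_half_even (i k : ℕ) (h : i % 2 = k % 2) : cf (Real.pi / 2) ((i : ℤ) - k - 1) =
    2 / Real.pi * ((-1) ^ (i / 2) * (-1) ^ (k / 2)) / (((k : ℝ) + 1) - i) := by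
  have h0 : ((i : ℤ) - k - 1) ≠ 0 := by omega
  have h0' : ((k : ℝ) + 1) - i ≠ 0 := by
    have : ((-((i : ℤ) - k - 1) : ℤ) : ℝ) ≠ 0 := by exact_mod_cast neg_ne_zero.mpr h0
    intro h; apply this; push_cast; linarith
  rw [cf, if_neg h0]
  have hd : (i : ℤ) - k = 2 * (((i / 2 : ℕ) : ℤ) - ((k / 2 : ℕ) : ℤ)) := by omega
  have hd' : (i : ℝ) - k = 2 * (((i / 2 : ℕ) : ℝ) - ((k / 2 : ℕ) : ℝ)) := by exact_mod_cast hd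
  have e : (((i : ℤ) - k - 1 : ℤ) : ℝ) * (Real.pi / 2) =
      ((((i / 2 : ℕ) : ℤ) - ((k / 2 : ℕ) : ℤ) : ℤ) : ℝ) * Real.pi - Real.pi / 2 := by
    rw [Int.cast_sub, Int.cast_sub, Int.cast_sub, Int.cast_natCast, Int.cast_natCast, Int.cast_natCast,
      Int.cast_natCast, hd']
    push_cast
    ring
  rw [e, Real.sin_sub_pi_div_two, Real.cos_int_mul_pi]
  rw [zpow_sub₀ (by norm_num)]
  simp only [zpow_natCast]
  have e2 : (-1 : ℝ) ^ (i / 2) / (-1) ^ (k / 2) = (-1) ^ (i / 2) * (-1) ^ (k / 2) := by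
    rw [div_eq_mul_inv, ← inv_pow]; norm_num
  rw [e2]
  push_cast
  have h1 : (i : ℝ) - k - 1 ≠ 0 := by intro h; apply h0'; linarith
  have := Real.pi_ne_zero
  field_simp
  ring

lemma S_odd {N : ℕ} (i k : Fin N) (h : (i : ℕ) % 2 ≠ (k : ℕ) % 2) : S (Real.pi / 2) N i k = 0 := by
  rw [S, Matrix.of_apply]
  by_cases h0 : ((i : ℤ) - (k : ℤ) - 1) = 0
  · rw [h0, cf, if_pos rfl]
    have := Real.pi_ne_zero
    field_simp; ring
  · apply cf_half_odd h0
    rw [Int.even_iff]; omega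

lemma E_half_ne (N : ℕ) : E (Real.pi / 2) N ≠ 0 := by
  intro hE
  obtain ⟨v, hv0, hv⟩ := Matrix.exists_mulVec_eq_zero_iff.mpr hE
  apply hv0
  funext k
  set s : Finset (Fin N) := Finset.univ.filter fun i => (i : ℕ) % 2 = (k : ℕ) % 2 with hs
  have key := cauchy_inj s (fun i => (i : ℝ)) (fun i => (i : ℝ) + 1) (fun i => (-1) ^ ((i : ℕ) / 2) * v i)
    (fun i _ j _ h => by ext; simpa using h) (fun i _ j _ h => by ext; simpa using h)
    (fun i hi j hj h => by
      simp only [hs, Finset.mem_filter, Finset.mem_univ, true_and] at hi hj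
      have h' : (j : ℕ) + 1 = (i : ℕ) := by
        have : (j : ℝ) + 1 = i := by linarith
        exact_mod_cast this
      omega)
    (fun i hi => by
      have h1 := congrFun hv i
      simp only [Matrix.mulVec, dotProduct, Pi.zero_apply] at h1
      have hi' : (i : ℕ) % 2 = (k : ℕ) % 2 := by simpa [hs] using hi
      have h2 : ∑ j, S (Real.pi / 2) N i j * v j = ∑ j ∈ s, S (Real.pi / 2) N i j * v j := by
        rw [hs, Finset.sum_filter]
        refine Finset.sum_congr rfl fun j _ => ?_
        split_ifs with hj
        · rfl
        · rw [S_odd i j (by omega), zero_mul]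
      rw [h2] at h1
      have h3 : ∑ j ∈ s, S (Real.pi / 2) N i j * v j = (2 / Real.pi * (-1) ^ ((i : ℕ) / 2)) *
          ∑ j ∈ s, (-1) ^ ((j : ℕ) / 2) * v j / ((j : ℝ) + 1 - i) := by
        rw [Finset.mul_sum]
        refine Finset.sum_congr rfl fun j hj => ?_
        have hj' : (j : ℕ) % 2 = (k : ℕ) % 2 := by simpa [hs] using hj
        rw [S, Matrix.of_apply, cf_half_even _ _ (by omega)]
        ring
      rw [h3] at h1
      have : (2 / Real.pi * (-1) ^ ((i : ℕ) / 2)) ≠ 0 :=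
        mul_ne_zero (div_ne_zero two_ne_zero Real.pi_ne_zero) (pow_ne_zero _ (by norm_num))
      exact (mul_eq_zero.mp h1).resolve_left this)
    k (by simp [hs])
  exact (mul_eq_zero.mp key).resolve_left (pow_ne_zero _ (by norm_num))

lemma B_odd {N : ℕ} (i k : Fin N) (h : (i : ℕ) % 2 ≠ (k : ℕ) % 2) : B (Real.pi / 2) N i k = 0 := by
  set Dg : Matrix (Fin N) (Fin N) ℝ := Matrix.diagonal fun i => (-1 : ℝ) ^ (i : ℕ) with hD
  have hcomm : Dg * S (Real.pi / 2) N = S (Real.pi / 2) N * Dg := by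
    ext a b
    rw [hD, Matrix.diagonal_mul, Matrix.mul_diagonal]
    by_cases hab : (a : ℕ) % 2 = (b : ℕ) % 2
    · have : (-1 : ℝ) ^ (a : ℕ) = (-1) ^ (b : ℕ) := by
        rw [neg_one_pow_eq_pow_mod_two, hab, ← neg_one_pow_eq_pow_mod_two]
      rw [this, mul_comm]
    · rw [S_odd a b hab]; simp
  have hB : B (Real.pi / 2) N * Dg = Dg * B (Real.pi / 2) N := by
    have h1 := B_mul_S (E_half_ne N)
    have h2 := S_mul_B (E_half_ne N)
    calc B (Real.pi / 2) N * Dg = B (Real.pi / 2) N * (Dg * (S (Real.pi / 2) N * B (Real.pi / 2) N)) := by rw [h2, Matrix.mul_one]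
      _ = (B (Real.pi / 2) N * (Dg * S (Real.pi / 2) N)) * B (Real.pi / 2) N := by simp only [Matrix.mul_assoc]
      _ = _ := by rw [hcomm, ← Matrix.mul_assoc, h1, Matrix.one_mul]
  have h3 := congrFun (congrFun hB i) k
  rw [hD, Matrix.diagonal_mul, Matrix.mul_diagonal] at h3
  rw [neg_one_pow_eq_pow_mod_two, neg_one_pow_eq_pow_mod_two (n := (i : ℕ))] at h3
  rcases Nat.mod_two_eq_zero_or_one (i : ℕ) with hi | hi <;> rcases Nat.mod_two_eq_zero_or_one (k : ℕ) with hk | hk <;>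
    rw [hi, hk] at h3 <;> first | omega | (norm_num at h3; linarith)

lemma z_half : z (Real.pi / 2) = I := by
  rw [z]; push_cast; exact Complex.exp_pi_div_two_mul_I

lemma conj_I_pow {j : ℕ} (h : j % 2 = 0) : conj (I ^ j) = I ^ j := by
  obtain ⟨m, rfl⟩ : ∃ m, j = 2 * m := ⟨j / 2, by omega⟩
  rw [pow_mul, Complex.I_sq]; simp

lemma conj_p_half (n : ℕ) : conj (p (Real.pi / 2) n) = p (Real.pi / 2) n := by
  rw [p, Y, map_sum, z_half]
  refine Finset.sum_congr rfl fun j _ => ?_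
  by_cases hj : (j : ℕ) % 2 = 0
  · rw [map_mul, conj_I_pow hj, Complex.conj_ofReal]
  · rw [B_odd j 0 (by simpa using hj)]; simp

lemma conj_q_half (n : ℕ) : conj (q (Real.pi / 2) n) = q (Real.pi / 2) n := by
  rw [q, X, map_sum, z_half]
  refine Finset.sum_congr rfl fun j _ => ?_
  by_cases hj : (j : ℕ) % 2 = 0
  · rw [map_mul, conj_I_pow hj, Complex.conj_ofReal]
  · rw [B_odd 0 j (by simp; omega)]; simp

lemma good_half (n : ℕ) : Good (Real.pi / 2) n := (good_iff _ _).mpr ⟨E_half_ne _, E_half_ne _⟩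

lemma x0_half_ne (n : ℕ) : x0 (Real.pi / 2) n ≠ 0 := (good_half n).2

lemma pq_half (n : ℕ) : p (Real.pi / 2) n * q (Real.pi / 2) n = ((Real.pi / 2 * x0 (Real.pi / 2) n : ℝ) : ℂ) := by
  have h1 := rh_im (good_half n).1 (good_half n).2
  have hx := x0_half_ne n
  rw [rh, z_half, conj_q_half] at h1
  obtain ⟨u, hu⟩ := Complex.conj_eq_iff_real.mp (conj_p_half n)
  obtain ⟨v, hv⟩ := Complex.conj_eq_iff_real.mp (conj_q_half n)
  rw [hu, hv] at h1 ⊢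
  rw [Complex.div_ofReal_im] at h1
  simp at h1
  norm_cast
  field_simp at h1 ⊢
  linarith

lemma r_half (n : ℕ) : r (Real.pi / 2) n = 0 := by
  rw [r, rh, z_half, conj_q_half, pq_half, Complex.div_ofReal_re]
  simp

lemma ze_half (n : ℕ) : ze (Real.pi / 2) n * z (Real.pi / 2) ^ n = ((Real.pi / 2 : ℝ) : ℂ) := by
  rw [ze, pq_half]
  have h1 := zzpow (Real.pi / 2) n
  have hx : (x0 (Real.pi / 2) n : ℂ) ≠ 0 := by exact_mod_cast x0_half_ne n
  push_cast
  field_simp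
  linear_combination h1

lemma A_half (n : ℕ) : A (Real.pi / 2) (n + 1) = 0 := by
  rw [A_eq (good_half n).1 (good_half n).2, r_half]
  have h1 := g_sin (good_half n).1 (good_half n).2
  rw [Real.sin_pi_div_two, mul_one] at h1
  have h2 : ze (Real.pi / 2) n = conj (I ^ n) * ((Real.pi / 2 : ℝ) : ℂ) := by
    have h3 := ze_half n
    rw [z_half] at h3
    have h4 := zzpow (Real.pi / 2) n
    rw [z_half] at h4
    rw [map_pow]
    linear_combination (conj I) ^ n * h3 - ze (Real.pi / 2) n * h4
  have h5 : conj (z (Real.pi / 2)) * ze (Real.pi / 2) n = conj (I ^ (n + 1)) * ((Real.pi / 2 : ℝ) : ℂ) := by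
    rw [h2, z_half]; simp only [map_pow]; ring
  rw [h5, Complex.im_mul_ofReal] at h1
  rw [h1, h2, Complex.im_mul_ofReal]
  rcases Nat.mod_two_eq_zero_or_one n with hn | hn
  · rw [Complex.conj_eq_iff_im.mp (show conj (conj (I ^ n)) = conj (I ^ n) by rw [Complex.conj_conj, conj_I_pow hn])]
    simp
  · rw [Complex.conj_eq_iff_im.mp (show conj (conj (I ^ (n + 1))) = conj (I ^ (n + 1)) by rw [Complex.conj_conj, conj_I_pow (by omega)])]
    simp


/-- recursion, even step -/
lemma rec_even {n : ℕ} (hn : n % 2 = 0) : p (Real.pi / 2) (n + 1) = p (Real.pi / 2) n ∧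
    x0 (Real.pi / 2) (n + 1) = x0 (Real.pi / 2) n := by
  have hy : yy (Real.pi / 2) (n + 1) = 0 := B_odd _ _ (by simp; omega)
  have h1 := p_rec (E_half_ne (n + 2)) (x0_half_ne (n + 1))
  have h2 := x0_rec (E_half_ne (n + 2)) (x0_half_ne (n + 1))
  rw [hy] at h1 h2
  simp at h1 h2
  exact ⟨h1.symm, h2.symm⟩

lemma rec_odd {n : ℕ} (hn : n % 2 = 1) : p (Real.pi / 2) (n + 1) = ((n + 2) / (n + 1) : ℝ) * p (Real.pi / 2) n ∧
    x0 (Real.pi / 2) (n + 1) = (n * (n + 2) / (n + 1) ^ 2 : ℝ) * x0 (Real.pi / 2) n := by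
  have h1 := p_rec (E_half_ne (n + 2)) (x0_half_ne (n + 1))
  have h2 := x0_rec (E_half_ne (n + 2)) (x0_half_ne (n + 1))
  have h3 := yy_eq (E_half_ne (n + 2))
  have h4 := yt_eq (E_half_ne (n + 2))
  have hpq := pq_half (n + 1)
  have hx := x0_half_ne (n + 1)
  have hpi := Real.pi_ne_zero
  have hn0 : (n : ℝ) ≠ 0 := by
    have : n ≠ 0 := by omega
    exact_mod_cast this
  have hn1 : (n : ℝ) + 1 ≠ 0 := by positivity
  have hn2 : (n : ℝ) + 2 ≠ 0 := by positivity
  rw [conj_q_half, z_half] at h1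
  obtain ⟨m, hm⟩ : ∃ m, n + 1 = 2 * m := ⟨(n + 1) / 2, by omega⟩
  have hI : I ^ (n + 1) = (((-1) ^ m : ℝ) : ℂ) := by rw [hm, pow_mul, Complex.I_sq]; simp
  have hI' : conj I ^ (n + 1) = (((-1) ^ m : ℝ) : ℂ) := by rw [← map_pow, hI, Complex.conj_ofReal]
  obtain ⟨u, hu⟩ := Complex.conj_eq_iff_real.mp (conj_p_half (n + 1))
  obtain ⟨v, hv⟩ := Complex.conj_eq_iff_real.mp (conj_q_half (n + 1))
  obtain ⟨w, hw⟩ := Complex.conj_eq_iff_real.mp (conj_p_half n)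
  have hm1 : ((-1 : ℝ) ^ m) * (-1) ^ m = 1 := by rw [← mul_pow]; norm_num
  generalize ((-1 : ℝ) ^ m) = ε at hI hI' hm1
  have hW : (W (Real.pi / 2) (n + 1)).im = ε * u ^ 2 := by
    rw [W, z_half, hI', hu]
    have : (ε : ℂ) * I * (u : ℂ) ^ 2 = ((ε * u ^ 2 : ℝ) : ℂ) * I := by push_cast; ring
    rw [this]; simp [-Complex.ofReal_mul, -Complex.ofReal_pow]
  have hV : (V (Real.pi / 2) (n + 1)).im = -(ε * v ^ 2) := by
    rw [V, z_half, pow_succ, hI', hv, Complex.conj_I]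
    have : (ε : ℂ) * -I * (v : ℂ) ^ 2 = ((-(ε * v ^ 2) : ℝ) : ℂ) * I := by push_cast; ring
    rw [this]; simp [-Complex.ofReal_mul, -Complex.ofReal_pow, -Complex.ofReal_neg]
  rw [hW] at h3
  rw [hV] at h4
  rw [hI, hu, hv, hw] at h1
  rw [hu, hv] at hpq
  rw [hu, hw]
  norm_cast at hpq h1
  norm_cast
  push_cast at h1 h3 h4 ⊢
  have h3' : yy (Real.pi / 2) (n + 1) = 2 / (Real.pi * (n + 2)) * (ε * u ^ 2) := by
    field_simp at h3 ⊢; linear_combination h3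
  have h4' : yt (Real.pi / 2) (n + 1) = -(2 / (Real.pi * n) * (ε * v ^ 2)) := by
    field_simp at h4 ⊢; linear_combination h4
  rw [h3', h4'] at h2
  rw [h3'] at h1
  generalize x0 (Real.pi / 2) (n + 1) = x at *
  generalize x0 (Real.pi / 2) n = x' at *
  constructor
  · rw [h1]
    have : 2 / (Real.pi * (n + 2)) * (ε * u ^ 2) / x * (ε * v) = u / (n + 2) := by
      have : 2 / (Real.pi * (n + 2)) * (ε * u ^ 2) / x * (ε * v) = 2 / (Real.pi * (n + 2)) * (ε * ε) * u * (u * v) / x := by ring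
      rw [this, hm1, hpq]; field_simp
    rw [this]; field_simp; ring
  · rw [h2]
    have : 2 / (Real.pi * (n + 2)) * (ε * u ^ 2) * -(2 / (Real.pi * n) * (ε * v ^ 2)) / x = - x / (n * (n + 2)) := by
      have : 2 / (Real.pi * (n + 2)) * (ε * u ^ 2) * -(2 / (Real.pi * n) * (ε * v ^ 2)) / x =
        - (2 / (Real.pi * (n + 2))) * (2 / (Real.pi * n)) * (ε * ε) * (u * v) ^ 2 / x := by ring
      rw [this, hm1, hpq]; field_simp
    rw [this]; field_simp; ring

lemma base_half (n : ℕ) (h : 0 < E (Real.pi / 2) (n + 1)) : Base n := ⟨good_half n, r_half n, A_half n, ze_half n, h⟩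

lemma start_half : p (Real.pi / 2) 0 = ((Real.pi / 2 : ℝ) : ℂ) ∧ x0 (Real.pi / 2) 0 = Real.pi / 2 := by
  have h0 : B (Real.pi / 2) 1 0 0 = Real.pi / 2 := by
    have h1 := congrFun (congrFun (B_mul_S (E_half_ne 1)) 0) 0
    have h2 : S (Real.pi / 2) 1 0 0 = 2 / Real.pi := by
      have := cf_half_even 0 0 rfl
      simpa [S] using this
    rw [Matrix.mul_apply] at h1
    simp [h2] at h1
    have := Real.pi_ne_zero
    field_simp at h1 ⊢
    linarith
  constructor
  · rw [p, Y]; simp [h0]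
  · exact h0

lemma state_half (k : ℕ) : ∃ u : ℝ, 0 < u ∧ p (Real.pi / 2) (2 * k) = u ∧ p (Real.pi / 2) (2 * k + 1) = u ∧
    u ^ 2 / (2 * k + 1) * Real.Wallis.W k = Real.pi ^ 2 / 4 ∧
    x0 (Real.pi / 2) (2 * k) * Real.Wallis.W k = Real.pi / 2 ∧
    x0 (Real.pi / 2) (2 * k + 1) * Real.Wallis.W k = Real.pi / 2 := by
  induction k with
  | zero =>
    have h := start_half
    have h2 := rec_even (n := 0) rfl
    refine ⟨Real.pi / 2, by have := Real.pi_pos; positivity, h.1, ?_, ?_, ?_, ?_⟩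
    · rw [← h.1]; exact h2.1
    · simp [Real.Wallis.W]; ring
    · simp [Real.Wallis.W, h.2]
    · simp only [mul_zero] at h2 ⊢; rw [h2.2]; simp [Real.Wallis.W, h.2]
  | succ k ih =>
    obtain ⟨u, hu, h1, h2, h3, h4, h5⟩ := ih
    have ho := rec_odd (n := 2 * k + 1) (by omega)
    have he := rec_even (n := 2 * k + 2) (by omega)
    have e : 2 * (k + 1) = 2 * k + 2 := by ring
    rw [e, he.1, he.2]
    have ho1 := ho.1
    have ho2 := ho.2
    rw [show 2 * k + 1 + 1 = 2 * k + 2 by ring] at ho1 ho2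
    rw [ho1, ho2, h2, Real.Wallis.W_succ]
    have hk : (0 : ℝ) ≤ k := Nat.cast_nonneg k
    refine ⟨(2 * k + 3) / (2 * k + 2) * u, by positivity, ?_, ?_, ?_, ?_, ?_⟩
    · push_cast; ring
    · push_cast; ring
    · rw [← h3]; push_cast; field_simp; ring
    · refine Eq.trans ?_ h5
      push_cast; field_simp; ring
    · refine Eq.trans ?_ h5
      push_cast; field_simp; ring

/-- `c k = ∏_{i<k} (2/π) W_i`. -/
def cc (k : ℕ) : ℝ := ∏ i ∈ Finset.range k, (2 / Real.pi * Real.Wallis.W i)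

lemma cc_pos (k : ℕ) : 0 < cc k :=
  Finset.prod_pos fun i _ => mul_pos (div_pos two_pos Real.pi_pos) (Real.Wallis.W_pos i)

lemma E_half (k : ℕ) : E (Real.pi / 2) (2 * k) = cc k ^ 2 ∧ E (Real.pi / 2) (2 * k + 1) = cc k * cc (k + 1) := by
  have hpi := Real.pi_pos
  have key : ∀ k, E (Real.pi / 2) (2 * k) = cc k ^ 2 → E (Real.pi / 2) (2 * k + 1) = cc k * cc (k + 1) := by
    intro k hk
    have h1 := E_rec (E_half_ne (2 * k + 1))
    obtain ⟨u, -, -, -, -, h4, h5⟩ := state_half k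
    have hW := Real.Wallis.W_pos k
    have hx : x0 (Real.pi / 2) (2 * k) = Real.pi / 2 / Real.Wallis.W k := eq_div_of_mul_eq hW.ne' h4
    rw [hk, hx] at h1
    have hc : cc (k + 1) = cc k * (2 / Real.pi * Real.Wallis.W k) := Finset.prod_range_succ _ _
    rw [hc]
    field_simp at h1 ⊢
    linarith
  have h0 : E (Real.pi / 2) (2 * k) = cc k ^ 2 := by
    induction k with
    | zero => simp [cc, E]
    | succ k ih =>
      have h0 := key k ih
      have h1 := E_rec (E_half_ne (2 * k + 1 + 1))
      obtain ⟨u, -, -, -, -, h4, h5⟩ := state_half k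
      have hW := Real.Wallis.W_pos k
      have hx : x0 (Real.pi / 2) (2 * k + 1) = Real.pi / 2 / Real.Wallis.W k := eq_div_of_mul_eq hW.ne' h5
      rw [h0, hx] at h1
      have hc : cc (k + 1) = cc k * (2 / Real.pi * Real.Wallis.W k) := Finset.prod_range_succ _ _
      have hcc := cc_pos k
      rw [show 2 * (k + 1) = 2 * k + 1 + 1 by ring]
      rw [hc] at h1 ⊢
      field_simp at h1 ⊢
      linarith
  exact ⟨h0, key k h0⟩

lemma E_half_pos (n : ℕ) : 0 < E (Real.pi / 2) n := by
  rcases Nat.even_or_odd' n with ⟨k, rfl | rfl⟩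
  · rw [(E_half k).1]; exact pow_pos (cc_pos k) 2
  · rw [(E_half k).2]; exact mul_pos (cc_pos k) (cc_pos _)

lemma base (n : ℕ) : Base n := base_half n (E_half_pos _)

lemma tendsto_of_even_odd {f : ℕ → ℝ} {l : Filter ℝ} (h0 : Filter.Tendsto (fun k => f (2 * k)) Filter.atTop l)
    (h1 : Filter.Tendsto (fun k => f (2 * k + 1)) Filter.atTop l) : Filter.Tendsto f Filter.atTop l := by
  intro s hs
  have a0 := h0 hs
  have a1 := h1 hs
  rw [Filter.mem_map, Filter.mem_atTop_sets] at a0 a1 ⊢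
  obtain ⟨n0, a0⟩ := a0
  obtain ⟨n1, a1⟩ := a1
  refine ⟨2 * n0 + 2 * n1 + 1, fun n hn => ?_⟩
  rcases Nat.even_or_odd' n with ⟨k, rfl | rfl⟩
  · exact a0 k (by omega)
  · exact a1 k (by omega)

lemma W_half_lim : Filter.Tendsto (fun n : ℕ => ‖W (Real.pi / 2) n‖ / (n + 1)) Filter.atTop (nhds (Real.pi / 2)) := by
  have hpi := Real.pi_pos
  have hW := Real.Wallis.tendsto_W_nhds_pi_div_two
  have hlim : Filter.Tendsto (fun k => Real.pi ^ 2 / 4 / Real.Wallis.W k) Filter.atTop (nhds (Real.pi / 2)) := by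
    have := (tendsto_const_nhds (x := Real.pi ^ 2 / 4)).div hW (by positivity)
    have e : Real.pi ^ 2 / 4 / (Real.pi / 2) = Real.pi / 2 := by field_simp; ring
    rwa [e] at this
  apply tendsto_of_even_odd
  · refine hlim.congr fun k => ?_
    obtain ⟨u, hu, h1, h2, h3, -, -⟩ := state_half k
    have := Real.Wallis.W_pos k
    rw [norm_W, h1, ← h3, Complex.norm_real, Real.norm_eq_abs, sq_abs]
    push_cast
    field_simp
  · have h6 : Filter.Tendsto (fun k : ℕ => (1 - 1 / ((2 * k + 2 : ℕ) : ℝ)) ) Filter.atTop (nhds (1 - 0)) := by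
      refine tendsto_const_nhds.sub ?_
      refine (tendsto_one_div_atTop_nhds_zero_nat).comp (f := fun k : ℕ => 2 * k + 2) ?_
      exact Filter.tendsto_atTop_mono (fun k => by simp only [id]; omega) Filter.tendsto_id
    have h7 := hlim.mul h6
    rw [sub_zero, mul_one] at h7
    refine h7.congr fun k => ?_
    obtain ⟨u, hu, h1, h2, h3, -, -⟩ := state_half k
    have := Real.Wallis.W_pos k
    rw [norm_W, h2, ← h3, Complex.norm_real, Real.norm_eq_abs, sq_abs]
    push_cast
    field_simp
    ring

end

end XXString

namespace XXString
open Complex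

noncomputable section

def em {K : Type*} [Field K] (b : ℕ → K) (n : ℕ) : K := 7 / 8 * b n - 1 / 2 * b (n + 1) + 1 / 8 * b (n + 2)
def dl {K : Type*} [Field K] (b : ℕ → K) (n : ℕ) : K := b n - 3 * b (n + 1) + 3 * b (n + 2) - b (n + 3)

lemma em_add {K : Type*} [Field K] [CharZero K] (b : ℕ → K) (n : ℕ) : em b n + em b (n + 1) = b n - 1 / 8 * dl b n := by
  simp only [em, dl]; ring

/-- Finite Euler transform. -/
lemma euler_fin {K : Type*} [Field K] [CharZero K] (b : ℕ → K) (M : ℕ) :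
    ∑ n ∈ Finset.range M, (-1) ^ n * b n = em b 0 - (-1) ^ M * em b M + ∑ n ∈ Finset.range M, (-1) ^ n * (1 / 8 * dl b n) := by
  induction M with
  | zero => simp
  | succ M ih =>
    rw [Finset.sum_range_succ, Finset.sum_range_succ, ih]
    have := em_add b M
    rw [pow_succ]
    linear_combination -(-1) ^ M * this

def an (s : ℂ) (n : ℕ) : ℂ := ((n : ℂ) + 1) ^ (-s)

def F (s : ℂ) : ℂ := em (an s) 0 + ∑' n, (-1) ^ n * (1 / 8 * dl (an s) n)

lemma diff_bound (f f' : ℝ → ℂ) {x M : ℝ} (hd : ∀ y, x ≤ y → HasDerivAt f (f' y) y)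
    (hb : ∀ y, x ≤ y → ‖f' y‖ ≤ M) : ‖f x - f (x + 1)‖ ≤ M := by
  have := norm_image_sub_le_of_norm_deriv_le_segment' (f := f) (f' := f') (a := x) (b := x + 1) (C := M)
    (fun y hy => (hd y hy.1).hasDerivWithinAt) (fun y hy => hb y hy.1) (x + 1) ⟨by linarith, le_rfl⟩
  rw [norm_sub_rev]
  simpa using this

lemma pow_deriv (s : ℂ) {y : ℝ} (hy : 0 < y) : HasDerivAt (fun t : ℝ => (t : ℂ) ^ s) (s * (y : ℂ) ^ (s - 1)) y := by
  have := (hasDerivAt_id (y : ℂ)).cpow_const (c := s) (by left; simpa using hy)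
  simp only [id, mul_one] at this
  exact this.comp_ofReal

lemma dl_bound (s : ℂ) (hs : -(3/2) ≤ s.re) {x : ℝ} (hx : 1 ≤ x) :
    ‖(x : ℂ) ^ (-s) - 3 * ((x + 1 : ℝ) : ℂ) ^ (-s) + 3 * ((x + 2 : ℝ) : ℂ) ^ (-s) - ((x + 3 : ℝ) : ℂ) ^ (-s)‖
      ≤ ‖s * (s + 1) * (s + 2)‖ * x ^ (-(3/2 : ℝ)) := by
  have h0 : ∀ y, x ≤ y → 0 < y := fun y hy => by linarith
  set g3 : ℝ → ℂ := fun y => (-s) * ((-s - 1) * ((-s - 1 - 1) * (y : ℂ) ^ (-s - 1 - 1 - 1)))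
  set g2 : ℝ → ℂ := fun y => (-s) * ((-s - 1) * (y : ℂ) ^ (-s - 1 - 1))
  set g1 : ℝ → ℂ := fun y => (-s) * (y : ℂ) ^ (-s - 1)
  set g0 : ℝ → ℂ := fun y => (y : ℂ) ^ (-s)
  have d0 : ∀ y, x ≤ y → HasDerivAt g0 (g1 y) y := fun y hy => pow_deriv _ (h0 y hy)
  have d1 : ∀ y, x ≤ y → HasDerivAt g1 (g2 y) y := fun y hy => (pow_deriv _ (h0 y hy)).const_mul _
  have d2 : ∀ y, x ≤ y → HasDerivAt g2 (g3 y) y := fun y hy => ((pow_deriv _ (h0 y hy)).const_mul _).const_mul _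
  have b3 : ∀ y, x ≤ y → ‖g3 y‖ ≤ ‖s * (s + 1) * (s + 2)‖ * x ^ (-(3/2 : ℝ)) := by
    intro y hy
    have e : g3 y = -((s * (s + 1) * (s + 2)) * (y : ℂ) ^ (-s - 1 - 1 - 1)) := by
      simp only [g3]; ring
    rw [e, norm_neg, norm_mul]
    refine mul_le_mul_of_nonneg_left ?_ (norm_nonneg _)
    rw [Complex.norm_cpow_eq_rpow_re_of_pos (h0 y hy)]
    have e2 : (-s - 1 - 1 - 1).re = -s.re - 3 := by simp; ring
    rw [e2]
    calc y ^ (-s.re - 3) ≤ y ^ (-(3/2 : ℝ)) := Real.rpow_le_rpow_of_exponent_le (by linarith) (by linarith)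
      _ ≤ x ^ (-(3/2 : ℝ)) := Real.rpow_le_rpow_of_nonpos (by linarith) hy (by norm_num)
  have sh : ∀ (f f' : ℝ → ℂ), (∀ y, x ≤ y → HasDerivAt f (f' y) y) →
      ∀ y, x ≤ y → HasDerivAt (fun t => f t - f (t + 1)) (f' y - f' (y + 1)) y := fun f f' h y hy =>
    (h y hy).sub ((h (y + 1) (by linarith)).comp_add_const y 1)
  have b2 : ∀ y, x ≤ y → ‖g2 y - g2 (y + 1)‖ ≤ ‖s * (s + 1) * (s + 2)‖ * x ^ (-(3/2 : ℝ)) := fun y hy =>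
    diff_bound g2 g3 (fun t ht => d2 t (hy.trans ht)) (fun t ht => b3 t (hy.trans ht))
  have b1 := fun y (hy : x ≤ y) => diff_bound _ _ (fun t ht => sh g1 g2 d1 t (hy.trans ht)) (fun t ht => b2 t (hy.trans ht))
  have b0 := fun y (hy : x ≤ y) => diff_bound _ _ (fun t ht => sh _ _ (sh g0 g1 d0) t (hy.trans ht)) (fun t ht => b1 t (hy.trans ht))
  refine le_trans (le_of_eq ?_) (b0 x le_rfl)
  congr 1
  simp only [g0]
  rw [show x + 1 + 1 = x + 2 by ring, show x + 2 + 1 = x + 3 by ring]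
  ring

def U : Set ℂ := Metric.ball 1 (5/2)

lemma U_re {s : ℂ} (hs : s ∈ U) : -(3/2) ≤ s.re := by
  have h1 : ‖s - 1‖ < 5/2 := by simpa [U, dist_eq_norm] using hs
  have h2 := (abs_le.mp (Complex.abs_re_le_norm (s - 1))).1
  simp at h2
  linarith

lemma U_bound {s : ℂ} (hs : s ∈ U) (n : ℕ) :
    ‖(-1) ^ n * (1 / 8 * dl (an s) n)‖ ≤ 125 * ((n + 1 : ℕ) : ℝ) ^ (-(3/2 : ℝ)) := by
  have h1 : ‖s - 1‖ < 5/2 := by simpa [U, dist_eq_norm] using hs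
  have h2 := dl_bound s (U_re hs) (x := (n : ℝ) + 1) (by simp)
  have e : (((n : ℝ) + 1 : ℝ) : ℂ) ^ (-s) - 3 * (((n : ℝ) + 1 + 1 : ℝ) : ℂ) ^ (-s) + 3 * (((n : ℝ) + 1 + 2 : ℝ) : ℂ) ^ (-s)
      - (((n : ℝ) + 1 + 3 : ℝ) : ℂ) ^ (-s) = dl (an s) n := by
    simp only [dl, an]
    push_cast
    rw [show (n : ℂ) + 1 + 2 = n + 2 + 1 by ring, show (n : ℂ) + 1 + 3 = n + 3 + 1 by ring]
  rw [e] at h2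
  have a0 : ‖s‖ ≤ 7/2 := by
    calc ‖s‖ = ‖(s - 1) + 1‖ := by congr 1; ring
      _ ≤ ‖s - 1‖ + ‖(1:ℂ)‖ := norm_add_le _ _
      _ ≤ 7/2 := by rw [norm_one]; linarith
  have a1 : ‖s + 1‖ ≤ 9/2 := by
    calc ‖s + 1‖ ≤ ‖s‖ + ‖(1:ℂ)‖ := norm_add_le _ _
      _ ≤ 9/2 := by rw [norm_one]; linarith
  have a2 : ‖s + 2‖ ≤ 11/2 := by
    calc ‖s + 2‖ ≤ ‖s‖ + ‖(2:ℂ)‖ := norm_add_le _ _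
      _ ≤ 11/2 := by rw [Complex.norm_ofNat]; linarith
  have a3 : ‖s * (s + 1) * (s + 2)‖ ≤ 125 := by
    rw [norm_mul, norm_mul]
    calc ‖s‖ * ‖s + 1‖ * ‖s + 2‖ ≤ 7/2 * (9/2) * (11/2) := by gcongr
      _ ≤ 125 := by norm_num
  rw [norm_mul, norm_pow, norm_neg, norm_one, one_pow, one_mul, norm_mul]
  have a4 : ‖(1 / 8 : ℂ)‖ ≤ 1 := by norm_num
  have hp : (0:ℝ) ≤ ((n:ℝ) + 1) ^ (-(3/2 : ℝ)) := by positivity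
  push_cast
  calc ‖(1 / 8 : ℂ)‖ * ‖dl (an s) n‖ ≤ 1 * ‖dl (an s) n‖ := by gcongr
    _ ≤ _ := by rw [one_mul]; exact h2.trans (by gcongr)

lemma U_summable : Summable fun n : ℕ => 125 * ((n + 1 : ℕ) : ℝ) ^ (-(3/2 : ℝ)) := by
  refine Summable.mul_left _ ?_
  exact (summable_nat_add_iff 1).mpr (Real.summable_nat_rpow.mpr (by norm_num))

lemma an_deriv (s : ℂ) (n : ℕ) : HasDerivAt (fun s => an s n) (-(Real.log (n + 1) : ℂ) * an s n) s := by
  have h0 : ((n : ℂ) + 1) ≠ 0 := by exact_mod_cast Nat.succ_ne_zero n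
  have := (hasDerivAt_neg s).const_cpow (c := (n : ℂ) + 1) (Or.inl h0)
  refine this.congr_deriv ?_
  have e : Complex.log ((n : ℂ) + 1) = (Real.log (n + 1) : ℂ) := by
    rw [Complex.ofReal_log (by positivity)]; push_cast; rfl
  rw [e, an]; ring

lemma em_deriv (s : ℂ) (n : ℕ) : HasDerivAt (fun s => em (an s) n) (em (fun m => -(Real.log (m + 1) : ℂ) * an s m) n) s :=
  (((an_deriv s n).const_mul _).sub ((an_deriv s (n + 1)).const_mul _)).add ((an_deriv s (n + 2)).const_mul _)

lemma dl_deriv (s : ℂ) (n : ℕ) : HasDerivAt (fun s => dl (an s) n) (dl (fun m => -(Real.log (m + 1) : ℂ) * an s m) n) s :=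
  (((an_deriv s n).sub ((an_deriv s (n + 1)).const_mul _)).add ((an_deriv s (n + 2)).const_mul _)).sub (an_deriv s (n + 3))

lemma term_deriv (s : ℂ) (n : ℕ) : HasDerivAt (fun s => (-1) ^ n * (1 / 8 * dl (an s) n))
    ((-1) ^ n * (1 / 8 * dl (fun m => -(Real.log (m + 1) : ℂ) * an s m) n)) s :=
  ((dl_deriv s n).const_mul _).const_mul _

lemma F_diff : DifferentiableOn ℂ F U := by
  refine DifferentiableOn.add (fun s _ => (em_deriv s 0).differentiableAt.differentiableWithinAt) ?_
  exact differentiableOn_tsum_of_summable_norm U_summable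
    (fun n s _ => (term_deriv s n).differentiableAt.differentiableWithinAt) Metric.isOpen_ball (fun n s hs => U_bound hs n)

lemma neg_one_mem : (-1 : ℂ) ∈ U := by
  simp [U, dist_eq_norm]; norm_num

lemma F_deriv : HasSum (fun n : ℕ => (-1) ^ n * (1 / 8 * dl (fun m => -(Real.log (m + 1) : ℂ) * an (-1) m) n))
    (deriv F (-1) - em (fun m => -(Real.log (m + 1) : ℂ) * an (-1) m) 0) := by
  have h1 := hasSum_deriv_of_summable_norm U_summable
    (fun n s _ => (term_deriv s n).differentiableAt.differentiableWithinAt) Metric.isOpen_ball (fun n s hs => U_bound hs n)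
    neg_one_mem
  have hd : DifferentiableAt ℂ (fun s => ∑' n, (-1) ^ n * (1 / 8 * dl (an s) n)) (-1) :=
    (differentiableOn_tsum_of_summable_norm U_summable
    (fun n s _ => (term_deriv s n).differentiableAt.differentiableWithinAt) Metric.isOpen_ball
      (fun n s hs => U_bound hs n)).differentiableAt (Metric.isOpen_ball.mem_nhds neg_one_mem)
  have h2 : deriv F (-1) = em (fun m => -(Real.log (m + 1) : ℂ) * an (-1) m) 0 +
      deriv (fun s => ∑' n, (-1) ^ n * (1 / 8 * dl (an s) n)) (-1) :=
    ((em_deriv (-1) 0).add hd.hasDerivAt).deriv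
  rw [h2, add_sub_cancel_left]
  simpa only [(term_deriv (-1) _).deriv] using h1

lemma summable_an {s : ℂ} (hs : 1 < s.re) : Summable (an s) := by
  have h := (summable_nat_add_iff 1).mpr (Complex.summable_one_div_nat_cpow.mpr hs)
  refine h.congr fun n => ?_
  rw [an, Complex.cpow_neg]; push_cast; simp

lemma summable_alt {f : ℕ → ℂ} (hf : Summable f) : Summable fun n => (-1) ^ n * f n := by
  refine Summable.of_norm ?_
  refine hf.norm.congr fun n => ?_
  simp

lemma F_eq_alt {s : ℂ} (hs : 1 < s.re) : F s = ∑' n, (-1) ^ n * an s n := by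
  have h0 := summable_an hs
  have hem : Summable (em (an s)) :=
    ((h0.mul_left _).sub (((summable_nat_add_iff 1).mpr h0).mul_left _)).add (((summable_nat_add_iff 2).mpr h0).mul_left _)
  have he := summable_alt hem
  have h1 := he.tsum_eq_zero_add
  have he1 := (summable_nat_add_iff 1).mpr he
  have h2 : ∀ n, (-1) ^ n * (1 / 8 * dl (an s) n) = (-1) ^ n * an s n - ((-1) ^ n * em (an s) n - (-1) ^ (n + 1) * em (an s) (n + 1)) := by
    intro n
    have := em_add (an s) n
    rw [pow_succ]
    linear_combination (-1) ^ n * this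
  rw [F]
  simp only [h2]
  rw [(summable_alt h0).tsum_sub (he.sub he1), he.tsum_sub he1, h1]
  simp

lemma alt_zeta {s : ℂ} (hs : 1 < s.re) : ∑' n, (-1) ^ n * an s n = (1 - 2 ^ (1 - s)) * riemannZeta s := by
  have hz : riemannZeta s = ∑' n, an s n := by
    rw [zeta_eq_tsum_one_div_nat_add_one_cpow hs]
    refine tsum_congr fun n => ?_
    rw [an, Complex.cpow_neg]; simp
  have h0 := summable_an hs
  have i0 : Function.Injective fun k : ℕ => 2 * k := fun a b h => by simpa using h
  have i1 : Function.Injective fun k : ℕ => 2 * k + 1 := fun a b h => by simpa using h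
  have e1 : ∑' k, an s (2 * k) + ∑' k, an s (2 * k + 1) = ∑' k, an s k :=
    tsum_even_add_odd (f := an s) (h0.comp_injective i0) (h0.comp_injective i1)
  have ha := summable_alt h0
  have e2 : ∑' k, (-1) ^ (2 * k) * an s (2 * k) + ∑' k, (-1) ^ (2 * k + 1) * an s (2 * k + 1) = ∑' k, (-1) ^ k * an s k :=
    tsum_even_add_odd (f := fun k => (-1) ^ k * an s k) (ha.comp_injective i0) (ha.comp_injective i1)
  have e3 : ∀ k : ℕ, an s (2 * k + 1) = 2 ^ (-s) * an s k := by
    intro k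
    have : (((2 * k + 1 : ℕ) : ℂ) + 1) = ((2 : ℝ) : ℂ) * (((k : ℝ) + 1 : ℝ) : ℂ) := by push_cast; ring
    rw [an, this, Complex.mul_cpow_ofReal_nonneg (by norm_num) (by positivity), an]
    push_cast; rfl
  have e4 : ∀ k : ℕ, (-1 : ℂ) ^ (2 * k) * an s (2 * k) = an s (2 * k) := by intro k; rw [pow_mul]; simp
  have e5 : ∀ k : ℕ, (-1 : ℂ) ^ (2 * k + 1) * an s (2 * k + 1) = -(2 ^ (-s) * an s k) := by
    intro k; rw [pow_succ, pow_mul, e3]; simp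
  simp only [e4, e5, tsum_neg, tsum_mul_left] at e2
  simp only [e3, tsum_mul_left] at e1
  rw [← hz] at e1 e2
  have e6 : (2 : ℂ) ^ (1 - s) = 2 * 2 ^ (-s) := by
    rw [sub_eq_add_neg, Complex.cpow_add _ _ two_ne_zero, Complex.cpow_one]
  rw [← e2, e6]
  linear_combination e1

def H : ℂ → ℂ := Function.update (fun s => (s - 1) * riemannZeta s) 1 1

lemma H_diff : Differentiable ℂ H := by
  have hne : ∀ s : ℂ, s ≠ 1 → DifferentiableAt ℂ H s := by
    intro s hs
    have : DifferentiableAt ℂ (fun s => (s - 1) * riemannZeta s) s :=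
      (differentiableAt_id.sub_const 1).mul (differentiableAt_riemannZeta hs)
    refine this.congr_of_eventuallyEq ?_
    filter_upwards [isOpen_ne.mem_nhds hs] with t ht
    exact Function.update_of_ne ht _ _
  intro s
  by_cases hs : s = 1
  · subst hs
    refine (Complex.analyticAt_of_differentiable_on_punctured_nhds_of_continuousAt ?_ ?_).differentiableAt
    · filter_upwards [self_mem_nhdsWithin] with t ht
      exact hne t ht
    · exact continuousAt_update_same.mpr riemannZeta_residue_one
  · exact hne s hs

lemma two_pow_diff : Differentiable ℂ fun s : ℂ => (1 - 2 ^ (1 - s) : ℂ) := by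
  intro s
  refine DifferentiableAt.const_sub ?_ _
  exact ((differentiableAt_id.const_sub 1)).const_cpow (Or.inl two_ne_zero)

lemma F_eq {s : ℂ} (hs : s ∈ U) (h1 : s ≠ 1) : F s = (1 - 2 ^ (1 - s)) * riemannZeta s := by
  have hU : IsOpen U := Metric.isOpen_ball
  have hf : AnalyticOnNhd ℂ (fun s => (s - 1) * F s) U :=
    DifferentiableOn.analyticOnNhd (((differentiable_id.sub_const 1).differentiableOn).mul F_diff) hU
  have hg : AnalyticOnNhd ℂ (fun s : ℂ => (1 - 2 ^ (1 - s)) * H s) U :=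
    DifferentiableOn.analyticOnNhd (two_pow_diff.mul H_diff).differentiableOn hU
  have h2 : (2 : ℂ) ∈ U := by simp [U, dist_eq_norm]; norm_num
  have key := hf.eqOn_of_preconnected_of_eventuallyEq hg (convex_ball (1 : ℂ) (5/2)).isPreconnected h2 (by
    have : {t : ℂ | 1 < t.re} ∈ nhds (2 : ℂ) := (isOpen_lt continuous_const Complex.continuous_re).mem_nhds (by simp)
    filter_upwards [this] with t ht
    have ht1 : t ≠ 1 := by rintro rfl; simp at ht
    rw [F_eq_alt ht, alt_zeta ht, H, Function.update_of_ne ht1]; ring) hs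
  simp only [H, Function.update_of_ne h1] at key
  have := sub_ne_zero.mpr h1
  apply mul_left_cancel₀ this
  rw [key]; ring

lemma zeta_neg_one : riemannZeta (-1) = -1 / 12 := by
  have := riemannZeta_neg_nat_eq_bernoulli' 1
  simp [bernoulli'_two] at this
  rw [this]; norm_num

lemma deriv_F : deriv F (-1) = -(Real.log 2 : ℂ) / 3 - 3 * deriv riemannZeta (-1) := by
  have hz := (differentiableAt_riemannZeta (s := -1) (by norm_num)).hasDerivAt
  have h2 : HasDerivAt (fun s : ℂ => (1 - 2 ^ (1 - s) : ℂ)) (4 * (Real.log 2 : ℂ)) (-1) := by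
    have := (((hasDerivAt_id (-1 : ℂ)).const_sub 1).const_cpow (c := 2) (Or.inl two_ne_zero)).const_sub 1
    refine this.congr_deriv ?_
    have e : Complex.log 2 = (Real.log 2 : ℂ) := by rw [Complex.ofReal_log (by norm_num)]; simp
    have e2 : (2 : ℂ) ^ (1 - (-1) : ℂ) = 4 := by
      rw [show (1 - (-1) : ℂ) = ((2 : ℕ) : ℂ) by norm_num, Complex.cpow_natCast]; norm_num
    simp only [id, e, e2]; ring
  have h3 := h2.mul hz
  have h4 : HasDerivAt F _ (-1) := h3.congr_of_eventuallyEq (by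
    have : U ∩ {1}ᶜ ∈ nhds (-1 : ℂ) :=
      (Metric.isOpen_ball.inter isOpen_compl_singleton).mem_nhds ⟨neg_one_mem, by simp; norm_num⟩
    filter_upwards [this] with s hs
    exact F_eq hs.1 hs.2)
  rw [h4.deriv, zeta_neg_one]
  have e2 : (2 : ℂ) ^ (1 - (-1) : ℂ) = 4 := by
    rw [show (1 - (-1) : ℂ) = ((2 : ℕ) : ℂ) by norm_num, Complex.cpow_natCast]; norm_num
  rw [e2]; ring

/-- real version -/
def nl (n : ℕ) : ℝ := ((n : ℝ) + 1) * Real.log (n + 1)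

lemma nl_cast (m : ℕ) : -(Real.log (m + 1) : ℂ) * an (-1) m = ((-nl m : ℝ) : ℂ) := by
  rw [an, nl, neg_neg, Complex.cpow_one]; push_cast; ring

/-- `ζ'(−1)` is the real number for which the alternating sums converge. -/
theorem zeta_deriv_lim : ∃ Z : ℝ, deriv riemannZeta (-1) = (Z : ℂ) ∧
    Filter.Tendsto (fun M => ∑ n ∈ Finset.range M, (-1) ^ n * nl n + (-1) ^ M * em nl M) Filter.atTop
      (nhds (Real.log 2 / 3 + 3 * Z)) := by
  have h := F_deriv
  rw [deriv_F] at h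
  simp only [nl_cast] at h
  have e0 : em (fun m => ((-nl m : ℝ) : ℂ)) 0 = ((-em nl 0 : ℝ) : ℂ) := by
    simp only [em]; push_cast; ring
  have e1 : ∀ n, (-1) ^ n * (1 / 8 * dl (fun m => ((-nl m : ℝ) : ℂ)) n) = (((-1) ^ n * (1 / 8 * dl (fun m => -nl m) n) : ℝ) : ℂ) := by
    intro n
    simp only [dl]; push_cast; ring
  simp only [e1] at h
  rw [e0] at h
  have hs := Complex.ofReal_tsum (L := SummationFilter.unconditional ℕ) (fun n => (-1) ^ n * (1 / 8 * dl (fun m => -nl m) n))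
  rw [h.tsum_eq] at hs
  set T : ℝ := ∑' n, (-1) ^ n * (1 / 8 * dl (fun m => -nl m) n) with hT
  have hZ : deriv riemannZeta (-1) = ((-(Real.log 2) / 9 - (T - em nl 0) / 3 : ℝ) : ℂ) := by
    push_cast at hs ⊢
    linear_combination hs / 3
  refine ⟨_, hZ, ?_⟩
  have hsum : Summable (fun n => (-1) ^ n * (1 / 8 * dl (fun m => -nl m) n)) := by
    exact_mod_cast h.summable
  have h2 := hsum.hasSum.tendsto_sum_nat
  rw [← hT] at h2
  have h3 := (tendsto_const_nhds (x := em nl 0)).sub h2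
  have e3 : Real.log 2 / 3 + 3 * (-(Real.log 2) / 9 - (T - em nl 0) / 3) = em nl 0 - T := by ring
  rw [e3]
  refine h3.congr fun M => ?_
  rw [euler_fin nl M]
  have : ∑ n ∈ Finset.range M, (-1 : ℝ) ^ n * (1 / 8 * dl (fun m => -nl m) n) = - ∑ n ∈ Finset.range M, (-1) ^ n * (1 / 8 * dl nl n) := by
    rw [← Finset.sum_neg_distrib]
    refine Finset.sum_congr rfl fun n _ => ?_
    simp only [dl]; ring
  rw [this]; ring

end

end XXString

namespace XXString
open Complex ComplexConjugate Filter

noncomputable section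

def TT (M : ℕ) : ℝ := ∑ n ∈ Finset.range M, (-1) ^ n * nl n

lemma TT_succ2 (k : ℕ) : TT (2 * (k + 1)) = TT (2 * k) + (2 * k + 1) * Real.log (2 * k + 1)
    - (2 * k + 2) * Real.log (2 * k + 2) := by
  rw [show 2 * (k + 1) = 2 * k + 1 + 1 by ring, TT, Finset.sum_range_succ, Finset.sum_range_succ, ← TT]
  simp only [nl, pow_succ, pow_mul]
  push_cast
  have : (2 * (k : ℝ) + 1 + 1) = 2 * k + 2 := by ring
  rw [this]
  norm_num
  ring

lemma log_W_succ (k : ℕ) : Real.log (Real.Wallis.W (k + 1)) = Real.log (Real.Wallis.W k)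
    + 2 * Real.log (2 * k + 2) - Real.log (2 * k + 1) - Real.log (2 * k + 3) := by
  have h0 := Real.Wallis.W_pos k
  have h1 : (0:ℝ) < 2 * k + 1 := by positivity
  have h2 : (0:ℝ) < 2 * k + 2 := by positivity
  have h3 : (0:ℝ) < 2 * k + 3 := by positivity
  rw [Real.Wallis.W_succ, Real.log_mul h0.ne' (by positivity), Real.log_mul (by positivity) (by positivity),
    Real.log_div h2.ne' h1.ne', Real.log_div h2.ne' h3.ne']
  ring

lemma log_cc (k : ℕ) : Real.log (cc k) = k * (Real.log (Real.Wallis.W k) - Real.log (Real.pi / 2))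
    + k * Real.log (2 * k + 1) + TT (2 * k) := by
  induction k with
  | zero => simp [cc, TT]
  | succ k ih =>
    have : cc (k + 1) = cc k * (2 / Real.pi * Real.Wallis.W k) := by
      simp [cc, Finset.prod_range_succ]
    have hpi := Real.pi_pos
    rw [this, Real.log_mul (cc_pos k).ne' (mul_pos (by positivity) (Real.Wallis.W_pos k)).ne',
      Real.log_mul (by positivity) (Real.Wallis.W_pos k).ne', ih, TT_succ2, log_W_succ,
      Real.log_div hpi.ne' two_ne_zero, Real.log_div two_ne_zero hpi.ne']
    push_cast
    have : 2 * ((k:ℝ) + 1) + 1 = 2 * k + 3 := by ring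
    rw [this]
    ring

lemma g_bounds (k : ℕ) : 1 / (4 * ((k:ℝ) + 1) ^ 2) ≤ Real.log (Real.Wallis.W (k + 1)) - Real.log (Real.Wallis.W k)
    ∧ Real.log (Real.Wallis.W (k + 1)) - Real.log (Real.Wallis.W k) ≤ 1 / ((2 * k + 1) * (2 * k + 3)) := by
  have h1 : (0:ℝ) < 2 * k + 1 := by positivity
  have h2 : (0:ℝ) < 2 * k + 2 := by positivity
  have h3 : (0:ℝ) < 2 * k + 3 := by positivity
  have e : Real.log (Real.Wallis.W (k + 1)) - Real.log (Real.Wallis.W k) =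
      - Real.log ((2 * k + 1) * (2 * k + 3) / (2 * k + 2) ^ 2) := by
    rw [log_W_succ, Real.log_div (by positivity) (by positivity), Real.log_mul h1.ne' h3.ne', Real.log_pow]
    push_cast; ring
  have e' : Real.log (Real.Wallis.W (k + 1)) - Real.log (Real.Wallis.W k) =
      Real.log ((2 * k + 2) ^ 2 / ((2 * k + 1) * (2 * k + 3))) := by
    rw [e, ← Real.log_inv, inv_div]
  constructor
  · rw [e]
    have := Real.log_le_sub_one_of_pos (show 0 < ((2 * k + 1) * (2 * k + 3) / (2 * k + 2) ^ 2 : ℝ) by positivity)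
    have e3 : ((2 * k + 1) * (2 * k + 3) / (2 * k + 2) ^ 2 : ℝ) - 1 = - (1 / (4 * ((k:ℝ) + 1) ^ 2)) := by
      field_simp; ring
    linarith
  · rw [e']
    have := Real.log_le_sub_one_of_pos (show 0 < ((2 * k + 2) ^ 2 / ((2 * k + 1) * (2 * k + 3)) : ℝ) by positivity)
    have e3 : ((2 * k + 2) ^ 2 / ((2 * k + 1) * (2 * k + 3)) : ℝ) - 1 = (1 / ((2 * k + 1) * (2 * k + 3))) := by
      field_simp; ring
    linarith

lemma logW_lim : Tendsto (fun k => Real.log (Real.Wallis.W k)) atTop (nhds (Real.log (Real.pi / 2))) :=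
  (Real.continuousAt_log (by positivity)).tendsto.comp Real.Wallis.tendsto_W_nhds_pi_div_two

lemma inv_lim (a b : ℝ) (ha : 0 < a) : Tendsto (fun k : ℕ => 1 / (a * (k:ℝ) + b)) atTop (nhds 0) := by
  have : Tendsto (fun k : ℕ => a * (k:ℝ) + b) atTop atTop :=
    tendsto_atTop_add_const_right _ _ (tendsto_natCast_atTop_atTop.const_mul_atTop ha)
  refine this.inv_tendsto_atTop.congr fun k => ?_
  simp

lemma logW_up (k : ℕ) : Real.log (Real.pi / 2) - Real.log (Real.Wallis.W k) ≤ 1 / (4 * k + 2) := by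
  have ha : Antitone (fun k : ℕ => Real.log (Real.Wallis.W k) + 1 / (4 * (k:ℝ) + 2)) := by
    refine antitone_nat_of_succ_le fun n => ?_
    have := (g_bounds n).2
    have e : 1 / ((2 * (n:ℝ) + 1) * (2 * n + 3)) = 1 / (4 * n + 2) - 1 / (4 * ((n + 1 : ℕ) : ℝ) + 2) := by
      push_cast; field_simp; ring
    linarith
  have hl := logW_lim.add (inv_lim 4 2 (by norm_num))
  have := ha.le_of_tendsto hl k
  linarith

lemma logW_lo (k : ℕ) : 1 / (4 * k + 4) ≤ Real.log (Real.pi / 2) - Real.log (Real.Wallis.W k) := by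
  have ha : Monotone (fun k : ℕ => Real.log (Real.Wallis.W k) + 1 / (4 * (k:ℝ) + 4)) := by
    refine monotone_nat_of_le_succ fun n => ?_
    have := (g_bounds n).1
    have e : 1 / (4 * (n:ℝ) + 4) - 1 / (4 * ((n + 1 : ℕ) : ℝ) + 4) ≤ 1 / (4 * ((n:ℝ) + 1) ^ 2) := by
      push_cast
      have : 1 / (4 * (n:ℝ) + 4) - 1 / (4 * ((n:ℝ) + 1) + 4) = 1 / (4 * ((n + 1) * (n + 2))) := by
        field_simp; ring
      rw [this]
      apply one_div_le_one_div_of_le (by positivity)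
      nlinarith [(Nat.cast_nonneg n : (0:ℝ) ≤ n)]
    linarith
  have hl := logW_lim.add (inv_lim 4 4 (by norm_num))
  have := ha.ge_of_tendsto hl k
  linarith

lemma kW_lim : Tendsto (fun k : ℕ => (k:ℝ) * (Real.log (Real.Wallis.W k) - Real.log (Real.pi / 2))) atTop
    (nhds (-(1 / 4))) := by
  have h1 : Tendsto (fun k : ℕ => -(1/4) + 1 / (4 * (k:ℝ) + 4)) atTop (nhds (-(1/4) + 0)) :=
    tendsto_const_nhds.add (inv_lim 4 4 (by norm_num))
  have h2 : Tendsto (fun k : ℕ => -(1/4) + 1 / (8 * (k:ℝ) + 4)) atTop (nhds (-(1/4) + 0)) :=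
    tendsto_const_nhds.add (inv_lim 8 4 (by norm_num))
  rw [add_zero] at h1 h2
  refine tendsto_of_tendsto_of_tendsto_of_le_of_le h2 h1 (fun k => ?_) (fun k => ?_)
  · have := mul_le_mul_of_nonneg_left (logW_up k) (Nat.cast_nonneg (α := ℝ) k)
    have e : (k:ℝ) * (1 / (4 * k + 2)) = 1 / 4 - 1 / (8 * k + 4) := by field_simp; ring
    simp only
    linarith
  · have := mul_le_mul_of_nonneg_left (logW_lo k) (Nat.cast_nonneg (α := ℝ) k)
    have e : (k:ℝ) * (1 / (4 * k + 4)) = 1 / 4 - 1 / (4 * k + 4) := by field_simp; ring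
    simp only
    linarith

/-- `(x+1)(log(x+1) - log x) → 1` in quantitative form -/
lemma step_lim : Tendsto (fun k : ℕ => ((k:ℝ) + 2) * (Real.log (k + 2) - Real.log (k + 1))) atTop (nhds 1) := by
  have h1 : Tendsto (fun k : ℕ => 1 + 1 / (1 * (k:ℝ) + 1)) atTop (nhds (1 + 0)) :=
    tendsto_const_nhds.add (inv_lim 1 1 (by norm_num))
  rw [add_zero] at h1
  refine tendsto_of_tendsto_of_tendsto_of_le_of_le tendsto_const_nhds h1 (fun k => ?_) (fun k => ?_)
  · simp only
    rw [← Real.log_div (by positivity) (by positivity), ← inv_div, Real.log_inv]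
    have := Real.log_le_sub_one_of_pos (show 0 < ((k + 1) / (k + 2) : ℝ) by positivity)
    have e : ((k + 1) / (k + 2) : ℝ) - 1 = - (1 / (k + 2)) := by field_simp; ring
    rw [e] at this
    have h3 := mul_le_mul_of_nonneg_left (neg_le_neg this) (show (0:ℝ) ≤ (k + 2) by positivity)
    have e2 : ((k:ℝ) + 2) * - - (1 / (k + 2)) = 1 := by field_simp
    linarith
  · simp only
    rw [← Real.log_div (by positivity) (by positivity)]
    have := Real.log_le_sub_one_of_pos (show 0 < ((k + 2) / (k + 1) : ℝ) by positivity)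
    have h3 := mul_le_mul_of_nonneg_left this (show (0:ℝ) ≤ (k + 2) by positivity)
    have e2 : ((k:ℝ) + 2) * ((k + 2) / (k + 1) - 1) = 1 + 1 / (1 * k + 1) := by field_simp; ring
    linarith

lemma logstep_lim : Tendsto (fun k : ℕ => (Real.log (k + 2) - Real.log (k + 1))) atTop (nhds 0) := by
  have := step_lim.mul (inv_lim 1 2 one_pos)
  rw [mul_zero] at this
  refine this.congr fun k => ?_
  field_simp

lemma em_lim : Tendsto (fun k : ℕ => em nl k - (1/2 * nl k - 1/4 * Real.log (k + 1))) atTop (nhds (-(1/4))) := by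
  have h0 := step_lim
  have h1 := (tendsto_add_atTop_iff_nat 1).2 step_lim
  have h2 := (tendsto_add_atTop_iff_nat 1).2 logstep_lim
  have h3 := ((h0.mul_const (-(3/8))).add (h1.mul_const (1/8))).add (logstep_lim.mul_const (1/8))
  have e : (1 * -(3/8) + 1 * (1/8) + 0 * (1/8) : ℝ) = -(1/4) := by norm_num
  rw [e] at h3
  refine h3.congr fun k => ?_
  simp only [em, nl]
  push_cast
  have a1 : (k:ℝ) + 1 + 2 = k + 3 := by ring
  have a2 : (k:ℝ) + 1 + 1 = k + 2 := by ring
  have a3 : (k:ℝ) + 2 + 1 = k + 3 := by ring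
  rw [a1, a2, a3]
  ring

lemma log_cc_lim {Z : ℝ} (hZ : Tendsto (fun M => ∑ n ∈ Finset.range M, (-1) ^ n * nl n + (-1) ^ M * em nl M) atTop
      (nhds (Real.log 2 / 3 + 3 * Z))) :
    Tendsto (fun k : ℕ => Real.log (cc (k + 1)) + 1 / 4 * Real.log (k + 1)) atTop
      (nhds (1 / 12 * Real.log 2 + 3 * Z)) := by
  have ht : Tendsto (fun k : ℕ => 2 * (k + 1)) atTop atTop :=
    tendsto_atTop_mono (fun k => by simp only [id]; omega) tendsto_id
  have h1 := hZ.comp ht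
  have h2 := em_lim.comp ht
  have h3 := (tendsto_add_atTop_iff_nat 1).2 kW_lim
  have hl : Tendsto (fun k : ℕ => Real.log (2 * ((k:ℝ) + 1) + 1) - Real.log (2 * (k + 1))) atTop (nhds 0) := by
    have ht2 : Tendsto (fun k : ℕ => 2 * k + 1) atTop atTop :=
      tendsto_atTop_mono (fun k => by simp only [id]; omega) tendsto_id
    refine (logstep_lim.comp ht2).congr fun k => ?_
    simp only [Function.comp]; push_cast
    congr 2 <;> ring
  have h4 := ((h3.add h1).sub h2).sub (hl.const_mul (1/4))
  have h5 := h4.sub_const (1 / 4 * Real.log 2)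
  have e : -(1 / 4) + (Real.log 2 / 3 + 3 * Z) - -(1 / 4) - 1 / 4 * 0 - 1 / 4 * Real.log 2 = 1 / 12 * Real.log 2 + 3 * Z := by ring
  rw [e] at h5
  refine h5.congr fun k => ?_
  have h6 := log_cc (k + 1)
  rw [h6]
  simp only [Function.comp, TT]
  have : (-1 : ℝ) ^ (2 * (k + 1)) = 1 := by rw [pow_mul]; norm_num
  rw [this]
  have l2 : Real.log (2 * ((k:ℝ) + 1)) = Real.log 2 + Real.log (k + 1) := Real.log_mul (by norm_num) (by positivity)
  simp only [nl]
  push_cast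
  rw [l2]
  ring

/-- the constant -/
def Lc (Z : ℝ) : ℝ := √2 * ((2:ℝ) ^ ((1:ℝ) / 6) * Real.exp (6 * Z))

lemma log_Lc (Z : ℝ) : Real.log (Lc Z) = 1 / 2 * Real.log 2 + 2 * (1 / 12 * Real.log 2 + 3 * Z) := by
  rw [Lc, Real.log_mul (by positivity) (by positivity), Real.log_mul (by positivity) (by positivity),
    Real.log_sqrt (by norm_num), Real.log_rpow (by norm_num), Real.log_exp]
  ring

lemma log_E_lim {Z : ℝ} (hZ : Tendsto (fun M => ∑ n ∈ Finset.range M, (-1) ^ n * nl n + (-1) ^ M * em nl M) atTop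
      (nhds (Real.log 2 / 3 + 3 * Z))) :
    Tendsto (fun n : ℕ => Real.log (E (Real.pi / 2) (n + 1)) + 1 / 2 * Real.log (n + 1)) atTop
      (nhds (Real.log (Lc Z))) := by
  have h := log_cc_lim hZ
  have h' := (tendsto_add_atTop_iff_nat 1).2 h
  have hlog : Tendsto (fun k : ℕ => 1 / 4 * (Real.log ((k:ℝ) + 2) - Real.log (k + 1))) atTop (nhds 0) := by
    have := logstep_lim.const_mul (1/4)
    rwa [mul_zero] at this
  have hl : Tendsto (fun k : ℕ => Real.log (2 * ((k:ℝ) + 1) + 1) - Real.log (2 * (k + 1))) atTop (nhds 0) := by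
    have ht2 : Tendsto (fun k : ℕ => 2 * k + 1) atTop atTop :=
      tendsto_atTop_mono (fun k => by simp only [id]; omega) tendsto_id
    refine (logstep_lim.comp ht2).congr fun k => ?_
    simp only [Function.comp]; push_cast
    congr 2 <;> ring
  rw [log_Lc]
  refine tendsto_of_even_odd ?_ ?_
  · rw [← tendsto_add_atTop_iff_nat 1]
    have h4 := ((h.add h').add (hl.const_mul (1/2))).sub hlog |>.const_add (1 / 2 * Real.log 2)
    have e : 1 / 2 * Real.log 2 + (1 / 12 * Real.log 2 + 3 * Z + (1 / 12 * Real.log 2 + 3 * Z) + 1 / 2 * 0 - 0) =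
      1 / 2 * Real.log 2 + 2 * (1 / 12 * Real.log 2 + 3 * Z) := by ring
    rw [e] at h4
    refine h4.congr fun k => ?_
    rw [(E_half (k + 1)).2, Real.log_mul (cc_pos _).ne' (cc_pos _).ne']
    have l2 : Real.log (2 * ((k:ℝ) + 1)) = Real.log 2 + Real.log (k + 1) := Real.log_mul (by norm_num) (by positivity)
    push_cast
    rw [l2]
    have a2 : (k:ℝ) + 1 + 1 = k + 2 := by ring
    rw [a2]
    ring
  · have h4 := ((h.add h)).const_add (1 / 2 * Real.log 2)
    have e : 1 / 2 * Real.log 2 + (1 / 12 * Real.log 2 + 3 * Z + (1 / 12 * Real.log 2 + 3 * Z)) =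
      1 / 2 * Real.log 2 + 2 * (1 / 12 * Real.log 2 + 3 * Z) := by ring
    rw [e] at h4
    refine h4.congr fun k => ?_
    rw [show 2 * k + 1 + 1 = 2 * (k + 1) by ring, (E_half (k + 1)).1, Real.log_pow]
    have l2 : Real.log (2 * ((k:ℝ) + 1)) = Real.log 2 + Real.log (k + 1) := Real.log_mul (by norm_num) (by positivity)
    push_cast
    rw [show 2 * (k:ℝ) + 1 + 1 = 2 * (k + 1) by ring, l2]
    ring

end

end XXString

namespace XXString
open Complex ComplexConjugate Filter

noncomputable section

lemma tz {f : ℕ → ℝ} {C : ℝ} {n0 : ℕ} (h : ∀ n ≥ n0, |f n| ≤ C / n) : Tendsto f atTop (nhds 0) := by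
  refine squeeze_zero_norm' (a := fun n : ℕ => C / n) ?_ (tendsto_const_div_atTop_nhds_zero_nat C)
  filter_upwards [eventually_ge_atTop n0] with n hn
  exact h n hn

lemma tzc {f : ℕ → ℂ} {C : ℝ} {n0 : ℕ} (h : ∀ n ≥ n0, ‖f n‖ ≤ C / n) : Tendsto f atTop (nhds 0) := by
  refine squeeze_zero_norm' (a := fun n : ℕ => C / n) ?_ (tendsto_const_div_atTop_nhds_zero_nat C)
  filter_upwards [eventually_ge_atTop n0] with n hn
  exact h n hn

lemma z_pow_im (b : ℝ) (n : ℕ) (c : ℝ) : ((c : ℂ) * I * conj (z b) ^ n).im = c * Real.cos (n * b) := by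
  have : conj (z b) ^ n = conj (Complex.exp (((n * b : ℝ) : ℂ) * I)) := by
    rw [← map_pow, z, ← Complex.exp_nat_mul]
    congr 2; push_cast; ring
  rw [this]
  simp only [Complex.mul_im, Complex.mul_re, Complex.conj_re, Complex.conj_im, Complex.exp_ofReal_mul_I_re, Complex.exp_ofReal_mul_I_im,
    Complex.ofReal_re, Complex.ofReal_im, Complex.I_re, Complex.I_im]
  ring

lemma log_E_lim' {Z : ℝ} (hZ : Tendsto (fun M => ∑ n ∈ Finset.range M, (-1) ^ n * nl n + (-1) ^ M * em nl M) atTop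
      (nhds (Real.log 2 / 3 + 3 * Z))) :
    Tendsto (fun n : ℕ => Real.log (E (Real.pi / 2) (n + 1)) + 1 / 2 * Real.log n) atTop
      (nhds (Real.log (Lc Z))) := by
  have h1 := log_E_lim hZ
  have h2 : Tendsto (fun n : ℕ => Real.log ((n:ℝ) + 1) - Real.log n) atTop (nhds 0) := by
    rw [← tendsto_add_atTop_iff_nat 1]
    refine logstep_lim.congr fun k => ?_
    push_cast
    rw [show (k:ℝ) + 1 + 1 = k + 2 by ring]
  have h3 := h1.sub (h2.const_mul (1 / 2))
  rw [mul_zero, sub_zero] at h3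
  exact h3.congr fun k => by ring

lemma Lc_pos (Z : ℝ) : 0 < Lc Z := by rw [Lc]; positivity

theorem main_half {Z : ℝ} (hZ : Tendsto (fun M => ∑ n ∈ Finset.range M, (-1) ^ n * nl n + (-1) ^ M * em nl M) atTop
      (nhds (Real.log 2 / 3 + 3 * Z))) (b : ℝ) (hb0 : Real.pi / 2 ≤ b) (hb : b < Real.pi) :
    Tendsto (fun n : ℕ => √n * ((-1) ^ n * D b n) - Lc Z / √(Real.sin b) * Real.cos (n * b)) atTop (nhds 0) := by
  obtain ⟨C, n0, hn0, H⟩ := asym b hb0 hb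
  have hpi := Real.pi_pos
  have hσ : 0 < Real.sin b := Real.sin_pos_of_pos_of_lt_pi (by linarith) hb
  have H' := fun n (hn : n ≥ n0) => H n hn (base n)
  have r0 : Tendsto (fun n => r b n) atTop (nhds 0) := tz fun n hn => (H' n hn).2.1
  have z0 : Tendsto (fun n => ze b n * z b ^ n - ((Real.pi / 2 : ℝ) : ℂ)) atTop (nhds 0) := tzc fun n hn => (H' n hn).2.2.1
  have e0 := tz fun n hn => (H' n hn).2.2.2.1
  have w0 := tz fun n hn => (H' n hn).2.2.2.2.1
  -- the E factor
  have eL : Tendsto (fun n : ℕ => √n * E b (n + 1)) atTop (nhds (Lc Z * √(Real.sin b))) := by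
    have h1 := (e0.add (log_E_lim' hZ)).add_const (1 / 2 * Real.log (Real.sin b))
    have h2 := (Real.continuous_exp.tendsto _).comp h1
    have e : Real.exp (0 + Real.log (Lc Z) + 1 / 2 * Real.log (Real.sin b)) = Lc Z * √(Real.sin b) := by
      rw [zero_add, Real.exp_add, Real.exp_log (Lc_pos Z), show 1 / 2 * Real.log (Real.sin b) = Real.log √(Real.sin b) by
        rw [Real.log_sqrt hσ.le]; ring, Real.exp_log (Real.sqrt_pos.2 hσ)]
    rw [e] at h2
    refine h2.congr' ?_
    filter_upwards [eventually_ge_atTop n0] with n hn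
    have hE := (H' n hn).2.2.2.2.2
    have hnp : (0:ℝ) < n := by exact_mod_cast (by omega : 0 < n)
    have : Real.log (E b (n + 1)) - Real.log (E (Real.pi / 2) (n + 1)) - 1 / 2 * Real.log (Real.sin b) +
        (Real.log (E (Real.pi / 2) (n + 1)) + 1 / 2 * Real.log n) + 1 / 2 * Real.log (Real.sin b) =
        Real.log (√n * E b (n + 1)) := by
      rw [Real.log_mul (Real.sqrt_pos.2 hnp).ne' hE.ne', Real.log_sqrt hnp.le]; ring
    simp only [Function.comp]
    rw [this, Real.exp_log (mul_pos (Real.sqrt_pos.2 hnp) hE)]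
  -- the W factor
  have wL : Tendsto (fun n : ℕ => ‖W b n‖ / (n + 1)) atTop (nhds (Real.pi / 2 / Real.sin b)) := by
    have h2 := (Real.continuous_exp.tendsto _).comp (w0.sub_const (Real.log (Real.sin b)))
    have h3 := h2.mul W_half_lim
    have e : Real.exp (0 - Real.log (Real.sin b)) * (Real.pi / 2) = Real.pi / 2 / Real.sin b := by
      rw [zero_sub, Real.exp_neg, Real.exp_log hσ]; field_simp
    rw [e] at h3
    obtain ⟨C', n1, hn1, H1⟩ := asym (Real.pi / 2) le_rfl (by linarith)
    refine h3.congr' ?_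
    filter_upwards [eventually_ge_atTop n0, eventually_ge_atTop n1] with n hn hn'
    have hW := (W_ne (H' n hn).1).1
    have hW' := (W_ne (H1 n hn' (base n)).1).1
    simp only [Function.comp]
    rw [add_sub_cancel_right, Real.exp_sub, Real.exp_log hW, Real.exp_log hW']
    field_simp
  have zL : Tendsto (fun n : ℕ => (r b n) ^ 2 + (Real.pi / 2) ^ 2) atTop (nhds ((Real.pi / 2) ^ 2)) := by
    have := (r0.pow 2).add_const ((Real.pi / 2) ^ 2)
    simpa using this
  -- κ
  have kL := ((wL.const_mul (2 / Real.pi)).mul_const ((Real.pi / 2) ^ 2)).div zL (by positivity)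
  have keL := kL.mul eL
  have ee : 2 / Real.pi * (Real.pi / 2 / Real.sin b) * (Real.pi / 2) ^ 2 / (Real.pi / 2) ^ 2 * (Lc Z * √(Real.sin b)) =
      Lc Z / √(Real.sin b) := by
    have hs := Real.sqrt_pos.2 hσ
    have := Real.sq_sqrt hσ.le
    rw [eq_div_iff hs.ne']
    calc _ = (√(Real.sin b) ^ 2) / Real.sin b * Lc Z := by field_simp
      _ = _ := by rw [this]; field_simp
  rw [ee] at keL
  -- ε
  have vL : Tendsto (fun n : ℕ => (ze b n * z b ^ n) * ((r b n : ℂ) + (Real.pi / 2 : ℝ) * I)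
      - (((Real.pi / 2) ^ 2 : ℝ) : ℂ) * I) atTop (nhds 0) := by
    have h1 := z0.add_const ((Real.pi / 2 : ℝ) : ℂ)
    have h2 := ((Complex.continuous_ofReal.tendsto _).comp r0).add_const ((Real.pi / 2 : ℝ) * I : ℂ)
    have h3 := (h1.mul h2).sub_const ((((Real.pi / 2) ^ 2 : ℝ) : ℂ) * I)
    have e : ((0:ℂ) + ((Real.pi / 2 : ℝ) : ℂ)) * (((0:ℝ):ℂ) + (Real.pi / 2 : ℝ) * I) - (((Real.pi / 2) ^ 2 : ℝ) : ℂ) * I = 0 := by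
      push_cast; ring
    rw [e] at h3
    refine h3.congr fun n => ?_
    simp only [Function.comp]
    rw [sub_add_cancel]
  have epsL : Tendsto (fun n : ℕ => ((ze b n * ((r b n : ℂ) + (Real.pi / 2 : ℝ) * I)).im / (Real.pi / 2) ^ 2 - Real.cos (n * b)))
      atTop (nhds 0) := by
    have h1 := (vL.norm).div_const ((Real.pi / 2) ^ 2)
    rw [norm_zero, zero_div] at h1
    refine squeeze_zero_norm (fun n => ?_) h1
    have hz : z b ^ n * conj (z b) ^ n = 1 := by rw [← mul_pow, z_mul_conj, one_pow]
    have e : (ze b n * ((r b n : ℂ) + (Real.pi / 2 : ℝ) * I)).im - (Real.pi / 2) ^ 2 * Real.cos (n * b) =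
      (((ze b n * z b ^ n) * ((r b n : ℂ) + (Real.pi / 2 : ℝ) * I)
      - (((Real.pi / 2) ^ 2 : ℝ) : ℂ) * I) * conj (z b) ^ n).im := by
      rw [← z_pow_im, ← Complex.sub_im]
      congr 1
      linear_combination (- (ze b n * ((r b n : ℂ) + (Real.pi / 2 : ℝ) * I))) * hz
    have e2 : ((ze b n * ((r b n : ℂ) + (Real.pi / 2 : ℝ) * I)).im / (Real.pi / 2) ^ 2 - Real.cos (n * b)) =
      ((ze b n * ((r b n : ℂ) + (Real.pi / 2 : ℝ) * I)).im - (Real.pi / 2) ^ 2 * Real.cos (n * b)) / (Real.pi / 2) ^ 2 := by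
      field_simp
    rw [e2, e, norm_div, Real.norm_of_nonneg (show 0 ≤ (Real.pi / 2) ^ 2 by positivity)]
    gcongr
    refine (Complex.abs_im_le_norm _).trans ?_
    rw [norm_mul, norm_pow, Complex.norm_conj, norm_z, one_pow, mul_one]
  -- combine
  have c1 : Tendsto (fun n : ℕ => (2 / Real.pi * (‖W b n‖ / (n + 1)) * (Real.pi / 2) ^ 2 / ((r b n) ^ 2 + (Real.pi / 2) ^ 2) * (√n * E b (n + 1))
      - Lc Z / √(Real.sin b)) * Real.cos (n * b)) atTop (nhds 0) := by
    have h1 := (keL.sub_const (Lc Z / √(Real.sin b))).norm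
    rw [sub_self, norm_zero] at h1
    refine squeeze_zero_norm (fun n => ?_) h1
    rw [norm_mul]
    exact mul_le_of_le_one_right (norm_nonneg _) (Real.abs_cos_le_one _)
  have c2 := c1.add (keL.mul epsL)
  rw [mul_zero, add_zero] at c2
  refine c2.congr' ?_
  filter_upwards [eventually_ge_atTop n0] with n hn
  have hG := (H' n hn).1
  have hd := congrArg Complex.im (W_dir hG)
  rw [Complex.im_mul_ofReal, Complex.im_ofReal_mul, rh_eq hG.1 hG.2, norm_ze_sq hG.1 hG.2] at hd
  have hy := yy_eq hG.1
  rw [D_eq hG.1]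
  have hq : 0 < r b n ^ 2 + (Real.pi / 2) ^ 2 := by positivity
  have hn1 : (0:ℝ) < n + 1 := by positivity
  have hm : ((-1:ℝ) ^ n) * (-1) ^ n = 1 := by rw [← mul_pow]; norm_num
  set X := (ze b n * ((r b n : ℂ) + (Real.pi / 2 : ℝ) * I)).im with hX
  have hy2 : yy b n = 2 / Real.pi * (‖W b n‖ / (n + 1)) * (X / (r b n ^ 2 + (Real.pi / 2) ^ 2)) := by
    have h1 : (W b n).im = ‖W b n‖ * X / (r b n ^ 2 + (Real.pi / 2) ^ 2) := by
      rw [eq_div_iff hq.ne']; exact hd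
    rw [h1] at hy
    have : yy b n = (2 / Real.pi * (‖W b n‖ * X / (r b n ^ 2 + (Real.pi / 2) ^ 2))) / (n + 1) := by
      rw [eq_div_iff hn1.ne', ← hy]; ring
    rw [this]; ring
  have e3 : √n * ((-1) ^ n * ((-1) ^ n * (yy b n * E b (n + 1)))) = √n * (yy b n * E b (n + 1)) := by
    linear_combination (√n * (yy b n * E b (n + 1))) * hm
  rw [e3, hy2]
  simp only [Pi.div_apply]
  have hp2 : (Real.pi / 2) ^ 2 ≠ 0 := by positivity
  have : X = (Real.pi / 2) ^ 2 * (X / (Real.pi / 2) ^ 2) := by rw [mul_div_cancel₀ _ hp2]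
  generalize X / (Real.pi / 2) ^ 2 = Y at this ⊢
  rw [this]
  ring

lemma cf_refl (t : ℝ) (m : ℤ) : cf (Real.pi - t) m = -((-1) ^ m * cf t m) := by
  have hpi := Real.pi_pos
  rw [cf, cf]
  split_ifs with h
  · subst h; simp; field_simp; ring
  · have : Real.sin (m * (Real.pi - t)) = -((-1) ^ m * Real.sin (m * t)) := by
      rw [mul_sub, Real.sin_int_mul_pi_sub]
    rw [this]; ring

lemma D_refl (t : ℝ) (N : ℕ) : D (Real.pi - t) N = (-1) ^ N * D t N := by
  have : (Matrix.of fun j k : Fin N => cf (Real.pi - t) ((j : ℤ) - (k : ℤ))) =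
     (-1 : ℝ) • (Matrix.diagonal (fun j : Fin N => (-1 : ℝ) ^ (j : ℕ)) * (Matrix.of fun j k : Fin N => cf t ((j : ℤ) - (k : ℤ))) *
       Matrix.diagonal (fun j : Fin N => (-1 : ℝ) ^ (j : ℕ))) := by
    ext j k
    rw [Matrix.smul_apply, Matrix.mul_diagonal, Matrix.diagonal_mul]
    simp only [Matrix.of_apply, smul_eq_mul]
    rw [cf_refl, zpow_sub₀ (by norm_num), zpow_natCast, zpow_natCast]
    have : ((-1 : ℝ) ^ (k : ℕ))⁻¹ = (-1) ^ (k : ℕ) := by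
      rw [← inv_pow]; norm_num
    rw [div_eq_mul_inv, this]; ring
  rw [D, this, Matrix.det_smul, Matrix.det_mul, Matrix.det_mul, Matrix.det_diagonal, Fintype.card_fin, D]
  have hm : (∏ j : Fin N, (-1 : ℝ) ^ (j : ℕ)) * (∏ j : Fin N, (-1 : ℝ) ^ (j : ℕ)) = 1 := by
    rw [← Finset.prod_mul_distrib]
    refine Finset.prod_eq_one fun j _ => ?_
    rw [← mul_pow]; norm_num
  linear_combination ((-1) ^ N * (Matrix.of fun j k : Fin N => cf t ((j : ℤ) - (k : ℤ))).det) * hm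

theorem main_real {Z : ℝ} (hZ : Tendsto (fun M => ∑ n ∈ Finset.range M, (-1) ^ n * nl n + (-1) ^ M * em nl M) atTop
      (nhds (Real.log 2 / 3 + 3 * Z))) (b : ℝ) (hb0 : 0 < b) (hb : b < Real.pi) :
    Tendsto (fun n : ℕ => √n * ((-1) ^ n * D b n) - Lc Z / √(Real.sin b) * Real.cos (n * b)) atTop (nhds 0) := by
  rcases le_total (Real.pi / 2) b with h | h
  · exact main_half hZ b h hb
  · have h1 := main_half hZ (Real.pi - b) (by linarith) (by linarith)
    refine squeeze_zero_norm (fun n => le_of_eq ?_) (tendsto_zero_iff_abs_tendsto_zero _ |>.1 h1)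
    have hc : Real.cos (n * (Real.pi - b)) = (-1) ^ n * Real.cos (n * b) := by
      rw [mul_sub, Real.cos_nat_mul_pi_sub]
    simp only [Function.comp]
    rw [Real.sin_pi_sub, D_refl, hc, Real.norm_eq_abs]
    have : √n * ((-1) ^ n * ((-1) ^ n * D b n)) - Lc Z / √(Real.sin b) * ((-1) ^ n * Real.cos (n * b)) =
       (-1) ^ n * (√n * ((-1) ^ n * D b n) - Lc Z / √(Real.sin b) * Real.cos (n * b)) := by ring
    rw [this, abs_mul, abs_pow]; simp

end

end XXString

namespace XXString
open Complex MeasureTheory Filter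

lemma piece (f : ℝ → ℝ) (c a b : ℝ) (hab : a ≤ b) (h : ∀ t ∈ Set.Ioo a b, f t = c) (e : ℝ → ℂ) (he : Continuous e) :
    IntervalIntegrable (fun t => (f t : ℂ) * e t) volume a b ∧
    ∫ t in a..b, (f t : ℂ) * e t = (c : ℂ) * ∫ t in a..b, e t := by
  have h0 : IntervalIntegrable (fun t => (c : ℂ) * e t) volume a b :=
    (continuous_const.mul he).intervalIntegrable _ _
  have hE : Set.EqOn (fun t => (c : ℂ) * e t) (fun t => (f t : ℂ) * e t) (Set.Ioo a b) := by
    intro t ht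
    simp only [h t ht]
  constructor
  · rw [intervalIntegrable_iff_integrableOn_Ioo_of_le hab] at h0 ⊢
    exact h0.congr_fun hE measurableSet_Ioo
  · rw [← intervalIntegral.integral_const_mul]
    exact (intervalIntegral.integral_congr_Ioo_of_le hab hE).symm

lemma int_split (θ1 : ℝ) (hθ1 : 0 < θ1) (hθ1' : θ1 < Real.pi)
    (f : ℝ → ℝ) (hper : ∀ t, f (t + 2 * Real.pi) = f t) (heven : ∀ t, f (-t) = f t)
    (hplus : ∀ t, 0 ≤ t → t < θ1 → f t = 1)
    (hminus : ∀ t, θ1 < t → t ≤ Real.pi → f t = -1) (e : ℝ → ℂ) (he : Continuous e) :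
    ∫ t in (0:ℝ)..(2 * Real.pi), (f t : ℂ) * e t =
      (∫ t in (0:ℝ)..θ1, e t) - (∫ t in θ1..(2 * Real.pi - θ1), e t) + ∫ t in (2 * Real.pi - θ1)..(2 * Real.pi), e t := by
  have hs : ∀ t, f (2 * Real.pi - t) = f t := by
    intro t
    rw [← heven t, ← hper (-t)]; congr 1; ring
  obtain ⟨i1, e1⟩ := piece f 1 0 θ1 hθ1.le (fun t ht => hplus t ht.1.le ht.2) e he
  obtain ⟨i2, e2⟩ := piece f (-1) θ1 (2 * Real.pi - θ1) (by linarith) (fun t ht => by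
    rcases le_total t Real.pi with h | h
    · exact hminus t ht.1 h
    · rw [← hs]; exact hminus _ (by linarith [ht.2]) (by linarith)) e he
  obtain ⟨i3, e3⟩ := piece f 1 (2 * Real.pi - θ1) (2 * Real.pi) (by linarith) (fun t ht => by
    rw [← hs]; exact hplus _ (by linarith [ht.2]) (by linarith [ht.1])) e he
  rw [← intervalIntegral.integral_add_adjacent_intervals (i1.trans i2) i3,
    ← intervalIntegral.integral_add_adjacent_intervals i1 i2, e1, e2, e3]
  push_cast; ring

lemma fourier_eq (θ1 : ℝ) (hθ1 : 0 < θ1) (hθ1' : θ1 < Real.pi)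
    (f : ℝ → ℝ) (hper : ∀ t, f (t + 2 * Real.pi) = f t) (heven : ∀ t, f (-t) = f t)
    (hplus : ∀ t, 0 ≤ t → t < θ1 → f t = 1)
    (hminus : ∀ t, θ1 < t → t ≤ Real.pi → f t = -1) (m : ℤ) :
    fourierCoef f m = (cf θ1 m : ℂ) := by
  have hpi : (Real.pi : ℂ) ≠ 0 := by exact_mod_cast Real.pi_ne_zero
  rw [fourierCoef, int_split θ1 hθ1 hθ1' f hper heven hplus hminus _ (by fun_prop), cf]
  split_ifs with h
  · subst h
    simp only [Int.cast_zero, mul_zero, zero_mul, Complex.exp_zero, intervalIntegral.integral_const]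
    simp only [Complex.real_smul, mul_one]
    push_cast
    field_simp
    ring
  · have hm : (m : ℂ) ≠ 0 := by exact_mod_cast h
    have hc : -I * (m : ℂ) ≠ 0 := mul_ne_zero (neg_ne_zero.2 I_ne_zero) hm
    rw [integral_exp_mul_complex hc, integral_exp_mul_complex hc, integral_exp_mul_complex hc]
    have p1 : Complex.exp (-I * m * ((2 * Real.pi : ℝ) : ℂ)) = 1 := by
      have := Complex.exp_int_mul_two_pi_mul_I (-m)
      rw [← this]; congr 1; push_cast; ring
    have p2 : Complex.exp (-I * m * ((2 * Real.pi - θ1 : ℝ) : ℂ)) = Complex.exp (m * θ1 * I) := by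
      have : -I * m * ((2 * Real.pi - θ1 : ℝ) : ℂ) = -I * m * ((2 * Real.pi : ℝ) : ℂ) + m * θ1 * I := by push_cast; ring
      rw [this, Complex.exp_add, p1, one_mul]
    have p3 : Complex.exp (-I * m * (θ1 : ℂ)) = Complex.exp (-(m * θ1) * I) := by
      congr 1; ring
    rw [p1, p2, p3]
    push_cast
    rw [Complex.sin]
    simp only [mul_zero, Complex.exp_zero]
    field_simp
    ring_nf
    simp only [I_sq]
    ring

lemma det_eq (θ1 : ℝ) (F : ℤ → ℂ) (h : ∀ m, F m = (cf θ1 m : ℂ)) (N : ℕ) :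
    Matrix.det (Matrix.of fun j k : Fin N => F ((j : ℤ) - (k : ℤ))) = (D θ1 N : ℂ) := by
  have : (Matrix.of fun j k : Fin N => F ((j : ℤ) - (k : ℤ))) =
     (Complex.ofRealHom).mapMatrix (Matrix.of fun j k : Fin N => cf θ1 ((j : ℤ) - (k : ℤ))) := by
    ext j k
    simp [h]
  rw [this, ← RingHom.map_det]
  rfl

end XXString

open XXString in
/-- Let `0 < θ_1 < π` and let `f` be the even, 2π-periodic function equal to `+1` on
`[0, θ_1)` and `−1` on `(θ_1, π]`.  Then, as `N → ∞`,
`det(f_{j−k})_{j,k=0}^{N−1}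
  = (−1)^N N^{−1/2} 2^{1/6} e^{6ζ′(−1)} (2 sin θ_1)^{−1/2} · 2cos(Nθ_1) + o(N^{−1/2})`. -/
theorem XX_sigmaZ_string_asymptotics (θ1 : ℝ) (hθ1 : 0 < θ1) (hθ1' : θ1 < Real.pi)
    (f : ℝ → ℝ) (hper : ∀ t, f (t + 2 * Real.pi) = f t) (heven : ∀ t, f (-t) = f t)
    (hplus : ∀ t, 0 ≤ t → t < θ1 → f t = 1)
    (hminus : ∀ t, θ1 < t → t ≤ Real.pi → f t = -1) :
    (fun N : ℕ =>
        Matrix.det (Matrix.of fun j k : Fin N => fourierCoef f ((j : ℤ) - (k : ℤ)))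
      - (-1 : ℂ) ^ N * (((N : ℝ) ^ (-(1 : ℝ) / 2) : ℝ) : ℂ)
          * ((2 : ℂ) ^ ((1 : ℂ) / 6) * Complex.exp (6 * deriv riemannZeta (-1)))
          * (((2 * Real.sin θ1) ^ (-(1 : ℝ) / 2) : ℝ) : ℂ)
          * ((2 * Real.cos ((N : ℝ) * θ1) : ℝ) : ℂ))
      =o[Filter.atTop] (fun N : ℕ => ((N : ℝ) ^ (-(1 : ℝ) / 2) : ℝ)) := by
  obtain ⟨Z, hZ, hlim⟩ := zeta_deriv_lim
  have hσ : 0 < Real.sin θ1 := Real.sin_pos_of_pos_of_lt_pi hθ1 hθ1'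
  have hmain := main_real hlim θ1 hθ1 hθ1'
  have hconst : ((2 : ℂ) ^ ((1 : ℂ) / 6) * Complex.exp (6 * deriv riemannZeta (-1))) =
      (((2:ℝ) ^ ((1:ℝ) / 6) * Real.exp (6 * Z) : ℝ) : ℂ) := by
    rw [hZ]
    push_cast [Complex.ofReal_cpow (show (0:ℝ) ≤ 2 by norm_num)]
    rfl
  have hrp : ∀ x : ℝ, 0 ≤ x → x ^ (-(1 : ℝ) / 2) = (√x)⁻¹ := by
    intro x hx
    rw [show -(1:ℝ) / 2 = -(1 / 2) by ring, Real.rpow_neg hx, ← Real.sqrt_eq_rpow]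
  have hL : (((2:ℝ) ^ ((1:ℝ) / 6) * Real.exp (6 * Z))) * (2 * Real.sin θ1) ^ (-(1 : ℝ) / 2) * 2 = Lc Z / √(Real.sin θ1) := by
    rw [hrp _ (by positivity), Lc, Real.sqrt_mul (by norm_num)]
    have h2 : √(2:ℝ) * √2 = 2 := Real.mul_self_sqrt (by norm_num)
    have h3 : 0 < √(2:ℝ) := by positivity
    have h4 := Real.sqrt_pos.2 hσ
    have h5 : (√(2:ℝ))⁻¹ * 2 = √2 := by
      rw [inv_mul_eq_iff_eq_mul₀ h3.ne', h2]
    generalize (2:ℝ) ^ ((1:ℝ) / 6) * Real.exp (6 * Z) = A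
    rw [mul_inv, div_eq_mul_inv]
    linear_combination A * (√(Real.sin θ1))⁻¹ * h5
  have key : ∀ N : ℕ, Matrix.det (Matrix.of fun j k : Fin N => fourierCoef f ((j : ℤ) - (k : ℤ)))
      - (-1 : ℂ) ^ N * (((N : ℝ) ^ (-(1 : ℝ) / 2) : ℝ) : ℂ)
          * ((2 : ℂ) ^ ((1 : ℂ) / 6) * Complex.exp (6 * deriv riemannZeta (-1)))
          * (((2 * Real.sin θ1) ^ (-(1 : ℝ) / 2) : ℝ) : ℂ)
          * ((2 * Real.cos ((N : ℝ) * θ1) : ℝ) : ℂ) =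
      ((D θ1 N - (-1) ^ N * (N : ℝ) ^ (-(1 : ℝ) / 2) * (Lc Z / √(Real.sin θ1) * Real.cos (N * θ1)) : ℝ) : ℂ) := by
    intro N
    rw [det_eq θ1 _ (fourier_eq θ1 hθ1 hθ1' f hper heven hplus hminus) N, hconst, ← hL]
    push_cast
    ring
  simp only [key]
  rw [Asymptotics.isLittleO_iff]
  intro c hc
  have h1 := (Metric.tendsto_nhds.1 hmain) c hc
  filter_upwards [h1, Filter.eventually_ge_atTop 1] with N hN hN1
  have hNp : (0:ℝ) < N := by exact_mod_cast hN1
  have hq := Real.sqrt_pos.2 hNp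
  rw [dist_zero_right] at hN
  rw [Complex.norm_real, hrp _ hNp.le, Real.norm_of_nonneg (inv_pos.2 hq).le]
  have hm : ((-1:ℝ) ^ N) * (-1) ^ N = 1 := by rw [← mul_pow]; norm_num
  have e : D θ1 N - (-1) ^ N * (√(N:ℝ))⁻¹ * (Lc Z / √(Real.sin θ1) * Real.cos (N * θ1)) =
      ((-1) ^ N * (√(N:ℝ) * ((-1) ^ N * D θ1 N) - Lc Z / √(Real.sin θ1) * Real.cos (N * θ1))) * (√(N:ℝ))⁻¹ := by
    have : √(N:ℝ) * (√(N:ℝ))⁻¹ = 1 := mul_inv_cancel₀ hq.ne'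
    linear_combination (-(D θ1 N) * ((-1) ^ N * (-1) ^ N)) * this - D θ1 N * hm
  rw [e, norm_mul, norm_mul, norm_pow, norm_neg, norm_one, one_pow, one_mul, Real.norm_of_nonneg (inv_pos.2 hq).le]
  exact mul_le_mul_of_nonneg_right hN.le (inv_pos.2 hq).le

end
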